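/- arXiv:2209.15394 — 4 statements merged into one kernel-verified Lean document; each statement's English description precedes it below -/
import Mathlib

section
/- Let S be a simple closed curve and Q a countable dense subset of S. Let X be a Peano continuum having uncountably many local cut points that are not cut points of X. Then there is a continuous surjection p : X → S such that p^{-1}(y) is a continuum (in particular connected) for every y ∈ S, and p^{-1}(y) has more than one point if and only if y ∈ Q. -/
/-- `x` is a cut point of the connected space `X` if `X \ {x}` is not connected. -/
def IsCutPoint {X : Type*} [TopologicalSpace X] (x : X) : Prop :=
  ¬ IsPreconnected ({x}ᶜ : Set X)

/-- `x` is a local cut point of `X` if it has a connected neighborhood `U` such that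
`U \ {x}` is not connected. -/
def IsLocalCutPoint {X : Type*} [TopologicalSpace X] (x : X) : Prop :=
  ∃ U : Set X, U ∈ nhds x ∧ IsConnected U ∧ ¬ IsPreconnected (U \ {x})

open Set Filter Topology

/-- A directed intersection of closed connected subsets of a compact Hausdorff space is connected. -/
theorem isConnected_iInter_of_directed {X ι : Type*} [TopologicalSpace X] [CompactSpace X]
    [T2Space X] [Nonempty ι] {K : ι → Set X} (hd : Directed (· ⊇ ·) K)
    (hcl : ∀ i, IsClosed (K i)) (hc : ∀ i, IsConnected (K i)) : IsConnected (⋂ i, K i) := by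
  refine ⟨IsCompact.nonempty_iInter_of_directed_nonempty_isCompact_isClosed K hd
    (fun i => (hc i).nonempty) (fun i => (hcl i).isCompact) hcl, ?_⟩
  have hcl' : IsClosed (⋂ i, K i) := isClosed_iInter hcl
  rw [isPreconnected_iff_subset_of_fully_disjoint_closed hcl']
  intro u v hu hv huv hdis
  obtain ⟨u', v', hu', hv', huu, hvv, hd'⟩ := 
    normal_separation hu hv hdis
  obtain ⟨i, hi⟩ := exists_subset_nhds_of_isCompact hd (fun i => (hcl i).isCompact)
    (U := u' ∪ v') (fun x hx => (hu'.union hv').mem_nhds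
      ((union_subset_union huu hvv) (huv hx)))
  rcases (hc i).isPreconnected.subset_or_subset hu' hv' hd' hi with h | h
  · left
    intro x hx
    rcases huv hx with h1 | h1
    · exact h1
    · exact (hd'.le_bot ⟨h (mem_iInter.1 hx i), hvv h1⟩).elim
  · right
    intro x hx
    rcases huv hx with h1 | h1
    · exact (hd'.le_bot ⟨huu h1, h (mem_iInter.1 hx i)⟩).elim
    · exact h1

theorem IsPreconnected.mem_of_disjoint_cover {X : Type*} [TopologicalSpace X] {V A B : Set X} {e q : X}
    (hV : IsPreconnected V) (hA : IsOpen A) (hB : IsOpen B) (hAB : Disjoint A B)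
    (hcov : V \ {e} ⊆ A ∪ B) (hne : (V ∩ A).Nonempty) (hq : q ∈ V) (hqA : q ∉ A) : e ∈ V := by
  by_contra he
  rw [sdiff_singleton_eq_self he] at hcov
  exact hqA (hV.subset_left_of_subset_union hA hB hAB hcov hne hq)

theorem IsPreconnected.false_of_clopen {X : Type*} [TopologicalSpace X] {Y P : Set X}
    (hY : IsPreconnected Y) (ho : IsOpen P) (hcl : closure P ∩ Y ⊆ P) (h1 : (Y ∩ P).Nonempty)
    (h2 : (Y \ P).Nonempty) : False := by
  obtain ⟨x, hx, hxP⟩ := h2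
  exact hxP (hY.subset_of_closure_inter_subset ho h1 hcl hx)

theorem isClosed_insert_insert {X : Type*} [TopologicalSpace X] [T1Space X] {N : Set X} {x y : X}
    (hcl : closure N ⊆ insert x (insert y N)) : IsClosed (insert x (insert y N)) := by
  refine isClosed_of_closure_subset ?_
  rw [insert_eq, insert_eq, closure_union, closure_union, closure_singleton, closure_singleton]
  exact union_subset (by simp) (union_subset (by simp) hcl)

/-- If `N` is a nonempty open set whose frontier lies in a pair of points neither of which
is a cut point, then `N` together with these two points is connected. -/
theorem isConnected_insert_insert {X : Type*} [TopologicalSpace X] [T1Space X] [PreconnectedSpace X]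
    {N : Set X} {x y : X} (hx : IsPreconnected ({x}ᶜ : Set X)) (hy : IsPreconnected ({y}ᶜ : Set X))
    (hxy : x ≠ y) (hN : IsOpen N) (hne : N.Nonempty) (hxN : x ∉ N) (hyN : y ∉ N)
    (hcl : closure N ⊆ insert x (insert y N)) : IsConnected (insert x (insert y N)) := by
  refine ⟨⟨x, by simp⟩, ?_⟩
  have hclosed := isClosed_insert_insert hcl
  rw [isPreconnected_iff_subset_of_fully_disjoint_closed hclosed]
  -- by symmetry, we may suppose that `x` lies in the first of the two closed sets
  have key : ∀ u v : Set X, IsClosed u → IsClosed v → insert x (insert y N) ⊆ u ∪ v →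
      Disjoint u v → x ∈ u → insert x (insert y N) ⊆ u ∨ insert x (insert y N) ⊆ v := by
    intro u v hu hv huv hd hxu
    have hxv : x ∉ v := fun h => hd.le_bot ⟨hxu, h⟩
    have hNu : N ∩ u = N \ v := by
      ext p
      constructor
      · rintro ⟨h1, h2⟩
        exact ⟨h1, fun h => hd.le_bot ⟨h2, h⟩⟩
      · rintro ⟨h1, h2⟩
        exact ⟨h1, (huv (by simp [h1])).resolve_right h2⟩
    have hNv : N ∩ v = N \ u := by
      ext p
      constructor
      · rintro ⟨h1, h2⟩
        exact ⟨h1, fun h => hd.le_bot ⟨h, h2⟩⟩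
      · rintro ⟨h1, h2⟩
        exact ⟨h1, (huv (by simp [h1])).resolve_left h2⟩
    have ou : IsOpen (N ∩ u) := hNu ▸ hN.sdiff hv
    have ov : IsOpen (N ∩ v) := hNv ▸ hN.sdiff hu
    have cu : closure (N ∩ u) ⊆ insert x (insert y N) ∩ u :=
      subset_inter ((closure_mono inter_subset_left).trans hcl)
        (closure_minimal inter_subset_right hu)
    have cv : closure (N ∩ v) ⊆ insert x (insert y N) ∩ v :=
      subset_inter ((closure_mono inter_subset_left).trans hcl)
        (closure_minimal inter_subset_right hv)
    rcases huv (show y ∈ insert x (insert y N) by simp) with hyu | hyv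
    · left
      have hyv : y ∉ v := fun h => hd.le_bot ⟨hyu, h⟩
      rintro p (rfl | rfl | hp)
      · exact hxu
      · exact hyu
      · by_contra hpu
        have hpv : p ∈ N ∩ v := hNv ▸ ⟨hp, hpu⟩
        refine isPreconnected_univ.false_of_clopen ov ?_ ⟨p, trivial, hpv⟩
          ⟨x, trivial, fun h => hxN h.1⟩
        rintro q ⟨hq, -⟩
        obtain ⟨rfl | rfl | h1, h2⟩ := cv hq
        · exact (hxv h2).elim
        · exact (hyv h2).elim
        · exact ⟨h1, h2⟩
    · exfalso
      have hyu : y ∉ u := fun h => hd.le_bot ⟨h, hyv⟩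
      obtain ⟨p, hp⟩ := hne
      rcases huv (show p ∈ insert x (insert y N) by simp [hp]) with hpu | hpv
      · refine hx.false_of_clopen ou ?_ ⟨p, fun h => hxN (h ▸ hp), hp, hpu⟩
          ⟨y, hxy.symm, fun h => hyN h.1⟩
        rintro q ⟨hq, hqx⟩
        obtain ⟨rfl | rfl | h1, h2⟩ := cu hq
        · exact (hqx rfl).elim
        · exact (hyu h2).elim
        · exact ⟨h1, h2⟩
      · refine hy.false_of_clopen ov ?_ ⟨p, fun h => hyN (h ▸ hp), hp, hpv⟩
          ⟨x, hxy, fun h => hxN h.1⟩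
        rintro q ⟨hq, hqx⟩
        obtain ⟨rfl | rfl | h1, h2⟩ := cv hq
        · exact (hxv h2).elim
        · exact (hqx rfl).elim
        · exact ⟨h1, h2⟩
  intro u v hu hv huv hd
  rcases huv (show x ∈ insert x (insert y N) by simp) with h | h
  · exact key u v hu hv huv hd h
  · exact (key v u hv hu (by rwa [union_comm]) hd.symm h).symm

theorem exists_isEmbedding_range_eq_compl {S : Type*} [TopologicalSpace S]
    (hS : S ≃ₜ AddCircle (1 : ℝ)) (q : S) : ∃ f : ℝ → S, IsEmbedding f ∧ range f = {q}ᶜ := by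
  have : Fact (0 < Real.pi) := ⟨Real.pi_pos⟩
  let c : ℝ → AddCircle Real.pi := fun t => (Real.arctan t : AddCircle Real.pi)
  have hmem : ∀ t, Real.arctan t ∈ Ioo (-(Real.pi / 2)) (-(Real.pi / 2) + Real.pi) := fun t => by
    have := Real.arctan_mem_Ioo t
    exact ⟨this.1, by linarith [this.2]⟩
  have hinj : Function.Injective c := fun s t hst => Real.arctan_injective
    ((AddCircle.coe_eq_coe_iff_of_mem_Ico (Ioo_subset_Ico_self (hmem s))
      (Ioo_subset_Ico_self (hmem t))).1 hst)
  have hat : IsOpenMap Real.arctan := by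
    rw [← Real.coe_tanPartialHomeomorph_symm]
    exact (Real.tanPartialHomeomorph.symm.isOpenEmbedding rfl).isOpenMap
  have hopen : IsOpenMap c :=
    (QuotientAddGroup.isOpenMap_coe).comp hat
  have hcont : Continuous c := (AddCircle.continuous_mk' _).comp Real.continuous_arctan
  have hrange : range c = {((-(Real.pi / 2) : ℝ) : AddCircle Real.pi)}ᶜ := by
    have := (AddCircle.openPartialHomeomorphCoe Real.pi (-(Real.pi / 2))).image_source_eq_target
    simp only [AddCircle.openPartialHomeomorphCoe_source, AddCircle.openPartialHomeomorphCoe_target,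
      AddCircle.openPartialHomeomorphCoe_apply] at this
    rw [← this]
    have h2 : Ioo (-(Real.pi / 2)) (-(Real.pi / 2) + Real.pi) = range Real.arctan := by
      rw [Real.range_arctan]; congr 1; ring
    rw [h2, ← range_comp]; rfl
  let k : S ≃ₜ AddCircle Real.pi :=
    hS.trans (AddCircle.homeomorphAddCircle 1 Real.pi one_ne_zero Real.pi_ne_zero)
  let k' := (k.trans (Homeomorph.addRight (((-(Real.pi / 2) : ℝ) : AddCircle Real.pi) - k q)))
  have hk' : k' q = ((-(Real.pi / 2) : ℝ) : AddCircle Real.pi) := by simp [k']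
  refine ⟨k'.symm ∘ c, k'.symm.isEmbedding.comp 
    (IsOpenEmbedding.of_continuous_injective_isOpenMap hcont hinj hopen).isEmbedding, ?_⟩
  rw [range_comp, hrange, image_compl_eq k'.symm.bijective, image_singleton, ← hk', k'.symm_apply_apply]

/-- For countable `N` and countable dense `Q`, the real line has a monotone self-map, the nontrivial
fibers of which are exactly those over `Q`, and which maps `N` into `Q`. -/
theorem Real.exists_monotone_collapse {N Q : Set ℝ} (hN : N.Countable) (hQ : Q.Countable)
    (hQd : Dense Q) : ∃ h : ℝ → ℝ, Continuous h ∧ Monotone h ∧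
      ∀ t, ∃ s s', s ≤ s' ∧ h ⁻¹' {t} = Icc s s' ∧ (t ∈ Q → s < s') ∧
        (t ∉ Q → s = s' ∧ s ∉ N) := by
  let D : Set ℝ := N ∪ range ((↑) : ℚ → ℝ)
  have hDQ : ∀ q : ℚ, (q : ℝ) ∈ D := fun q => Or.inr ⟨q, rfl⟩
  have : Countable D := (hN.union (countable_range _)).to_subtype
  have : DenselyOrdered D := ⟨fun a b hab => by
    obtain ⟨q, h1, h2⟩ := exists_rat_btwn (Subtype.coe_lt_coe.2 hab)
    exact ⟨⟨q, hDQ q⟩, h1, h2⟩⟩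
  have : NoMinOrder D := ⟨fun a => by
    obtain ⟨q, h1⟩ := exists_rat_lt (a : ℝ)
    exact ⟨⟨q, hDQ q⟩, h1⟩⟩
  have : NoMaxOrder D := ⟨fun a => by
    obtain ⟨q, h1⟩ := exists_rat_gt (a : ℝ)
    exact ⟨⟨q, hDQ q⟩, h1⟩⟩
  have : Nonempty D := ⟨⟨(0 : ℚ), hDQ 0⟩⟩
  have : Countable Q := hQ.to_subtype
  have : Nonempty Q := hQd.nonempty.to_subtype
  have : DenselyOrdered Q := ⟨fun a b hab => by
    obtain ⟨q, hq, h1, h2⟩ := hQd.exists_between (Subtype.coe_lt_coe.2 hab)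
    exact ⟨⟨q, hq⟩, h1, h2⟩⟩
  have : NoMinOrder Q := ⟨fun a => by
    obtain ⟨q, hq, h1⟩ := hQd.exists_lt (a : ℝ)
    exact ⟨⟨q, hq⟩, h1⟩⟩
  have : NoMaxOrder Q := ⟨fun a => by
    obtain ⟨q, hq, h1⟩ := hQd.exists_gt (a : ℝ)
    exact ⟨⟨q, hq⟩, h1⟩⟩
  have : Countable (Q ×ₗ ℚ) := inferInstanceAs (Countable (Q × ℚ))
  obtain ⟨φ⟩ := Order.iso_of_countable_dense D (Q ×ₗ ℚ)
  let π : D → ℝ := fun d => ((ofLex (φ d)).1 : ℝ)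
  have hπ : Monotone π := fun a b hab =>
    Subtype.coe_le_coe.2 (Prod.Lex.monotone_fst _ _ (φ.monotone hab))
  let h : ℝ → ℝ := fun t => sSup (π '' {d | (d : ℝ) ≤ t})
  have hne : ∀ t : ℝ, (π '' {d | (d : ℝ) ≤ t}).Nonempty := fun t => by
    obtain ⟨q, h1⟩ := exists_rat_lt t
    exact ⟨_, ⟨q, hDQ q⟩, h1.le, rfl⟩
  have hbdd : ∀ t : ℝ, BddAbove (π '' {d | (d : ℝ) ≤ t}) := fun t => by
    obtain ⟨q, h1⟩ := exists_rat_gt t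
    refine ⟨π ⟨q, hDQ q⟩, ?_⟩
    rintro _ ⟨d, hd, rfl⟩
    exact hπ (Subtype.coe_le_coe.1 (hd.trans h1.le))
  have hmono : Monotone h := fun s t hst =>
    csSup_le_csSup (hbdd t) (hne s) (image_mono fun d hd => le_trans hd hst)
  have hD : ∀ d : D, h d = π d := fun d => by
    refine le_antisymm (csSup_le (hne _) ?_) (le_csSup (hbdd _) ⟨d, le_refl (d : ℝ), rfl⟩)
    rintro _ ⟨d', hd, rfl⟩
    exact hπ (Subtype.coe_le_coe.1 hd)
  have hval : ∀ q : Q, ∀ r : ℚ, h (φ.symm (toLex (q, r))) = q := fun q r => by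
    rw [hD]; simp [π]
  have hcont : Continuous h := hmono.continuous_of_denseRange <| by
    refine hQd.mono fun q hq => ⟨_, hval ⟨q, hq⟩ 0⟩
  have hsurj : Function.Surjective h := by
    refine hcont.surjective (tendsto_atTop_atTop_of_monotone hmono fun b => ?_)
      (tendsto_atBot_atBot_of_monotone hmono fun b => ?_)
    · obtain ⟨q, hq, h1⟩ := hQd.exists_gt b
      exact ⟨_, h1.le.trans (hval ⟨q, hq⟩ 0).ge⟩
    · obtain ⟨q, hq, h1⟩ := hQd.exists_lt b
      exact ⟨_, (hval ⟨q, hq⟩ 0).le.trans h1.le⟩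
  refine ⟨h, hcont, hmono, fun t => ?_⟩
  have hord : OrdConnected (h ⁻¹' {t}) := ordConnected_singleton.preimage_mono hmono
  have hconn : IsConnected (h ⁻¹' {t}) := ⟨hsurj t, hord.isPreconnected⟩
  have hcomp : IsCompact (h ⁻¹' {t}) := by
    obtain ⟨u, hu⟩ := hsurj (t - 1)
    obtain ⟨v, hv⟩ := hsurj (t + 1)
    refine (isCompact_Icc (a := u) (b := v)).of_isClosed_subset (isClosed_singleton.preimage hcont)
      fun x hx => ?_
    have hx : h x = t := hx
    constructor
    · by_contra! hlt
      have := hmono hlt.le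
      linarith
    · by_contra! hlt
      have := hmono hlt.le
      linarith
  have heq := eq_Icc_of_connected_compact hconn hcomp
  have hle : sInf (h ⁻¹' {t}) ≤ sSup (h ⁻¹' {t}) :=
    nonempty_Icc.1 (heq ▸ hconn.nonempty)
  generalize sInf (h ⁻¹' {t}) = s at *
  generalize sSup (h ⁻¹' {t}) = s' at *
  refine ⟨s, s', hle, heq, fun ht => ?_, fun ht => ?_⟩
  · have h0 : ((φ.symm (toLex (⟨t, ht⟩, 0)) : D) : ℝ) ∈ Icc s s' := heq ▸ hval ⟨t, ht⟩ 0
    have h1 : ((φ.symm (toLex (⟨t, ht⟩, 1)) : D) : ℝ) ∈ Icc s s' := heq ▸ hval ⟨t, ht⟩ 1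
    have hlt : φ.symm (toLex (⟨t, ht⟩, 0)) < φ.symm (toLex (⟨t, ht⟩, 1)) :=
      φ.symm.strictMono (Prod.Lex.toLex_lt_toLex.2 (Or.inr ⟨rfl, by simp⟩))
    exact h0.1.trans_lt ((Subtype.coe_lt_coe.2 hlt).trans_le h1.2)
  · have hno : ∀ d : D, (d : ℝ) ∉ Icc s s' := fun d hd => by
      rw [← heq] at hd
      have hd : h d = t := hd
      rw [hD] at hd
      exact ht (hd ▸ (ofLex (φ d)).1.2)
    refine ⟨hle.antisymm (not_lt.1 fun hlt => ?_), fun hs => hno ⟨s, Or.inl hs⟩ ⟨le_rfl, hle⟩⟩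
    obtain ⟨q, h1, h2⟩ := exists_rat_btwn hlt
    exact hno ⟨q, hDQ q⟩ ⟨h1.le, h2.le⟩

/-- A rational chain of points `e r` of an open set `W`, each separating `W` into open sets `A r`
and `B r`, such that any two of the points cut a region out of the whole space. -/
structure SeparatingChain {X : Type*} [TopologicalSpace X] (W : Set X) (e : ℚ → X)
    (A B : ℚ → Set X) : Prop where
  isOpen : IsOpen W
  isOpen_left : ∀ r, IsOpen (A r)
  isOpen_right : ∀ r, IsOpen (B r)
  disjoint : ∀ r, Disjoint (A r) (B r)
  left_subset : ∀ r, A r ⊆ W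
  cover : ∀ r, W \ {e r} ⊆ A r ∪ B r
  notMem_left : ∀ r, e r ∉ A r
  notMem_right : ∀ r, e r ∉ B r
  mem_left : ∀ r r', r < r' → e r ∈ A r'
  mem_right : ∀ r r', r < r' → e r' ∈ B r
  left_mono : ∀ r r', r < r' → A r ⊆ A r'
  right_anti : ∀ r r', r < r' → B r' ⊆ B r
  closure_subset : ∀ r r', r < r' →
    closure (B r ∩ A r') ⊆ insert (e r) (insert (e r') (B r ∩ A r'))
  not_cut : ∀ r, IsPreconnected ({e r}ᶜ : Set X)

namespace SeparatingChain

/-- The union of all regions between two points of the chain. -/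
def region {X : Type*} (A B : ℚ → Set X) : Set X :=
  ⋃ i : {i : ℚ × ℚ // i.1 < i.2}, B i.1.1 ∩ A i.1.2

theorem mem_region {X : Type*} {A B : ℚ → Set X} {p : X} :
    p ∈ region A B ↔ ∃ r r', r < r' ∧ p ∈ B r ∧ p ∈ A r' := by
  simp only [region, mem_iUnion, Subtype.exists, Prod.exists, exists_prop, mem_inter_iff]

/-- The position of a point relative to the chain. -/
noncomputable def coord {X : Type*} (B : ℚ → Set X) (p : X) : ℝ := sSup ((↑) '' {r : ℚ | p ∈ B r})

variable {X : Type*} [TopologicalSpace X] {W : Set X} {e : ℚ → X} {A B : ℚ → Set X}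

theorem ne (H : SeparatingChain W e A B) {r r' : ℚ} (h : r < r') : e r ≠ e r' := fun heq =>
  H.notMem_right r (heq ▸ H.mem_right r r' h)

theorem nonempty_between (H : SeparatingChain W e A B) {r r' : ℚ} (h : r < r') :
    (B r ∩ A r').Nonempty := by
  obtain ⟨s, h1, h2⟩ := exists_between h
  exact ⟨e s, H.mem_right _ _ h1, H.mem_left _ _ h2⟩

theorem insert_subset_between (H : SeparatingChain W e A B) {r r' s s' : ℚ} (hr : s < r)
    (h : r < r') (hr' : r' < s') : insert (e r) (insert (e r') (B r ∩ A r')) ⊆ B s ∩ A s' := by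
  rintro p (rfl | rfl | ⟨h1, h2⟩)
  · exact ⟨H.mem_right _ _ hr, H.mem_left _ _ (h.trans hr')⟩
  · exact ⟨H.mem_right _ _ (hr.trans h), H.mem_left _ _ hr'⟩
  · exact ⟨H.right_anti _ _ hr h1, H.left_mono _ _ hr' h2⟩

theorem isOpen_between (H : SeparatingChain W e A B) (r r' : ℚ) : IsOpen (B r ∩ A r') :=
  (H.isOpen_right r).inter (H.isOpen_left r')

theorem isConnected_insert_between [T1Space X] [PreconnectedSpace X]
    (H : SeparatingChain W e A B) {r r' : ℚ} (h : r < r') :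
    IsConnected (insert (e r) (insert (e r') (B r ∩ A r'))) :=
  isConnected_insert_insert (H.not_cut r) (H.not_cut r') (H.ne h) (H.isOpen_between r r')
    (H.nonempty_between h) (fun h => H.notMem_right _ h.1) (fun h => H.notMem_left _ h.2)
    (H.closure_subset r r' h)

theorem isConnected_compl_between [T1Space X] [PreconnectedSpace X]
    (H : SeparatingChain W e A B) {r r' : ℚ} (h : r < r') :
    IsConnected (B r ∩ A r')ᶜ := by
  have hr : e r ∉ B r ∩ A r' := fun h => H.notMem_right _ h.1
  have hr' : e r' ∉ B r ∩ A r' := fun h => H.notMem_left _ h.2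
  have heq : insert (e r) (insert (e r') (insert (e r) (insert (e r') (B r ∩ A r')))ᶜ) =
      (B r ∩ A r')ᶜ := by
    ext p
    by_cases h1 : p = e r
    · subst h1; simp only [mem_insert_iff, true_or, true_iff]; exact hr
    by_cases h2 : p = e r'
    · subst h2; simp only [mem_insert_iff, true_or, or_true, true_iff]; exact hr'
    simp [h1, h2]
  rw [← heq]
  refine isConnected_insert_insert (H.not_cut r) (H.not_cut r') (H.ne h)
    (isClosed_insert_insert (H.closure_subset r r' h)).isOpen_compl ?_ (by simp) (by simp) ?_
  · refine ⟨e (r - 1), fun hm => ?_⟩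
    have h1 : e (r - 1) ∈ A r := H.mem_left _ _ (by linarith)
    have h2 : e (r - 1) ∈ A r' := H.mem_left _ _ (by linarith)
    rcases hm with hm | hm | hm
    · exact H.notMem_left r (hm ▸ h1)
    · exact H.notMem_left r' (hm ▸ h2)
    · exact (H.disjoint r).le_bot ⟨h1, hm.1⟩
  · rw [heq]
    refine closure_minimal (compl_subset_compl.2 ?_) (H.isOpen_between r r').isClosed_compl
    exact (subset_insert _ _).trans (subset_insert _ _)

theorem isOpen_region (H : SeparatingChain W e A B) : IsOpen (region A B) :=
  isOpen_iUnion fun _ => H.isOpen_between _ _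

theorem lt_of_mem (H : SeparatingChain W e A B) {p : X} {r r' : ℚ} (hr : p ∈ B r)
    (hr' : p ∈ A r') : r < r' := by
  by_contra! hle
  rcases hle.lt_or_eq with h | rfl
  · exact (H.disjoint r').le_bot ⟨hr', H.right_anti _ _ h hr⟩
  · exact (H.disjoint r').le_bot ⟨hr', hr⟩

theorem le_coord (H : SeparatingChain W e A B) {p : X} (hp : p ∈ region A B) {r : ℚ}
    (hr : p ∈ B r) : (r : ℝ) ≤ coord B p := by
  obtain ⟨s, s', -, -, hs'⟩ := mem_region.1 hp
  refine le_csSup ⟨s', ?_⟩ ⟨r, hr, rfl⟩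
  rintro _ ⟨t, ht, rfl⟩
  exact_mod_cast (H.lt_of_mem ht hs').le

theorem coord_le (H : SeparatingChain W e A B) {p : X} (hp : p ∈ region A B) {r : ℚ}
    (hr : p ∈ A r) : coord B p ≤ r := by
  obtain ⟨s, s', -, hs, -⟩ := mem_region.1 hp
  refine csSup_le ⟨s, s, hs, rfl⟩ ?_
  rintro _ ⟨t, ht, rfl⟩
  exact_mod_cast (H.lt_of_mem ht hr).le

theorem mem_right_of_lt_coord (H : SeparatingChain W e A B) {p : X} (hp : p ∈ region A B) {r : ℚ}
    (hr : (r : ℝ) < coord B p) : p ∈ B r := by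
  obtain ⟨s, s', -, hs, -⟩ := mem_region.1 hp
  obtain ⟨_, ⟨t, ht, rfl⟩, hlt⟩ := exists_lt_of_lt_csSup (s := (↑) '' {r : ℚ | p ∈ B r})
    ⟨(s : ℝ), s, hs, rfl⟩ hr
  exact H.right_anti _ _ (by exact_mod_cast hlt) ht

theorem region_subset (H : SeparatingChain W e A B) : region A B ⊆ W := fun _ hp => by
  obtain ⟨_, s', -, -, hs'⟩ := mem_region.1 hp
  exact H.left_subset s' hs'

theorem mem_left_of_coord_lt (H : SeparatingChain W e A B) {p : X} (hp : p ∈ region A B) {r : ℚ}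
    (hr : coord B p < r) : p ∈ A r := by
  obtain ⟨s, h1, h2⟩ := exists_rat_btwn hr
  have h2 : s < r := by exact_mod_cast h2
  by_cases hps : p = e s
  · exact hps ▸ H.mem_left _ _ h2
  rcases H.cover s ⟨H.region_subset hp, hps⟩ with h | h
  · exact H.left_mono _ _ h2 h
  · exact absurd (H.le_coord hp h) (not_le.2 h1)

theorem between_subset_region (H : SeparatingChain W e A B) (r r' : ℚ) :
    B r ∩ A r' ⊆ region A B := fun _ hp => mem_region.2 ⟨r, r', H.lt_of_mem hp.1 hp.2, hp.1, hp.2⟩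

theorem continuousOn_coord (H : SeparatingChain W e A B) :
    ContinuousOn (coord B) (region A B) := by
  intro p hp
  refine ContinuousAt.continuousWithinAt (tendsto_order.2 ⟨fun a ha => ?_, fun a ha => ?_⟩)
  · obtain ⟨r, h1, h2⟩ := exists_rat_btwn ha
    filter_upwards [(H.isOpen_right r).mem_nhds (H.mem_right_of_lt_coord hp h2),
      H.isOpen_region.mem_nhds hp] with q hq hq'
    exact h1.trans_le (H.le_coord hq' hq)
  · obtain ⟨r, h1, h2⟩ := exists_rat_btwn ha
    filter_upwards [(H.isOpen_left r).mem_nhds (H.mem_left_of_coord_lt hp h1),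
      H.isOpen_region.mem_nhds hp] with q hq hq'
    exact (H.coord_le hq' hq).trans_lt h2

theorem region_inter_preimage_Icc (H : SeparatingChain W e A B) {s s' : ℝ} (h : s ≤ s') :
    region A B ∩ coord B ⁻¹' Icc s s' =
      ⋂ i : {i : ℚ × ℚ // (i.1 : ℝ) < s ∧ s' < (i.2 : ℝ)},
        insert (e i.1.1) (insert (e i.1.2) (B i.1.1 ∩ A i.1.2)) := by
  ext p
  simp only [mem_iInter]
  constructor
  · rintro ⟨hp, h1, h2⟩ ⟨⟨r, r'⟩, hr, hr'⟩
    right; right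
    exact ⟨H.mem_right_of_lt_coord hp (hr.trans_le h1), H.mem_left_of_coord_lt hp (h2.trans_lt hr')⟩
  · intro hp
    have key : ∀ r r' : ℚ, (r : ℝ) < s → s' < r' → p ∈ B r ∩ A r' := fun r r' hr hr' => by
      obtain ⟨t, ht, hts⟩ := exists_rat_btwn hr
      obtain ⟨t', hts', ht'⟩ := exists_rat_btwn hr'
      refine H.insert_subset_between ?_ ?_ ?_ (hp ⟨(t, t'), hts, hts'⟩)
      · exact_mod_cast ht
      · exact_mod_cast (hts.trans_le h).trans hts'
      · exact_mod_cast ht'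
    obtain ⟨r, hr⟩ := exists_rat_lt s
    obtain ⟨r', hr'⟩ := exists_rat_gt s'
    have hpr := H.between_subset_region r r' (key r r' hr hr')
    refine ⟨hpr, ?_, ?_⟩
    · refine le_of_forall_rat_lt_imp_le fun q hq => H.le_coord hpr (key q r' hq hr').1
    · refine le_of_forall_lt_rat_imp_le fun q hq => H.coord_le hpr (key r q hr hq).2

theorem isClosed_region_inter [T1Space X] (H : SeparatingChain W e A B) {s s' : ℝ} (h : s ≤ s') :
    IsClosed (region A B ∩ coord B ⁻¹' Icc s s') := by
  rw [H.region_inter_preimage_Icc h]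
  refine isClosed_iInter fun i => isClosed_insert_insert (H.closure_subset _ _ ?_)
  exact_mod_cast (i.2.1.trans_le h).trans i.2.2

theorem insert_between_mono (H : SeparatingChain W e A B) {r r' s s' : ℚ} (hr : s ≤ r)
    (h : r < r') (hr' : r' ≤ s') : insert (e r) (insert (e r') (B r ∩ A r')) ⊆
      insert (e s) (insert (e s') (B s ∩ A s')) := by
  have hB : B r ⊆ B s := by
    rcases hr.lt_or_eq with h | rfl
    exacts [H.right_anti _ _ h, Subset.rfl]
  have hA : A r' ⊆ A s' := by
    rcases hr'.lt_or_eq with h | rfl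
    exacts [H.left_mono _ _ h, Subset.rfl]
  have hs : e r = e s ∨ e r ∈ B s ∩ A s' := by
    rcases hr.lt_or_eq with h' | rfl
    · exact .inr ⟨H.mem_right _ _ h', H.mem_left _ _ (h.trans_le hr')⟩
    · exact .inl rfl
  have hs' : e r' = e s' ∨ e r' ∈ B s ∩ A s' := by
    rcases hr'.lt_or_eq with h' | rfl
    · exact .inr ⟨H.mem_right _ _ (hr.trans_lt h), H.mem_left _ _ h'⟩
    · exact .inl rfl
  rintro p (rfl | rfl | ⟨h1, h2⟩)
  · exact hs.imp_right .inr
  · exact .inr hs'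
  · exact .inr (.inr ⟨hB h1, hA h2⟩)

theorem isConnected_region_inter [T2Space X] [CompactSpace X] [PreconnectedSpace X]
    (H : SeparatingChain W e A B) {s s' : ℝ} (h : s ≤ s') :
    IsConnected (region A B ∩ coord B ⁻¹' Icc s s') := by
  rw [H.region_inter_preimage_Icc h]
  have hlt : ∀ i : {i : ℚ × ℚ // (i.1 : ℝ) < s ∧ s' < (i.2 : ℝ)}, i.1.1 < i.1.2 := fun i => by
    exact_mod_cast (i.2.1.trans_le h).trans i.2.2
  obtain ⟨r, hr⟩ := exists_rat_lt s
  obtain ⟨r', hr'⟩ := exists_rat_gt s'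
  have : Nonempty {i : ℚ × ℚ // (i.1 : ℝ) < s ∧ s' < (i.2 : ℝ)} := ⟨⟨(r, r'), hr, hr'⟩⟩
  refine isConnected_iInter_of_directed ?_ (fun i => isClosed_insert_insert
    (H.closure_subset _ _ (hlt i))) (fun i => H.isConnected_insert_between (hlt i))
  intro i j
  have hk : ((max i.1.1 j.1.1 : ℚ) : ℝ) < s ∧ s' < ((min i.1.2 j.1.2 : ℚ) : ℝ) := by
    push_cast
    exact ⟨max_lt i.2.1 j.2.1, lt_min i.2.2 j.2.2⟩
  exact ⟨⟨(_, _), hk⟩,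
    H.insert_between_mono (le_max_left _ _) (hlt ⟨(_, _), hk⟩) (min_le_left _ _),
    H.insert_between_mono (le_max_right _ _) (hlt ⟨(_, _), hk⟩) (min_le_right _ _)⟩

theorem isConnected_compl_region [T2Space X] [CompactSpace X] [PreconnectedSpace X]
    (H : SeparatingChain W e A B) : IsConnected (region A B)ᶜ := by
  rw [region, compl_iUnion]
  have : Nonempty {i : ℚ × ℚ // i.1 < i.2} := ⟨⟨(0, 1), by simp⟩⟩
  refine isConnected_iInter_of_directed ?_ (fun i => (H.isOpen_between _ _).isClosed_compl)
    (fun i => H.isConnected_compl_between i.2)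
  intro i j
  have hB : ∀ {r s : ℚ}, s ≤ r → B r ⊆ B s := fun hr => by
    rcases hr.lt_or_eq with h | rfl
    exacts [H.right_anti _ _ h, Subset.rfl]
  have hA : ∀ {r s : ℚ}, s ≤ r → A s ⊆ A r := fun hr => by
    rcases hr.lt_or_eq with h | rfl
    exacts [H.left_mono _ _ h, Subset.rfl]
  exact ⟨⟨(min i.1.1 j.1.1, max i.1.2 j.1.2), lt_max_of_lt_left (min_lt_of_left_lt i.2)⟩,
    compl_subset_compl.2 (inter_subset_inter (hB (min_le_left _ _)) (hA (le_max_left _ _))),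
    compl_subset_compl.2 (inter_subset_inter (hB (min_le_right _ _)) (hA (le_max_right _ _)))⟩

/-- A fiber of `coord` with empty interior has at most one point. -/
theorem subsingleton_fiber [T2Space X] [CompactSpace X] [PreconnectedSpace X]
    [LocallyConnectedSpace X] (H : SeparatingChain W e A B) (t : ℝ)
    (hempty : ¬ (interior (region A B ∩ coord B ⁻¹' {t})).Nonempty) :
    (region A B ∩ coord B ⁻¹' {t}).Subsingleton := by
  have hconn : IsConnected (region A B ∩ coord B ⁻¹' {t}) := by
    rw [← Icc_self]; exact H.isConnected_region_inter le_rfl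
  set F := region A B ∩ coord B ⁻¹' {t} with hF
  -- neighborhoods of a point of `F` adherent to the left part contain all late enough points `e r`
  have hl : ∀ q ∈ F, q ∈ closure (⋃ r : {r : ℚ // (r : ℝ) < t}, A r) → ∀ V ∈ 𝓝 q,
      ∃ r₀ : ℚ, (r₀ : ℝ) < t ∧ ∀ r : ℚ, r₀ < r → (r : ℝ) < t → e r ∈ V := by
    rintro q ⟨hq, hqt⟩ hcl V hV
    have hqt : coord B q = t := hqt
    obtain ⟨V', hV'V, hV'o, hqV', hV'c⟩ := locallyConnectedSpace_iff_subsets_isOpen_isConnected.1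
      ‹_› q (V ∩ W) (inter_mem hV (H.isOpen.mem_nhds (H.region_subset hq)))
    obtain ⟨p, hpV', hp⟩ := mem_closure_iff.1 hcl V' hV'o hqV'
    obtain ⟨⟨r₀, hr₀⟩, hp⟩ := mem_iUnion.1 hp
    refine ⟨r₀, hr₀, fun r hr hrt => (hV'V ?_).1⟩
    refine hV'c.isPreconnected.mem_of_disjoint_cover (H.isOpen_left r) (H.isOpen_right r)
      (H.disjoint r) (fun x hx => H.cover r ⟨(hV'V hx.1).2, hx.2⟩)
      ⟨p, hpV', H.left_mono _ _ hr hp⟩ hqV' fun hqA => ?_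
    exact absurd (H.coord_le hq hqA) (by rw [hqt]; exact not_le.2 hrt)
  have hr : ∀ q ∈ F, q ∈ closure (⋃ r : {r : ℚ // t < (r : ℝ)}, B r) → ∀ V ∈ 𝓝 q,
      ∃ r₀ : ℚ, t < (r₀ : ℝ) ∧ ∀ r : ℚ, r < r₀ → t < (r : ℝ) → e r ∈ V := by
    rintro q ⟨hq, hqt⟩ hcl V hV
    have hqt : coord B q = t := hqt
    obtain ⟨V', hV'V, hV'o, hqV', hV'c⟩ := locallyConnectedSpace_iff_subsets_isOpen_isConnected.1
      ‹_› q (V ∩ W) (inter_mem hV (H.isOpen.mem_nhds (H.region_subset hq)))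
    obtain ⟨p, hpV', hp⟩ := mem_closure_iff.1 hcl V' hV'o hqV'
    obtain ⟨⟨r₀, hr₀⟩, hp⟩ := mem_iUnion.1 hp
    refine ⟨r₀, hr₀, fun r hr hrt => (hV'V ?_).1⟩
    refine hV'c.isPreconnected.mem_of_disjoint_cover (H.isOpen_right r) (H.isOpen_left r)
      (H.disjoint r).symm (fun x hx => union_comm _ _ ▸ H.cover r ⟨(hV'V hx.1).2, hx.2⟩)
      ⟨p, hpV', H.right_anti _ _ hr hp⟩ hqV' fun hqB => ?_
    exact absurd (H.le_coord hq hqB) (by rw [hqt]; exact not_le.2 hrt)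
  have hls : (F ∩ closure (⋃ r : {r : ℚ // (r : ℝ) < t}, A r)).Subsingleton := by
    rintro q ⟨hq, hqc⟩ q' ⟨hq', hqc'⟩
    by_contra hne
    obtain ⟨V, V', hV, hV', hd⟩ := t2_separation_nhds hne
    obtain ⟨r₀, h0, h1⟩ := hl q hq hqc V hV
    obtain ⟨r₁, h2, h3⟩ := hl q' hq' hqc' V' hV'
    obtain ⟨r, h4, h5⟩ := exists_rat_btwn (max_lt h0 h2)
    exact hd.le_bot ⟨h1 r (by exact_mod_cast (le_max_left _ _).trans_lt h4) h5,
      h3 r (by exact_mod_cast (le_max_right _ _).trans_lt h4) h5⟩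
  have hrs : (F ∩ closure (⋃ r : {r : ℚ // t < (r : ℝ)}, B r)).Subsingleton := by
    rintro q ⟨hq, hqc⟩ q' ⟨hq', hqc'⟩
    by_contra hne
    obtain ⟨V, V', hV, hV', hd⟩ := t2_separation_nhds hne
    obtain ⟨r₀, h0, h1⟩ := hr q hq hqc V hV
    obtain ⟨r₁, h2, h3⟩ := hr q' hq' hqc' V' hV'
    obtain ⟨r, h4, h5⟩ := exists_rat_btwn (lt_min h0 h2)
    exact hd.le_bot ⟨h1 r (by exact_mod_cast h5.trans_le (min_le_left _ _)) h4,
      h3 r (by exact_mod_cast h5.trans_le (min_le_right _ _)) h4⟩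
  have hcover : F ⊆ (F ∩ closure (⋃ r : {r : ℚ // (r : ℝ) < t}, A r)) ∪
      (F ∩ closure (⋃ r : {r : ℚ // t < (r : ℝ)}, B r)) := by
    intro q hq
    rw [← inter_union_distrib_left, ← closure_union]
    refine ⟨hq, mem_closure_iff.2 fun V hV hqV => ?_⟩
    obtain ⟨p, ⟨hpV, hpM⟩, hpF⟩ : ((V ∩ region A B) \ F).Nonempty := by
      by_contra hem
      rw [not_nonempty_iff_eq_empty, sdiff_eq_empty] at hem
      exact hempty ⟨q, mem_interior.2 ⟨_, hem, hV.inter H.isOpen_region, hqV, hq.1⟩⟩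
    have hpt : coord B p ≠ t := fun h => hpF ⟨hpM, h⟩
    refine ⟨p, hpV, ?_⟩
    rcases hpt.lt_or_gt with h | h
    · obtain ⟨r, h1, h2⟩ := exists_rat_btwn h
      exact .inl (mem_iUnion.2 ⟨⟨r, h2⟩, H.mem_left_of_coord_lt hpM h1⟩)
    · obtain ⟨r, h1, h2⟩ := exists_rat_btwn h
      exact .inr (mem_iUnion.2 ⟨⟨r, h1⟩, H.mem_right_of_lt_coord hpM h2⟩)
  rw [← not_nontrivial_iff]
  exact fun hnt => hconn.isPreconnected.infinite_of_nontrivial hnt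
    ((hls.finite.union hrs.finite).subset hcover)

theorem countable_nontrivial_fiber [T2Space X] [CompactSpace X] [PreconnectedSpace X]
    [LocallyConnectedSpace X] [SecondCountableTopology X] (H : SeparatingChain W e A B) :
    {t : ℝ | (region A B ∩ coord B ⁻¹' {t}).Nontrivial}.Countable := by
  refine PairwiseDisjoint.countable_of_nonempty_interior
    (s := fun t : ℝ => region A B ∩ coord B ⁻¹' {t}) ?_ fun t ht => ?_
  · intro s _ t _ hst
    exact disjoint_left.2 fun p hp hp' => hst (hp.2.symm.trans hp'.2)
  · by_contra hempty
    exact not_subsingleton_iff.2 ht (H.subsingleton_fiber t hempty)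

/-- A separating chain gives rise to a monotone map onto the circle, regarded as the one-point
compactification of the line, with prescribed set of nontrivial fibers. -/
theorem exists_monotone_map [T2Space X] [CompactSpace X] [PreconnectedSpace X]
    [LocallyConnectedSpace X] [SecondCountableTopology X] (H : SeparatingChain W e A B)
    (hnt : (region A B)ᶜ.Nontrivial) {Q : Set (OnePoint ℝ)} (hQ : Q.Countable)
    (hQd : Dense Q) (hQi : OnePoint.infty ∈ Q) :
    ∃ p : X → OnePoint ℝ, Continuous p ∧ (∀ y, IsConnected (p ⁻¹' {y})) ∧
      ∀ y, (p ⁻¹' {y}).Nontrivial ↔ y ∈ Q := by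
  classical
  obtain ⟨h, hcont, hmono, hfib⟩ := Real.exists_monotone_collapse H.countable_nontrivial_fiber
    (hQ.preimage OnePoint.coe_injective)
    (hQd.preimage OnePoint.isOpenEmbedding_coe.isOpenMap)
  let p : X → OnePoint ℝ := fun x => if x ∈ region A B then (h (coord B x) : OnePoint ℝ) else
    OnePoint.infty
  have hcoe : ∀ T : Set (OnePoint ℝ), OnePoint.infty ∉ T →
      p ⁻¹' T = region A B ∩ (fun x => h (coord B x)) ⁻¹' ((↑) ⁻¹' T) := by
    intro T hT
    ext x
    by_cases hx : x ∈ region A B <;> simp [p, hx, hT]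
  have hinf : p ⁻¹' {OnePoint.infty} = (region A B)ᶜ := by
    ext x
    by_cases hx : x ∈ region A B <;> simp [p, hx]
  have hco : ContinuousOn (fun x => h (coord B x)) (region A B) :=
    hcont.comp_continuousOn H.continuousOn_coord
  have hfiber : ∀ {t s s' : ℝ}, h ⁻¹' {t} = Icc s s' →
      p ⁻¹' {(t : OnePoint ℝ)} = region A B ∩ coord B ⁻¹' Icc s s' := by
    intro t s s' heq
    rw [hcoe _ (by simp), ← heq]
    ext x
    simp
  refine ⟨p, ?_, fun y => ?_, fun y => ?_⟩
  · refine continuous_def.2 fun T hT => ?_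
    by_cases hi : OnePoint.infty ∈ T
    · have hK := (OnePoint.isOpen_def.1 hT).1 hi
      rw [← isClosed_compl_iff, ← preimage_compl, hcoe _ (by simpa using hi)]
      obtain ⟨u, hu⟩ := hK.bddBelow
      obtain ⟨v, hv⟩ := hK.bddAbove
      obtain ⟨s, s₁, hs, hsu, -⟩ := hfib (min u v)
      obtain ⟨s₂, s', hs', hsv, -⟩ := hfib (max u v + 1)
      have hs1 : h s = min u v := hsu.ge ⟨le_rfl, hs⟩
      have hs2 : h s' = max u v + 1 := hsv.ge ⟨hs', le_rfl⟩
      have hss : s ≤ s' := by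
        by_contra! hlt
        have := hmono hlt.le
        linarith [min_le_max (a := u) (b := v)]
      have hZ := H.isClosed_region_inter hss
      have heq : region A B ∩ (fun x => h (coord B x)) ⁻¹' ((↑) ⁻¹' Tᶜ) =
          (region A B ∩ coord B ⁻¹' Icc s s') ∩
            (fun x => h (coord B x)) ⁻¹' ((↑) ⁻¹' Tᶜ) := by
        refine Subset.antisymm ?_ (inter_subset_inter_left _ inter_subset_left)
        rintro x ⟨hx, hxT⟩
        have h1 : u ≤ h (coord B x) := hu hxT
        have h2 : h (coord B x) ≤ v := hv hxT
        refine ⟨⟨hx, ?_, ?_⟩, hxT⟩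
        · by_contra! hlt
          have h3 : coord B x ∉ h ⁻¹' {min u v} := hsu ▸ fun h => hlt.not_ge h.1
          exact h3 (le_antisymm ((hmono hlt.le).trans hs1.le) ((min_le_left _ _).trans h1))
        · by_contra! hlt
          have := hmono hlt.le
          linarith [le_max_right u v]
      rw [heq]
      exact (hco.mono inter_subset_left).preimage_isClosed_of_isClosed hZ hK.isClosed
    · rw [hcoe T hi]
      exact hco.isOpen_inter_preimage H.isOpen_region
        (hT.preimage OnePoint.continuous_coe)
  · induction y using OnePoint.rec with
    | infty => rw [hinf]; exact H.isConnected_compl_region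
    | coe t =>
      obtain ⟨s, s', hs, heq, -⟩ := hfib t
      rw [hfiber heq]
      exact H.isConnected_region_inter hs
  · induction y using OnePoint.rec with
    | infty => rw [hinf]; exact iff_of_true hnt hQi
    | coe t =>
      obtain ⟨s, s', hs, heq, h1, h2⟩ := hfib t
      rw [hfiber heq]
      by_cases ht : (t : OnePoint ℝ) ∈ Q
      · refine iff_of_true ?_ ht
        obtain ⟨x, hx, hxs⟩ := (H.isConnected_region_inter (le_refl s)).nonempty
        obtain ⟨x', hx', hxs'⟩ := (H.isConnected_region_inter (le_refl s')).nonempty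
        rw [Icc_self] at hxs hxs'
        have hxs : coord B x = s := hxs
        have hxs' : coord B x' = s' := hxs'
        refine ⟨x, ⟨hx, by simp [hxs, hs]⟩, x', ⟨hx', by simp [hxs', hs]⟩, fun heq => ?_⟩
        exact (h1 ht).ne (by rw [← hxs, ← hxs', heq])
      · obtain ⟨rfl, h3⟩ := h2 ht
        rw [Icc_self]
        exact iff_of_false h3 ht

end SeparatingChain

theorem countable_setOf_countable_inter_Iio {T : Type*} [LinearOrder T] [TopologicalSpace T]
    [SecondCountableTopology T] (hIoi : ∀ a : T, IsOpen (Ioi a)) :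
    {z : T | ∃ V ∈ 𝓝 z, (V ∩ Iio z).Countable}.Countable := by
  have hsub : {z : T | ∃ V ∈ 𝓝 z, (V ∩ Iio z).Countable} ⊆
      ⋃ V ∈ TopologicalSpace.countableBasis T, {z | z ∈ V ∧ (V ∩ Iio z).Countable} := by
    rintro z ⟨V, hV, hc⟩
    obtain ⟨V', hV', hz, hsub⟩ := (TopologicalSpace.isBasis_countableBasis T).mem_nhds_iff.1 hV
    exact mem_biUnion hV' ⟨hz, hc.mono (inter_subset_inter_left _ hsub)⟩
  refine ((TopologicalSpace.countable_countableBasis T).biUnion fun V _ => ?_).mono hsub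
  set Z : Set T := {z | z ∈ V ∧ (V ∩ Iio z).Countable} with hZ
  obtain ⟨D, hDc, hDd⟩ := TopologicalSpace.exists_countable_dense Z
  have hmax : {z ∈ Z | ∀ w ∈ Z, w ≤ z}.Subsingleton := fun x hx y hy =>
    le_antisymm (hy.2 x hx.1) (hx.2 y hy.1)
  refine ((hDc.biUnion (t := fun d : Z => fun _ => V ∩ Iio (d : T)) fun d _ => d.2.2).union
    hmax.countable).mono ?_
  intro z hz
  by_cases hm : ∀ w ∈ Z, w ≤ z
  · exact .inr ⟨hz, hm⟩
  · push Not at hm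
    obtain ⟨w, hw, hzw⟩ := hm
    obtain ⟨d, hd, hdD⟩ := hDd.inter_open_nonempty _ ((hIoi z).preimage continuous_subtype_val)
      ⟨⟨w, hw⟩, hzw⟩
    exact .inl (mem_biUnion hdD ⟨hz.1, hd⟩)

/-- Uncountably many local cut points contain uncountably many which separate two fixed points
inside a fixed connected open set. -/
theorem exists_uncountable_separating {X : Type*} [TopologicalSpace X] [T1Space X]
    [LocallyConnectedSpace X] [SecondCountableTopology X] {C : Set X} (hC : ¬ C.Countable)
    (hloc : ∀ x ∈ C, IsLocalCutPoint x) :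
    ∃ (U : Set X) (a b : X), IsOpen U ∧ IsPreconnected U ∧
      ¬ {x ∈ C | x ∈ U ∧ a ∈ U \ {x} ∧ b ∈ U \ {x} ∧
        b ∉ connectedComponentIn (U \ {x}) a}.Countable := by
  obtain ⟨D, hDc, hDd⟩ := TopologicalSpace.exists_countable_dense X
  have : Countable D := hDc.to_subtype
  have : Countable (TopologicalSpace.countableBasis X) :=
    (TopologicalSpace.countable_countableBasis X).to_subtype
  by_contra! hcon
  refine hC ((countable_iUnion fun i : TopologicalSpace.countableBasis X × D × D × D =>
    hcon (connectedComponentIn i.1 i.2.1) i.2.2.1 i.2.2.2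
      ((TopologicalSpace.isOpen_of_mem_countableBasis i.1.2).connectedComponentIn)
      isPreconnected_connectedComponentIn).mono fun x hx => ?_)
  obtain ⟨U, hU, hUc, hcut⟩ := hloc x hx
  obtain ⟨V, hV, hxV, hVU⟩ := (TopologicalSpace.isBasis_countableBasis X).mem_nhds_iff.1 hU
  have hVo := TopologicalSpace.isOpen_of_mem_countableBasis hV
  obtain ⟨d, hd, hdD⟩ := hDd.inter_open_nonempty _ (hVo.connectedComponentIn (x := x))
    ⟨x, mem_connectedComponentIn hxV⟩
  have hxd := mem_connectedComponentIn hxV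
  rw [connectedComponentIn_eq hd] at hxd
  set O := connectedComponentIn V d with hO
  have hOo : IsOpen O := hVo.connectedComponentIn
  have hOU : O ⊆ U := (connectedComponentIn_subset _ _).trans hVU
  simp only [IsPreconnected, not_forall] at hcut
  obtain ⟨u, v, hu, hv, hcov, hune, hvne, hdis⟩ := hcut
  -- both parts of the separation accumulate at `x`
  have hacc : ∀ u v : Set X, IsOpen u → IsOpen v → U \ {x} ⊆ u ∪ v →
      ((U \ {x}) ∩ u).Nonempty → ¬ ((U \ {x}) ∩ (u ∩ v)).Nonempty → 
      ((U \ {x}) ∩ v).Nonempty → ∃ a ∈ D, a ∈ O \ {x} ∧ a ∈ u := by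
    intro u v hu hv hcov hune hdis hvne
    have hmeet : ((O \ {x}) ∩ u).Nonempty := by
      by_contra hem
      obtain ⟨y, hy⟩ := hUc.isPreconnected (u \ {x}) (v ∪ O) (hu.sdiff isClosed_singleton)
        (hv.union hOo) (fun y hy => by
          by_cases hyx : y = x
          · exact .inr (.inr (hyx ▸ hxd))
          · exact (hcov ⟨hy, hyx⟩).imp (fun h => ⟨h, hyx⟩) .inl)
        (by obtain ⟨y, hy, hyu⟩ := hune; exact ⟨y, hy.1, hyu, hy.2⟩)
        ⟨x, hOU hxd, .inr hxd⟩
      obtain ⟨hyU, ⟨hyu, hyx⟩, hyv | hyO⟩ := hy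
      · exact hdis ⟨y, ⟨hyU, hyx⟩, hyu, hyv⟩
      · exact hem ⟨y, ⟨hyO, hyx⟩, hyu⟩
    obtain ⟨a, ha, haD⟩ := hDd.inter_open_nonempty _
      ((hOo.sdiff isClosed_singleton).inter hu) hmeet
    exact ⟨a, haD, ha.1, ha.2⟩
  obtain ⟨a, haD, haO, hau⟩ := hacc u v hu hv hcov hune hdis hvne
  obtain ⟨b, hbD, hbO, hbv⟩ := hacc v u hv hu (by rwa [union_comm]) hvne
    (by rwa [inter_comm v u]) hune
  refine mem_iUnion.2 ⟨⟨⟨V, hV⟩, ⟨d, hdD⟩, ⟨a, haD⟩, ⟨b, hbD⟩⟩, hx, hxd, haO, hbO, fun hb => hdis ?_⟩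
  have hsub : connectedComponentIn (O \ {x}) a ⊆ U \ {x} :=
    (connectedComponentIn_subset _ _).trans (sdiff_subset_sdiff_left hOU)
  obtain ⟨y, hy, hyuv⟩ := isPreconnected_connectedComponentIn (x := a) (F := O \ {x}) u v hu hv
    (hsub.trans hcov) ⟨a, mem_connectedComponentIn haO, hau⟩ ⟨b, hb, hbv⟩
  exact ⟨y, hsub hy, hyuv⟩

section Separation

variable {X : Type*} [TopologicalSpace X] [LocallyConnectedSpace X] {U : Set X}
  {a b c c' : X}

theorem mem_connectedComponentIn_of_mem_closure (hU : IsOpen U)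
    (h : c ∈ closure (connectedComponentIn U a)) (hc : c ∈ U) : c ∈ connectedComponentIn U a := by
  obtain ⟨y, hy, hya⟩ := mem_closure_iff.1 h _ (hU.connectedComponentIn (x := c))
    (mem_connectedComponentIn hc)
  rw [connectedComponentIn_eq hya, ← connectedComponentIn_eq hy]
  exact mem_connectedComponentIn hc

theorem isOpen_diff_connectedComponentIn (hU : IsOpen U) :
    IsOpen (U \ connectedComponentIn U a) := by
  have : U \ connectedComponentIn U a = U \ closure (connectedComponentIn U a) :=
    Subset.antisymm
      (fun _ hp => ⟨hp.1, fun h => hp.2 (mem_connectedComponentIn_of_mem_closure hU h hp.1)⟩)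
      (sdiff_subset_sdiff_right subset_closure)
  rw [this]
  exact hU.sdiff isClosed_closure

variable [T1Space X]

theorem insert_connectedComponentIn_subset (hU : IsOpen U) (hUc : IsPreconnected U) (hc : c ∈ U)
    (ha : a ∈ U \ {c}) (hne : c ≠ c') (hc' : c' ∉ connectedComponentIn (U \ {c}) a) :
    insert c (connectedComponentIn (U \ {c}) a) ⊆ connectedComponentIn (U \ {c'}) a := by
  have hUo : IsOpen (U \ {c}) := hU.sdiff isClosed_singleton
  have hsub : connectedComponentIn (U \ {c}) a ⊆ U \ {c} := connectedComponentIn_subset _ _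
  have hcl : c ∈ closure (connectedComponentIn (U \ {c}) a) := by
    by_contra hn
    refine hUc.false_of_clopen (P := connectedComponentIn (U \ {c}) a) hUo.connectedComponentIn ?_
      ⟨a, ha.1, mem_connectedComponentIn ha⟩ ⟨c, hc, fun h => (hsub h).2 rfl⟩
    rintro q ⟨hq, hqU⟩
    exact mem_connectedComponentIn_of_mem_closure hUo hq ⟨hqU, fun h => hn (h ▸ hq)⟩
  have hconn : IsPreconnected (insert c (connectedComponentIn (U \ {c}) a)) :=
    isPreconnected_connectedComponentIn.subset_closure (subset_insert _ _)
      (insert_subset hcl subset_closure)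
  refine hconn.subset_connectedComponentIn (.inr (mem_connectedComponentIn ha)) ?_
  rintro p (rfl | hp)
  · exact ⟨hc, hne⟩
  · exact ⟨(hsub hp).1, fun h => hc' (h ▸ hp)⟩

theorem notMem_connectedComponentIn_of_mem (hU : IsOpen U) (hUc : IsPreconnected U) (hc : c ∈ U)
    (hb : b ∈ U \ {c}) (hba : b ∉ connectedComponentIn (U \ {c}) a)
    (hb' : b ∈ U \ {c'}) (hba' : b ∉ connectedComponentIn (U \ {c'}) a)
    (h : c' ∈ connectedComponentIn (U \ {c}) a) : c ∉ connectedComponentIn (U \ {c'}) a := by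
  intro hca
  have hne : c ≠ c' := fun heq => (connectedComponentIn_subset _ _ h).2 heq.symm
  have hcb := insert_connectedComponentIn_subset hU hUc hc hb hne (fun hcb => hba (by
    rw [connectedComponentIn_eq h, ← connectedComponentIn_eq hcb]
    exact mem_connectedComponentIn hb)) (mem_insert _ _)
  apply hba'
  rw [connectedComponentIn_eq hca, ← connectedComponentIn_eq hcb]
  exact mem_connectedComponentIn hb'

end Separation

/-- Uncountably many non-cut points separating `a` from `b` in a connected open set `U` contain a
separating chain. -/
theorem exists_separatingChain {X : Type*} [TopologicalSpace X] [T2Space X] [CompactSpace X]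
    [LocallyConnectedSpace X] [SecondCountableTopology X] {U C : Set X} {a b : X} (hU : IsOpen U)
    (hUc : IsPreconnected U) (hC : ¬ C.Countable) (hcut : ∀ c ∈ C, IsPreconnected ({c}ᶜ : Set X))
    (hsep : ∀ c ∈ C, c ∈ U ∧ a ∈ U \ {c} ∧ b ∈ U \ {c} ∧ b ∉ connectedComponentIn (U \ {c}) a) :
    ∃ (W : Set X) (e : ℚ → X) (A B : ℚ → Set X), SeparatingChain W e A B ∧
      (SeparatingChain.region A B)ᶜ.Nontrivial := by
  classical
  let A : X → Set X := fun c => connectedComponentIn (U \ {c}) a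
  let B : X → Set X := fun c => (U \ {c}) \ A c
  have hUo : ∀ c, IsOpen (U \ {c}) := fun c => hU.sdiff isClosed_singleton
  have hAo : ∀ c, IsOpen (A c) := fun c => (hUo c).connectedComponentIn
  have hBo : ∀ c, IsOpen (B c) := fun c => isOpen_diff_connectedComponentIn (hUo c)
  have hAU : ∀ c, A c ⊆ U \ {c} := fun c => connectedComponentIn_subset _ _
  have hAself : ∀ c, c ∉ A c := fun c h => (hAU c h).2 rfl
  have hins : ∀ c ∈ C, ∀ c' ∈ B c, insert c (A c) ⊆ A c' := fun c hc c' hc' =>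
    insert_connectedComponentIn_subset hU hUc (hsep c hc).1 (hsep c hc).2.1
      (fun h => hc'.1.2 h.symm) hc'.2
  have hAB : ∀ c ∈ C, ∀ c' ∈ C, (c ∈ A c' ↔ c' ∈ B c) := fun c hc c' hc' => by
    refine ⟨fun h => ⟨⟨(hsep c' hc').1, fun heq => (hAU c' h).2 heq.symm⟩, ?_⟩,
      fun h => hins c hc c' h (mem_insert _ _)⟩
    exact notMem_connectedComponentIn_of_mem hU hUc (hsep c' hc').1 (hsep c' hc').2.2.1
      (hsep c' hc').2.2.2 (hsep c hc).2.2.1 (hsep c hc).2.2.2 h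
  have hAmono : ∀ c ∈ C, ∀ c' ∈ C, c ∈ A c' → A c ⊆ A c' := fun c hc c' hc' h =>
    (subset_insert _ _).trans (hins c hc c' ((hAB c hc c' hc').1 h))
  have hBanti : ∀ c ∈ C, ∀ c' ∈ C, c ∈ A c' → B c' ⊆ B c := fun c hc c' hc' h p hp =>
    ⟨⟨hp.1.1, fun heq => hp.2 ((mem_singleton_iff.1 heq) ▸ h)⟩,
      fun hpA => hp.2 (hAmono c hc c' hc' h hpA)⟩
  let : LinearOrder C :=
    { le := fun c c' => c = c' ∨ (c : X) ∈ A c'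
      lt := fun c c' => (c : X) ∈ A c'
      le_refl := fun c => .inl rfl
      le_trans := by
        rintro c c' c'' (rfl | h) (rfl | h')
        · exact .inl rfl
        · exact .inr h'
        · exact .inr h
        · exact .inr (hAmono _ c'.2 _ c''.2 h' h)
      lt_iff_le_not_ge := by
        intro c c'
        refine ⟨fun h => ⟨.inr h, ?_⟩, ?_⟩
        · rintro (rfl | h')
          · exact hAself _ h
          · exact ((hAB _ c.2 _ c'.2).1 h).2 h'
        · rintro ⟨rfl | h, h'⟩
          · exact (h' (.inl rfl)).elim
          · exact h
      le_antisymm := by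
        rintro c c' (h | h) (h' | h')
        · exact h
        · exact h
        · exact h'.symm
        · exact (((hAB _ c.2 _ c'.2).1 h).2 h').elim
      le_total := by
        intro c c'
        by_cases heq : c = c'
        · exact .inl (.inl heq)
        by_cases h : (c' : X) ∈ A c
        · exact .inr (.inr h)
        · refine .inl (.inr ((hAB _ c.2 _ c'.2).2 ⟨⟨(hsep _ c'.2).1, fun h => heq ?_⟩, h⟩))
          exact Subtype.ext (mem_singleton_iff.1 h).symm
      toDecidableLE := Classical.decRel _ }
  have hlt : ∀ c c' : C, c < c' ↔ (c : X) ∈ A c' := fun _ _ => Iff.rfl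
  have hlt' : ∀ c c' : C, c < c' ↔ (c' : X) ∈ B c := fun c c' => hAB _ c.2 _ c'.2
  have hIoi : ∀ c : C, IsOpen (Ioi c) := fun c => by
    have : Ioi c = (↑) ⁻¹' B (c : X) := by ext c'; exact hlt' c c'
    rw [this]
    exact (hBo c).preimage continuous_subtype_val
  have hbad := countable_setOf_countable_inter_Iio hIoi
  set G : Set C := {z : C | ∃ V ∈ 𝓝 z, (V ∩ Iio z).Countable}ᶜ with hG
  have hleft : ∀ z ∈ G, ∀ V ∈ 𝓝 (z : X), ∃ c ∈ G, c < z ∧ (c : X) ∈ V := by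
    intro z hz V hV
    by_contra! hcon
    refine hz ⟨(↑) ⁻¹' V, continuous_subtype_val.continuousAt.preimage_mem_nhds hV,
      hbad.mono fun c hc => ?_⟩
    by_contra hcG
    exact hcon c hcG hc.2 hc.1
  obtain ⟨z, hz⟩ : G.Nonempty := by
    rw [nonempty_iff_ne_empty]
    intro hem
    refine hC (countable_coe_iff.1 (countable_univ_iff.1 ?_))
    rw [compl_empty_iff.1 hem] at hbad
    exact hbad
  -- a neighborhood of `z` with closure in `U`
  obtain ⟨K, hK, hKcl, hKU⟩ := exists_mem_nhds_isClosed_subset (hU.mem_nhds (hsep z z.2).1)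
  obtain ⟨W, hWK, hWo, hzW⟩ := mem_nhds_iff.1 hK
  have hWU : closure W ⊆ U := (closure_minimal hWK hKcl).trans hKU
  -- the left side of `z` is exhausted by the left sides of the smaller points
  have hexh : A z ⊆ ⋃ c : {c : C // c < z}, A c.1 := by
    refine isPreconnected_connectedComponentIn.subset_of_closure_inter_subset
      (isOpen_iUnion fun c => hAo _) ?_ ?_
    · obtain ⟨c, -, hc, -⟩ := hleft z hz univ univ_mem
      exact ⟨a, mem_connectedComponentIn (hsep z z.2).2.1,
        mem_iUnion.2 ⟨⟨c, hc⟩, mem_connectedComponentIn (hsep c c.2).2.1⟩⟩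
    · rintro q ⟨hq, hqz⟩
      have hqU : q ∈ U \ {(z : X)} := hAU _ hqz
      obtain ⟨V₁, V₂, hV₁, hV₂, hd⟩ := t2_separation_nhds hqU.2
      obtain ⟨V, hVV, hVo, hqV, hVc⟩ := locallyConnectedSpace_iff_subsets_isOpen_isConnected.1
        ‹_› q (V₁ ∩ U) (inter_mem hV₁ (hU.mem_nhds hqU.1))
      obtain ⟨p, hpV, hp⟩ := mem_closure_iff.1 hq V hVo hqV
      obtain ⟨⟨c₁, hc₁⟩, hp⟩ := mem_iUnion.1 hp
      obtain ⟨c, -, hcz, hcV, hcB⟩ := hleft z hz (V₂ ∩ B c₁)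
        (inter_mem hV₂ ((hBo _).mem_nhds ((hlt' _ _).1 hc₁)))
      refine mem_iUnion.2 ⟨⟨c, hcz⟩, ?_⟩
      have hpc : p ∈ A c := hAmono _ c₁.2 _ c.2 ((hlt' c₁ c).2 hcB) hp
      have hsub := hVc.isPreconnected.subset_connectedComponentIn (F := U \ {(c : X)}) hpV
        (fun x hx => ⟨(hVV hx).2, fun h => hd.le_bot
          ⟨(hVV hx).1, (mem_singleton_iff.1 h) ▸ hcV⟩⟩) hqV
      rwa [← connectedComponentIn_eq hpc] at hsub
  obtain ⟨c₀, hc₀z, hc₀⟩ : ∃ c₀ : C, c₀ < z ∧ frontier W ∩ A z ⊆ A c₀ := by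
    have hfr : frontier W ∩ A z = frontier W \ B z := by
      ext p
      refine ⟨fun h => ⟨h.1, fun h' => h'.2 h.2⟩, fun h => ⟨h.1, ?_⟩⟩
      by_contra hpA
      refine h.2 ⟨⟨hWU (frontier_subset_closure h.1), fun heq => ?_⟩, hpA⟩
      rw [hWo.frontier_eq] at h
      exact h.1.2 (mem_singleton_iff.1 heq ▸ hzW)
    have hcomp : IsCompact (frontier W ∩ A z) := by
      rw [hfr, sdiff_eq]
      exact (isClosed_frontier.inter (hBo _).isClosed_compl).isCompact
    obtain ⟨c, -, hc, -⟩ := hleft z hz univ univ_mem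
    have : Nonempty {c : C // c < z} := ⟨⟨c, hc⟩⟩
    obtain ⟨⟨c, hc⟩, hsub⟩ := hcomp.elim_directed_cover (fun c : {c : C // c < z} => A c.1)
      (fun c => hAo _) (inter_subset_right.trans hexh) (by
        refine Monotone.directed_le fun c c' hcc => ?_
        rcases hcc.eq_or_lt with rfl | h
        · exact le_rfl
        · exact hAmono _ c.1.2 _ c'.1.2 h)
    exact ⟨c, hc, hsub⟩
  -- a rational chain of points between `c₀` and `z` inside `W`
  let T : Set C := {c | c ∈ G ∧ c₀ < c ∧ c < z ∧ (c : X) ∈ W}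
  have hTleft : ∀ c ∈ G, c ≤ z → (c : X) ∈ W → ∀ c₁ : C, c₀ ≤ c₁ → c₁ < c →
      ∃ c₂ ∈ T, c₁ < c₂ ∧ c₂ < c := by
    intro c hcG hcz hcW c₁ h₀₁ h₁
    obtain ⟨c₂, h2G, h2c, h2W, h2B⟩ := hleft c hcG (W ∩ B c₁)
      (inter_mem (hWo.mem_nhds hcW) ((hBo _).mem_nhds ((hlt' _ _).1 h₁)))
    have h12 := (hlt' c₁ c₂).2 h2B
    exact ⟨c₂, ⟨h2G, h₀₁.trans_lt h12, h2c.trans_le hcz, h2W⟩, h12, h2c⟩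
  have : DenselyOrdered T := ⟨fun c₁ c hc => by
    obtain ⟨c₂, h2, h3, h4⟩ := hTleft c c.2.1 c.2.2.2.1.le c.2.2.2.2 c₁ c₁.2.2.1.le hc
    exact ⟨⟨c₂, h2⟩, h3, h4⟩⟩
  have : Nontrivial T := by
    obtain ⟨c₁, h1, h1', -⟩ := hTleft z hz le_rfl hzW c₀ le_rfl hc₀z
    obtain ⟨c₂, h2, h3, -⟩ := hTleft z hz le_rfl hzW c₁ h1'.le h1.2.2.1
    exact ⟨⟨⟨c₁, h1⟩, ⟨c₂, h2⟩, fun h => h3.ne (Subtype.mk.inj h)⟩⟩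
  obtain ⟨f⟩ := Order.embedding_from_countable_to_dense ℚ T
  have hf : ∀ {r r' : ℚ}, r < r' → ((f r).1 : X) ∈ A (f r').1 := fun h => f.strictMono h
  have hfW : ∀ r, ((f r).1 : X) ∈ W := fun r => (f r).2.2.2.2
  refine ⟨W, fun r => (f r).1, fun r => A (f r).1 ∩ W, fun r => B (f r).1 ∩ W,
    { isOpen := hWo
      isOpen_left := fun r => (hAo _).inter hWo
      isOpen_right := fun r => (hBo _).inter hWo
      disjoint := fun r => disjoint_left.2 fun p hp hp' => hp'.1.2 hp.1
      left_subset := fun r => inter_subset_right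
      cover := fun r p hp => by
        by_cases hpA : p ∈ A (f r).1
        · exact .inl ⟨hpA, hp.1⟩
        · exact .inr ⟨⟨⟨hWU (subset_closure hp.1), hp.2⟩, hpA⟩, hp.1⟩
      notMem_left := fun r h => hAself _ h.1
      notMem_right := fun r h => h.1.1.2 rfl
      mem_left := fun r r' h => ⟨hf h, hfW r⟩
      mem_right := fun r r' h => ⟨(hlt' _ _).1 (hf h), hfW r'⟩
      left_mono := fun r r' h => inter_subset_inter_left _ (hAmono _ (f r).1.2 _ (f r').1.2 (hf h))
      right_anti := fun r r' h => inter_subset_inter_left _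
        (hBanti _ (f r).1.2 _ (f r').1.2 (hf h))
      closure_subset := fun r r' h q hq => by
        by_cases h1 : q = (f r).1
        · exact .inl h1
        by_cases h2 : q = (f r').1
        · exact .inr (.inl h2)
        have hqW : q ∈ closure W := closure_mono (fun p hp => hp.1.2) hq
        have hqA : q ∉ A (f r).1 := fun hqA => by
          obtain ⟨p, hp, hp'⟩ := mem_closure_iff.1 hq _ (hAo _) hqA
          exact hp'.1.1.2 hp
        have hqB : q ∉ B (f r').1 := fun hqB => by
          obtain ⟨p, hp, hp'⟩ := mem_closure_iff.1 hq _ (hBo _) hqB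
          exact hp.2 hp'.2.1
        have hqA' : q ∈ A (f r').1 := by
          by_contra hn
          exact hqB ⟨⟨hWU hqW, h2⟩, hn⟩
        have hqW' : q ∈ W := by
          by_contra hn
          refine hqA (hAmono _ c₀.2 _ (f r).1.2 (f r).2.2.1 (hc₀ ⟨?_, ?_⟩))
          · rw [hWo.frontier_eq]; exact ⟨hqW, hn⟩
          · exact hAmono _ (f r').1.2 _ z.2 (f r').2.2.2.1 hqA'
        exact .inr (.inr ⟨⟨⟨⟨hWU hqW, h1⟩, hqA⟩, hqW'⟩, hqA', hqW'⟩)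
      not_cut := fun r => hcut _ (f r).1.2 }, c₀, ?_, z, ?_, fun h => hc₀z.ne (Subtype.ext h)⟩
  · intro h
    obtain ⟨r, r', -, h1, -⟩ := SeparatingChain.mem_region.1 h
    exact h1.1.2 (f r).2.2.1
  · intro h
    obtain ⟨r, r', -, -, h1⟩ := SeparatingChain.mem_region.1 h
    exact ((hlt' _ _).1 (f r').2.2.2.1).2 h1.1

/-- Let `S` be a simple closed curve with a countable dense subset `Q`, and `X` a Peano
continuum with uncountably many local cut points which are not cut points. Then there is
a continuous surjection `p : X → S` whose fibers are continua, and whose fiber over `y`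
is nondegenerate iff `y ∈ Q`. -/
theorem exists_monotone_map_onto_circle
    {S : Type*} [TopologicalSpace S] (hS : Nonempty (S ≃ₜ AddCircle (1 : ℝ)))
    (Q : Set S) (hQc : Q.Countable) (hQd : Dense Q)
    {X : Type*} [MetricSpace X] [CompactSpace X] [ConnectedSpace X]
    [LocallyConnectedSpace X] [Nonempty X]
    (h : ¬ ({x : X | IsLocalCutPoint x ∧ ¬ IsCutPoint x}).Countable) :
    ∃ p : X → S, Continuous p ∧ Function.Surjective p ∧
      (∀ y, IsCompact (p ⁻¹' {y}) ∧ IsConnected (p ⁻¹' {y})) ∧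
      (∀ y, (p ⁻¹' {y}).Nontrivial ↔ y ∈ Q) := by
  obtain ⟨k⟩ := hS
  have : CompactSpace S := k.symm.compactSpace
  have : T2Space S := k.symm.t2Space
  have : Nonempty S := ⟨k.symm 0⟩
  obtain ⟨q, hq⟩ := hQd.nonempty
  obtain ⟨f, hf, hfr⟩ := exists_isEmbedding_range_eq_compl k q
  let φ : OnePoint ℝ ≃ₜ S := OnePoint.equivOfIsEmbeddingOfRangeEq q f hf hfr
  have hφ : φ OnePoint.infty = q := OnePoint.equivOfIsEmbeddingOfRangeEq_apply_infty q f hf hfr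
  obtain ⟨U, a, b, hU, hUc, hunc⟩ := exists_uncountable_separating h fun x hx => hx.1
  obtain ⟨W, e, A, B, H, hnt⟩ := exists_separatingChain hU hUc hunc
    (fun c hc => not_not.1 hc.1.2) (fun c hc => hc.2)
  obtain ⟨p, hp, hconn, hfib⟩ := H.exists_monotone_map hnt (hQc.preimage φ.injective)
    (hQd.preimage φ.isOpenMap) (show φ OnePoint.infty ∈ Q from hφ ▸ hq)
  have hpre : ∀ y, (φ ∘ p) ⁻¹' {y} = p ⁻¹' {φ.symm y} := fun y => by
    ext x
    simp [Homeomorph.eq_symm_apply]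
  have hcont : Continuous (φ ∘ p) := φ.continuous.comp hp
  refine ⟨φ ∘ p, hcont, fun y => ?_,
    fun y => ⟨(isClosed_singleton.preimage hcont).isCompact, hpre y ▸ hconn _⟩, fun y => ?_⟩
  · exact (hpre y ▸ hconn (φ.symm y)).nonempty
  · rw [hpre, hfib, mem_preimage, φ.apply_symm_apply]
end

section
/- Let Y be a Peano continuum and let r : Y → A be a monotone retraction of Y onto a subset A ⊆ Y whose topological boundary in Y is finite. Let R ⊆ Y be a self-regenerating fractal and let R' be a connected component of A ∩ R whose interior in Y is nonempty. Then R' is a self-regenerating fractal. -/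
/-- A family `F` of self-maps of a metric space `X` is topologically contractive if for
every `ε > 0` there is `k` such that every composition of `k` maps from `F` has image of
diameter less than `ε`. -/
def TopContractive {X : Type*} [MetricSpace X] (F : Set (X → X)) : Prop :=
  ∀ ε > (0 : ℝ), ∃ k : ℕ, ∀ l : List (X → X), (∀ f ∈ l, f ∈ F) → l.length = k →
    Metric.diam (Set.range (l.foldr (· ∘ ·) id)) < ε

/-- A metric space `A` is a self-regenerating fractal if for every nonempty open
`U ⊆ A` there is a finite topologically contractive family of continuous self-maps of
`A`, each constant outside `U`, whose images cover `A`. -/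
def SelfRegenFractal (A : Type*) [MetricSpace A] : Prop :=
  ∀ U : Set A, IsOpen U → U.Nonempty →
    ∃ F : Set (A → A), F.Finite ∧ (∀ f ∈ F, Continuous f) ∧
      (∀ f ∈ F, ∀ x y, x ∉ U → y ∉ U → f x = f y) ∧
      TopContractive F ∧ (⋃ f ∈ F, Set.range f) = Set.univ

open Set Topology

/-- Self-regeneration passes to a retract `Z` of `X` at those open sets of `X` outside of which
the retraction `ρ` may be ignored. -/
theorem SelfRegenFractal.exists_family_of_retract {X Z : Type*} [MetricSpace X] [CompactSpace X]
    [MetricSpace Z] (hX : SelfRegenFractal X) {i : Z → X} {ρ : X → Z} (hi : Continuous i)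
    (hρ : Continuous ρ) (hρi : ∀ z, ρ (i z) = z) {U : Set X} (hU : IsOpen U) (hUne : U.Nonempty)
    (hUρ : ∀ x, i (ρ x) = x ∨ (x ∉ U ∧ i (ρ x) ∉ U)) :
    ∃ G : Set (Z → Z), G.Finite ∧ (∀ g ∈ G, Continuous g) ∧
      (∀ g ∈ G, ∀ x y, i x ∉ U → i y ∉ U → g x = g y) ∧
      TopContractive G ∧ (⋃ g ∈ G, range g) = univ := by
  obtain ⟨F, hFfin, hFcont, hFconst, hFcontr, hFcover⟩ := hX U hU hUne
  have hfρ : ∀ f ∈ F, ∀ x, f (i (ρ x)) = f x := by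
    intro f hf x
    rcases hUρ x with h | ⟨h₁, h₂⟩
    · rw [h]
    · exact hFconst f hf _ _ h₂ h₁
  refine ⟨(fun f => ρ ∘ f ∘ i) '' F, hFfin.image _, ?_, ?_, ?_, ?_⟩
  · rintro _ ⟨f, hf, rfl⟩
    exact hρ.comp ((hFcont f hf).comp hi)
  · rintro _ ⟨f, hf, rfl⟩ x y hx hy
    exact congrArg ρ (hFconst f hf _ _ hx hy)
  · intro ε hε
    obtain ⟨δ, hδ, hρδ⟩ := Metric.uniformContinuous_iff.1
      (CompactSpace.uniformContinuous_of_continuous hρ) (ε / 2) (half_pos hε)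
    obtain ⟨k, hk⟩ := hFcontr δ hδ
    refine ⟨k, fun l hl hlk => ?_⟩
    have hcomp : ∀ l : List (Z → Z), (∀ g ∈ l, g ∈ (fun f => ρ ∘ f ∘ i) '' F) →
        ∃ m : List (X → X), (∀ f ∈ m, f ∈ F) ∧ m.length = l.length ∧
          ∀ z, l.foldr (· ∘ ·) id z = ρ (m.foldr (· ∘ ·) id (i z)) := by
      intro l
      induction l with
      | nil => exact fun _ => ⟨[], by simp, rfl, fun z => (hρi z).symm⟩
      | cons g l ih =>
        intro h
        obtain ⟨m, hmF, hml, hm⟩ := ih fun g' hg' => h g' (List.mem_cons_of_mem _ hg')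
        obtain ⟨f, hf, rfl⟩ := h g List.mem_cons_self
        refine ⟨f :: m, ?_, by simp [hml], fun z => ?_⟩
        · intro f' hf'
          rcases List.mem_cons.1 hf' with rfl | hf'
          exacts [hf, hmF _ hf']
        · simp only [List.foldr_cons, Function.comp_apply, hm, hfρ f hf]
    obtain ⟨m, hmF, hml, hm⟩ := hcomp l hl
    refine lt_of_le_of_lt (Metric.diam_le_of_forall_dist_le (half_pos hε).le ?_) (half_lt_self hε)
    rintro _ ⟨x, rfl⟩ _ ⟨y, rfl⟩
    rw [hm, hm]
    refine (hρδ (lt_of_le_of_lt ?_ (hk m hmF (hml.trans hlk)))).le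
    exact Metric.dist_le_diam_of_mem
      (isCompact_univ.isBounded.subset (subset_univ _)) (mem_range_self _) (mem_range_self _)
  · refine eq_univ_of_forall fun z => ?_
    have hz : i z ∈ ⋃ f ∈ F, range f := hFcover ▸ mem_univ _
    obtain ⟨f, hf, x, hx⟩ := mem_iUnion₂.1 hz
    refine mem_iUnion₂.2 ⟨_, mem_image_of_mem _ hf, ρ x, ?_⟩
    simp only [Function.comp_apply, hfρ f hf, hx, hρi]

/-- A continuous map on a closed subset `R` of a connected space `Y`, constant on the part of `R`
outside an open subset of `Y` contained in `R`, has preconnected range. -/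
theorem isPreconnected_range_of_const_outside_isOpen {Y Z : Type*} [TopologicalSpace Y]
    [PreconnectedSpace Y] [TopologicalSpace Z] {R U : Set Y} (hR : IsClosed R) (hU : IsOpen U)
    (hUR : U ⊆ R) {f : R → Z} (hf : Continuous f)
    (hconst : ∀ x y : R, (x : Y) ∉ U → (y : Y) ∉ U → f x = f y) :
    IsPreconnected (range f) := by
  classical
  by_cases hRU : R ⊆ U
  · obtain rfl : U = R := hUR.antisymm hRU
    rcases isClopen_iff.1 ⟨hR, hU⟩ with rfl | rfl
    · have : IsEmpty ((∅ : Set Y) : Type _) := inferInstance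
      rw [range_eq_empty f]
      exact isPreconnected_empty
    · have : PreconnectedSpace (univ : Set Y) := Subtype.preconnectedSpace isPreconnected_univ
      exact isPreconnected_range hf
  · obtain ⟨q, hqR, hqU⟩ := not_subset.1 hRU
    let g : Y → Z := fun x => if hx : x ∈ R then f ⟨x, hx⟩ else f ⟨q, hqR⟩
    have hgR : ∀ x : R, g x = f x := fun x => dif_pos x.2
    have hgU : ∀ x ∈ Uᶜ, g x = f ⟨q, hqR⟩ := by
      intro x hx
      by_cases hxR : x ∈ R
      · exact (hgR ⟨x, hxR⟩).trans (hconst _ _ hx hqU)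
      · exact dif_neg hxR
    have hg : Continuous g := by
      rw [← continuousOn_univ]
      have hcover : R ∪ Uᶜ = univ :=
        eq_univ_of_forall fun x => (em (x ∈ U)).imp (fun h => hUR h) id
      rw [← hcover]
      refine ContinuousOn.union_of_isClosed ?_ (continuousOn_const.congr hgU) hR hU.isClosed_compl
      rw [continuousOn_iff_continuous_domRestrict]
      exact hf.congr fun x => (hgR x).symm
    have hrange : range f = range g := by
      apply Subset.antisymm
      · rintro _ ⟨x, rfl⟩
        exact ⟨x, hgR x⟩
      · rintro _ ⟨x, rfl⟩
        by_cases hxR : x ∈ R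
        · exact ⟨⟨x, hxR⟩, (hgR ⟨x, hxR⟩).symm⟩
        · exact ⟨⟨q, hqR⟩, (hgU x fun hxU => hxR (hUR hxU)).symm⟩
    rw [hrange]
    exact isPreconnected_range hg

/-- A monotone retraction onto `A` sends the complement of `A` to the frontier of `A`. -/
theorem retraction_mem_frontier_of_isPreconnected_fiber {Y : Type*} [TopologicalSpace Y]
    {A : Set Y} {r : Y → Y} (hA : IsClosed A) (hr_into : ∀ y, r y ∈ A)
    (hr_retr : ∀ a ∈ A, r a = a) (hmono : ∀ a, IsPreconnected (r ⁻¹' {a})) {x : Y} (hx : x ∉ A) :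
    r x ∈ frontier A := by
  rw [hA.frontier_eq]
  refine ⟨hr_into x, fun hint => ?_⟩
  obtain ⟨z, -, hz₁, hz₂⟩ := hmono (r x) (interior A) Aᶜ isOpen_interior hA.isOpen_compl
    (fun z hz => by
      by_cases hzA : z ∈ A
      · left
        rw [← hr_retr z hzA, show r z = r x from hz]
        exact hint
      · exact Or.inr hzA)
    ⟨r x, hr_retr _ (hr_into x), hint⟩ ⟨x, rfl, hx⟩
  exact hz₂ (interior_subset hz₁)

/-- A component of a closed set is closed. -/
theorem IsClosed.isClosed_connectedComponentIn {Y : Type*} [TopologicalSpace Y] {S : Set Y}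
    (hS : IsClosed S) (y : Y) : IsClosed (connectedComponentIn S y) := by
  by_cases hy : y ∈ S
  · rw [connectedComponentIn_eq_image hy]
    exact hS.isClosedEmbedding_subtypeVal.isClosedMap _ isClosed_connectedComponent
  · rw [connectedComponentIn_eq_empty hy]
    exact isClosed_empty

/-- If `R` is self-regenerating and a component of `A ∩ R` has interior points in `Y`, then that
component is open relative to the image of `R` under the retraction `r`. -/
theorem exists_isOpen_component_of_retract {Y : Type*} [MetricSpace Y] [PreconnectedSpace Y]
    {A : Set Y} {r : Y → Y} (hA : IsClosed A) (hrc : Continuous r)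
    (hr_into : ∀ y, r y ∈ A) (hr_retr : ∀ a ∈ A, r a = a)
    (hrfr : ∀ x ∉ A, r x ∈ frontier A) (hfr : (frontier A).Finite)
    {R : Set Y} (hRcomp : IsCompact R) (hR : SelfRegenFractal R) {y : Y}
    (hint : (interior (connectedComponentIn (A ∩ R) y)).Nonempty) :
    ∃ O : Set Y, IsOpen O ∧ connectedComponentIn (A ∩ R) y ⊆ O ∧
      ∀ x ∈ R, r x ∈ O → r x ∈ connectedComponentIn (A ∩ R) y := by
  have hRcl := hRcomp.isClosed
  have : CompactSpace R := isCompact_iff_compactSpace.1 hRcomp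
  have hIR : interior (connectedComponentIn (A ∩ R) y) ⊆ R :=
    fun x hx => (connectedComponentIn_subset _ _ (interior_subset hx)).2
  obtain ⟨p, hp⟩ := hint
  obtain ⟨F, hFfin, hFcont, hFconst, -, hFcover⟩ :=
    hR (Subtype.val ⁻¹' interior (connectedComponentIn (A ∩ R) y))
      (isOpen_interior.preimage continuous_subtype_val) ⟨⟨p, hIR hp⟩, hp⟩
  let T : (R → R) → Set Y := fun f => range fun x => r (f x)
  have hTcont : ∀ f ∈ F, Continuous fun x : R => r (f x) := fun f hf =>
    hrc.comp (continuous_subtype_val.comp (hFcont f hf))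
  have hTconn : ∀ f ∈ F, IsPreconnected (T f) := fun f hf =>
    isPreconnected_range_of_const_outside_isOpen hRcl isOpen_interior hIR (hTcont f hf)
      fun a b ha hb => by rw [hFconst f hf a b ha hb]
  have hTsub : ∀ f ∈ F, ∀ p ∈ T f, p ∈ connectedComponentIn (A ∩ R) y →
      T f ⊆ connectedComponentIn (A ∩ R) y := by
    intro f hf p hpT hp
    have hsplit : T f ⊆ A ∩ R ∨ T f ⊆ frontier A \ R := by
      refine isPreconnected_iff_subset_of_disjoint_closed.1 (hTconn f hf) _ _ (hA.inter hRcl)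
        (hfr.subset sdiff_subset).isClosed ?_ ?_
      · rintro _ ⟨x, rfl⟩
        by_cases hxR : r (f x) ∈ R
        · exact Or.inl ⟨hr_into _, hxR⟩
        · refine Or.inr ⟨hrfr _ fun hxA => hxR ?_, hxR⟩
          rw [hr_retr _ hxA]
          exact (f x).2
      · exact eq_empty_of_forall_notMem fun z hz => hz.2.2.2 hz.2.1.2
    have hpR : p ∈ R := (connectedComponentIn_subset _ _ hp).2
    rw [connectedComponentIn_eq hp]
    exact (hTconn f hf).subset_connectedComponentIn hpT
      (hsplit.resolve_right fun h => (h hpT).2 hpR)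
  let N : Set Y := ⋃ f ∈ {f ∈ F | Disjoint (T f) (connectedComponentIn (A ∩ R) y)}, T f
  have hN : IsClosed N := (hFfin.subset (sep_subset _ _)).isClosed_biUnion fun f hf =>
    (isCompact_range (hTcont f hf.1)).isClosed
  refine ⟨Nᶜ, hN.isOpen_compl, fun x hx hxN => ?_, fun x hx hxN => ?_⟩
  · obtain ⟨f, hf, hxT⟩ := mem_iUnion₂.1 hxN
    exact disjoint_left.1 hf.2 hxT hx
  · have hxcov : (⟨x, hx⟩ : R) ∈ ⋃ f ∈ F, range f := hFcover ▸ mem_univ _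
    obtain ⟨f, hf, z, hz⟩ := mem_iUnion₂.1 hxcov
    have hxT : r x ∈ T f := ⟨z, by simp only [hz]⟩
    by_cases hdisj : Disjoint (T f) (connectedComponentIn (A ∩ R) y)
    · exact absurd (mem_iUnion₂.2 ⟨f, ⟨hf, hdisj⟩, hxT⟩) hxN
    · obtain ⟨p, hpT, hp⟩ := not_disjoint_iff.1 hdisj
      exact hTsub f hf p hpT hp hxT

/-- Let `Y` be a Peano continuum, `r : Y → Y` a monotone retraction onto `A ⊆ Y` with
finite boundary, `R ⊆ Y` a (compact) self-regenerating fractal, and `R'` a connected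
component of `A ∩ R` with nonempty interior in `Y`. Then `R'` is a self-regenerating
fractal. -/
theorem component_of_retract_inter_selfRegenerating_is_selfRegenerating
    {Y : Type*} [MetricSpace Y] [CompactSpace Y] [ConnectedSpace Y]
    [LocallyConnectedSpace Y] [Nonempty Y]
    (A : Set Y) (r : Y → Y)
    (hrc : Continuous r) (hr_into : ∀ y, r y ∈ A)
    (hr_retr : ∀ a ∈ A, r a = a)
    (hmono : ∀ a, IsPreconnected (r ⁻¹' {a}))
    (hfr : (frontier A).Finite)
    (R : Set Y) (hRcomp : IsCompact R) (hR : SelfRegenFractal R)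
    (R' : Set Y) (y : Y) (hy : y ∈ A ∩ R)
    (hR' : R' = connectedComponentIn (A ∩ R) y)
    (hint : (interior R').Nonempty) :
    IsCompact R' ∧ SelfRegenFractal R' := by
  classical
  have hA : IsClosed A := by
    have hAfix : A = {x | r x = x} :=
      Subset.antisymm hr_retr fun x hx => (show r x = x from hx) ▸ hr_into x
    rw [hAfix]
    exact isClosed_eq hrc continuous_id
  have hrfr : ∀ x ∉ A, r x ∈ frontier A := fun x hx =>
    retraction_mem_frontier_of_isPreconnected_fiber hA hr_into hr_retr hmono hx
  have hR'cl : IsClosed R' := hR' ▸ (hA.inter hRcomp.isClosed).isClosed_connectedComponentIn y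
  refine ⟨hR'cl.isCompact, fun V hV hVne => ?_⟩
  have hR'sub : R' ⊆ A ∩ R := hR' ▸ connectedComponentIn_subset _ _
  rcases subsingleton_or_nontrivial R' with hsub | hnontriv
  · refine ⟨{id}, finite_singleton _, ?_, ?_, ?_, ?_⟩
    · rintro _ rfl
      exact continuous_id
    · exact fun _ _ _ _ _ _ => Subsingleton.elim _ _
    · intro ε hε
      refine ⟨0, fun l _ _ => ?_⟩
      rwa [Metric.diam_subsingleton subsingleton_of_subsingleton]
    · simp
  have hconn : ConnectedSpace R' :=
    isConnected_iff_connectedSpace.1 (hR' ▸ isConnected_connectedComponentIn_iff.2 hy)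
  have : CompactSpace R := isCompact_iff_compactSpace.1 hRcomp
  obtain ⟨O, hO, hR'O, hOR'⟩ : ∃ O : Set Y, IsOpen O ∧ R' ⊆ O ∧ ∀ x ∈ R, r x ∈ O → r x ∈ R' := by
    subst hR'
    exact exists_isOpen_component_of_retract hA hrc hr_into hr_retr hrfr hfr hRcomp hR hint
  obtain ⟨W, hW, rfl⟩ := isOpen_induced_iff.1 hV
  obtain ⟨q, hqW⟩ := hVne
  let U : Set R := Subtype.val ⁻¹' (W ∩ O ∩ interior A ∩ {(q : Y)}ᶜ)
  have hUopen : IsOpen U :=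
    (((hW.inter hO).inter isOpen_interior).inter isOpen_compl_singleton).preimage
      continuous_subtype_val
  have hUne : U.Nonempty := by
    have hinf : (Subtype.val ⁻¹' W : Set R').Infinite := infinite_of_mem_nhds q (hV.mem_nhds hqW)
    obtain ⟨x, hxW, hx⟩ := hinf.exists_notMem_finite
      ((hfr.insert (q : Y)).preimage Subtype.val_injective.injOn)
    have hx' : (x : Y) ∉ insert (q : Y) (frontier A) := hx
    rw [mem_insert_iff, not_or, hA.frontier_eq] at hx'
    refine ⟨⟨x, (hR'sub x.2).2⟩, ⟨⟨hxW, hR'O x.2⟩, ?_⟩, hx'.1⟩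
    by_contra hxi
    exact hx'.2 ⟨(hR'sub x.2).1, hxi⟩
  have hUR' : ∀ x ∈ U, (x : Y) ∈ R' := by
    intro x hx
    have hrx := hr_retr x (interior_subset hx.1.2)
    exact hrx ▸ hOR' x x.2 (hrx.symm ▸ hx.1.1.2)
  let ρ : R → R' := fun x => if hx : r x ∈ O then ⟨r x, hOR' x x.2 hx⟩ else q
  have hρ : Continuous ρ := by
    have hclopen : IsClopen {x : R | r x ∈ O} := by
      have heq : {x : R | r x ∈ O} = {x : R | r x ∈ R'} :=
        Subset.antisymm (fun x hx => hOR' x x.2 hx) fun x hx => hR'O hx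
      refine ⟨?_, hO.preimage (hrc.comp continuous_subtype_val)⟩
      rw [heq]
      exact hR'cl.preimage (hrc.comp continuous_subtype_val)
    rw [continuous_induced_rng]
    have hval : Subtype.val ∘ ρ = fun x : R => if r x ∈ O then r x else (q : Y) := by
      funext x
      by_cases hx : r x ∈ O <;> simp [ρ, hx]
    rw [hval]
    refine Continuous.if (fun x hx => ?_) (hrc.comp continuous_subtype_val) continuous_const
    rw [hclopen.frontier_eq] at hx
    exact hx.elim
  let i : R' → R := fun z => ⟨z, (hR'sub z.2).2⟩
  have hi : Continuous i := continuous_subtype_val.subtype_mk _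
  have hρR' : ∀ x : R, (x : Y) ∈ R' → i (ρ x) = x := by
    intro x hx
    have hrx := hr_retr x (hR'sub hx).1
    apply Subtype.ext
    simp [i, ρ, hrx, hR'O hx]
  have hρi : ∀ z, ρ (i z) = z := fun z =>
    Subtype.ext (Subtype.ext_iff.1 (hρR' (i z) z.2) :)
  obtain ⟨G, hGfin, hGcont, hGconst, hGcontr, hGcover⟩ :=
    hR.exists_family_of_retract hi hρ hρi hUopen hUne fun x => by
      by_cases hxR' : (x : Y) ∈ R'
      · exact Or.inl (hρR' x hxR')
      refine Or.inr ⟨fun hxU => hxR' (hUR' x hxU), fun hρU => ?_⟩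
      by_cases hrx : r x ∈ O
      · have hval : ((i (ρ x) : R) : Y) = r x := by simp [i, ρ, hrx]
        have hxA : (x : Y) ∉ A := fun hxA => hxR' (hr_retr x hxA ▸ hOR' x x.2 hrx)
        have hfront := hrfr x hxA
        rw [hA.frontier_eq] at hfront
        exact hfront.2 (hval ▸ hρU.1.2)
      · have hval : ((i (ρ x) : R) : Y) = q := by simp [i, ρ, hrx]
        exact hρU.2 hval
  exact ⟨G, hGfin, hGcont, fun g hg a b ha hb =>
    hGconst g hg a b (fun h => ha h.1.1.1) (fun h => hb h.1.1.1), hGcontr, hGcover⟩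
end

section
/- The following two assertions are equivalent: (1) every Peano continuum that is a topological fractal contains a self-regenerating fractal with nonempty interior; (2) every Peano continuum contains a Peano self-regenerating fractal (i.e., a self-regenerating fractal that is a Peano continuum) with nonempty interior. -/
/-- `X` is a topological fractal if some finite topologically contractive family of
continuous self-maps of `X` has images covering `X`. -/
def IsTopFractal (X : Type*) [MetricSpace X] : Prop :=
  ∃ F : Set (X → X), F.Finite ∧ (∀ f ∈ F, Continuous f) ∧
    TopContractive F ∧ (⋃ f ∈ F, Set.range f) = Set.univ

open Set Filter Topology

section Fractals

theorem continuous_foldr_comp {X : Type*} [TopologicalSpace X] {F : Set (X → X)}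
    (hF : ∀ f ∈ F, Continuous f) :
    ∀ l : List (X → X), (∀ f ∈ l, f ∈ F) → Continuous (l.foldr (· ∘ ·) id)
  | [], _ => continuous_id
  | f :: l, h => by
    rw [List.forall_mem_cons] at h
    exact (hF f h.1).comp (continuous_foldr_comp hF l h.2)

theorem exists_mem_range_foldr_comp {X : Type*} {F : Set (X → X)}
    (hF : (⋃ f ∈ F, range f) = univ) (k : ℕ) (x : X) :
    ∃ l : List (X → X), (∀ f ∈ l, f ∈ F) ∧ l.length = k ∧ x ∈ range (l.foldr (· ∘ ·) id) := by
  induction k generalizing x with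
  | zero => exact ⟨[], by simp⟩
  | succ k ih =>
    obtain ⟨f, hf, y, rfl⟩ := mem_iUnion₂.1 (hF.symm ▸ mem_univ x)
    obtain ⟨l, hl, rfl, z, rfl⟩ := ih y
    exact ⟨f :: l, by simpa using ⟨hf, hl⟩, rfl, z, rfl⟩

theorem exists_foldr_comp_rel {A B : Type*} {S : (A → A) → (B → B) → Prop} (hid : S id id)
    (hcomp : ∀ f f' g g', S f g → S f' g' → S (f ∘ f') (g ∘ g')) {F : Set (A → A)}
    {G : Set (B → B)} (h : ∀ g ∈ G, ∃ f ∈ F, S f g) (l : List (B → B)) (hl : ∀ g ∈ l, g ∈ G) :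
    ∃ m : List (A → A), (∀ f ∈ m, f ∈ F) ∧ m.length = l.length ∧
      S (m.foldr (· ∘ ·) id) (l.foldr (· ∘ ·) id) := by
  induction l with
  | nil => exact ⟨[], by simp, rfl, hid⟩
  | cons g l ih =>
    rw [List.forall_mem_cons] at hl
    obtain ⟨f, hf, hfg⟩ := h g hl.1
    obtain ⟨m, hm, hlen, hml⟩ := ih hl.2
    exact ⟨f :: m, by simpa using ⟨hf, hm⟩, by simp [hlen], hcomp f _ g _ hfg hml⟩

theorem finite_setOf_words {α : Type*} {F : Set α} (hF : F.Finite) (k : ℕ) :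
    {l : List α | (∀ f ∈ l, f ∈ F) ∧ l.length = k}.Finite := by
  induction k with
  | zero =>
    refine (finite_singleton []).subset fun l hl => ?_
    simpa using hl.2
  | succ k ih =>
    refine (hF.image2 List.cons ih).subset ?_
    rintro (_ | ⟨f, l⟩) ⟨h1, h2⟩
    · simp at h2
    · rw [List.forall_mem_cons] at h1
      exact ⟨f, h1.1, l, ⟨h1.2, by simpa using h2⟩, rfl⟩

/-- A connected compact topological fractal is locally connected. -/
theorem IsTopFractal.locallyConnectedSpace {X : Type*} [MetricSpace X] [CompactSpace X]
    [PreconnectedSpace X] (h : IsTopFractal X) : LocallyConnectedSpace X := by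
  obtain ⟨F, hfin, hcont, hcontr, hcov⟩ := h
  rw [locallyConnectedSpace_iff_connected_subsets]
  intro x U hU
  obtain ⟨ε, hε, hεU⟩ := Metric.mem_nhds_iff.1 hU
  obtain ⟨k, hk⟩ := hcontr ε hε
  set W : Set (List (X → X)) := {l | (∀ f ∈ l, f ∈ F) ∧ l.length = k} with hW
  have hWfin : W.Finite := finite_setOf_words hfin k
  have hcl : ∀ l ∈ W, IsClosed (range (l.foldr (· ∘ ·) id)) := fun l hl =>
    (isCompact_range (continuous_foldr_comp hcont l hl.1)).isClosed
  refine ⟨⋃ l ∈ {l ∈ W | x ∈ range (l.foldr (· ∘ ·) id)}, range (l.foldr (· ∘ ·) id),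
    ?_, ?_, ?_⟩
  · have hC : IsClosed (⋃ l ∈ {l ∈ W | x ∉ range (l.foldr (· ∘ ·) id)},
        range (l.foldr (· ∘ ·) id)) :=
      (hWfin.subset (sep_subset _ _)).isClosed_biUnion fun l hl => hcl l hl.1
    refine mem_of_superset (hC.isOpen_compl.mem_nhds ?_) ?_
    · simp only [mem_compl_iff, mem_iUnion, not_exists]
      exact fun l hl => hl.2
    · intro y hy
      obtain ⟨l, h1, h2, h3⟩ := exists_mem_range_foldr_comp hcov k y
      refine mem_iUnion₂.2 ⟨l, ⟨⟨h1, h2⟩, ?_⟩, h3⟩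
      by_contra hx
      exact hy (mem_iUnion₂.2 ⟨l, ⟨⟨h1, h2⟩, hx⟩, h3⟩)
  · rw [biUnion_eq_iUnion]
    exact isPreconnected_iUnion ⟨x, mem_iInter.2 fun l => l.2.2⟩ fun l =>
      isPreconnected_range (continuous_foldr_comp hcont l.1 l.2.1.1)
  · refine iUnion₂_subset fun l hl y hy => hεU ?_
    exact (Metric.dist_le_diam_of_mem (Metric.isBounded_of_compactSpace) hy hl.2).trans_lt
      (hk l hl.1.1 hl.1.2)

theorem SelfRegenFractal.isTopFractal {A : Type*} [MetricSpace A] [Nonempty A]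
    (h : SelfRegenFractal A) : IsTopFractal A := by
  obtain ⟨F, h1, h2, -, h3⟩ := h univ isOpen_univ univ_nonempty
  exact ⟨F, h1, h2, h3⟩

theorem SelfRegenFractal.of_subsingleton {A : Type*} [MetricSpace A] [Subsingleton A] :
    SelfRegenFractal A := by
  refine fun U _ _ => ⟨{id}, finite_singleton _, by simpa using continuous_id,
    fun f _ x y _ _ => congrArg f (Subsingleton.elim x y), fun ε hε => ⟨0, fun l _ _ => ?_⟩,
    by simp⟩
  rwa [Metric.diam_subsingleton subsingleton_of_subsingleton]

theorem diam_range_lt_of_dist_le {Z Y : Type*} [MetricSpace Y] {u : Z → Y} {ε : ℝ} (hε : 0 < ε)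
    (h : ∀ y z, dist (u y) (u z) ≤ ε / 2) : Metric.diam (range u) < ε :=
  (Metric.diam_le_of_forall_dist_le (half_pos hε).le
    (by rintro _ ⟨y, rfl⟩ _ ⟨z, rfl⟩; exact h y z)).trans_lt (half_lt_self hε)

/-- Topological contractivity passes along a continuous semiconjugacy. -/
theorem TopContractive.semiconj {A B : Type*} [MetricSpace A] [CompactSpace A] [MetricSpace B]
    {F : Set (A → A)} {G : Set (B → B)} (hF : TopContractive F) {r : A → B} (hr : Continuous r)
    (hsurj : Function.Surjective r) (h : ∀ g ∈ G, ∃ f ∈ F, Function.Semiconj r f g) :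
    TopContractive G := by
  intro ε hε
  obtain ⟨δ, hδ, huc⟩ := Metric.uniformContinuous_iff.1
    (CompactSpace.uniformContinuous_of_continuous hr) (ε / 2) (half_pos hε)
  obtain ⟨k, hk⟩ := hF δ hδ
  refine ⟨k, fun l hl hlk => ?_⟩
  obtain ⟨m, hm, hlen, hml⟩ := exists_foldr_comp_rel (S := Function.Semiconj r) (fun _ => rfl)
    (fun _ _ _ _ h₁ h₂ => h₁.comp_right h₂) h l hl
  refine diam_range_lt_of_dist_le hε fun y z => ?_
  obtain ⟨y, rfl⟩ := hsurj y
  obtain ⟨z, rfl⟩ := hsurj z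
  rw [← hml, ← hml]
  refine (huc ?_).le
  exact (Metric.dist_le_diam_of_mem Metric.isBounded_of_compactSpace (mem_range_self y)
    (mem_range_self z)).trans_lt (hk m hm (hlen.trans hlk))

/-- If a retraction `r` of a self-regenerating fractal is injective over the complement of a
closed nowhere dense set, its image is again a self-regenerating fractal. -/
theorem SelfRegenFractal.of_retraction {A B : Type*} [MetricSpace A] [CompactSpace A]
    [MetricSpace B] (hA : SelfRegenFractal A) {r : A → B} {e : B → A} (hr : Continuous r)
    (he : Continuous e) (hre : Function.LeftInverse r e) {K : Set B} (hK : IsClosed K)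
    (hKi : interior K = ∅) (her : ∀ y, r y ∉ K → e (r y) = y) : SelfRegenFractal B := by
  intro U hU hUne
  have hne : (U \ K).Nonempty := by
    by_contra h
    have : U ⊆ interior K :=
      interior_maximal (sdiff_eq_empty.1 (not_nonempty_iff_eq_empty.1 h)) hU
    rw [hKi] at this
    exact hUne.ne_empty (subset_empty_iff.1 this)
  obtain ⟨F, hfin, hcont, hconst, hcontr, hcov⟩ := hA (r ⁻¹' (U \ K))
    ((hU.sdiff hK).preimage hr) (hne.preimage hre.surjective)
  have key : ∀ f ∈ F, ∀ y, f (e (r y)) = f y := by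
    intro f hf y
    by_cases hy : r y ∈ U \ K
    · rw [her y hy.2]
    · exact hconst f hf _ _ (by rwa [mem_preimage, hre]) hy
  refine ⟨(fun f => r ∘ f ∘ e) '' F, hfin.image _, ?_, ?_, ?_, ?_⟩
  · rintro _ ⟨f, hf, rfl⟩
    exact hr.comp ((hcont f hf).comp he)
  · rintro _ ⟨f, hf, rfl⟩ x y hx hy
    refine congrArg r (hconst f hf _ _ ?_ ?_) <;> rw [mem_preimage, hre]
    exacts [fun h => hx h.1, fun h => hy h.1]
  · refine hcontr.semiconj hr hre.surjective ?_
    rintro _ ⟨f, hf, rfl⟩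
    exact ⟨f, hf, fun y => congrArg r (key f hf y).symm⟩
  · refine eq_univ_of_forall fun x => ?_
    obtain ⟨f, hf, y, hy⟩ := mem_iUnion₂.1 (hcov.symm ▸ mem_univ (e x))
    refine mem_iUnion₂.2 ⟨_, mem_image_of_mem _ hf, r y, ?_⟩
    change r (f (e (r y))) = x
    rw [key f hf, hy, hre]

theorem SelfRegenFractal.of_homeomorph {A B : Type*} [MetricSpace A] [CompactSpace A]
    [MetricSpace B] (hA : SelfRegenFractal A) (h : A ≃ₜ B) : SelfRegenFractal B :=
  hA.of_retraction h.continuous h.symm.continuous h.right_inv isClosed_empty interior_empty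
    fun y _ => h.left_inv y

/-- A map constant off a proper part of a connected set `C` has the same image as its restriction
to `C`. -/
theorem range_eq_image_of_const {A B : Type*} {f : A → B} {U C : Set A} {z : A}
    (hf : ∀ x y, x ∉ U → y ∉ U → f x = f y) (hUC : U ⊆ C) (hzC : z ∈ C) (hzU : z ∉ U) :
    range f = f '' C := by
  refine (image_subset_range _ _).antisymm' ?_
  rintro _ ⟨x, rfl⟩
  by_cases hx : x ∈ U
  · exact mem_image_of_mem f (hUC hx)
  · exact ⟨z, hzC, hf z x hzU hx⟩

/-- The image of such a map is inside `C` as soon as it meets `C`, if `C` is a component. -/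
theorem range_subset_connectedComponent {A : Type*} [TopologicalSpace A] {f : A → A} {a z : A}
    {U : Set A} (hcont : Continuous f) (hf : ∀ x y, x ∉ U → y ∉ U → f x = f y)
    (hU : U ⊆ connectedComponent a) (hz : z ∈ connectedComponent a) (hzU : z ∉ U)
    (hmeet : (range f ∩ connectedComponent a).Nonempty) : range f ⊆ connectedComponent a := by
  obtain ⟨w, hw, hwa⟩ := hmeet
  rw [connectedComponent_eq hwa]
  rw [range_eq_image_of_const hf hU hz hzU] at hw ⊢
  exact (isPreconnected_connectedComponent.image f hcont.continuousOn).subset_connectedComponent hw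

theorem SelfRegenFractal.isOpen_connectedComponent {A : Type*} [MetricSpace A] [CompactSpace A]
    (hA : SelfRegenFractal A) {a z : A} (ha : connectedComponent a ∈ 𝓝 a)
    (hz : z ∈ connectedComponent a) (hza : z ≠ a) : IsOpen (connectedComponent a) := by
  set U : Set A := interior (connectedComponent a) \ {z} with hUdef
  have hUC : U ⊆ connectedComponent a := sdiff_subset.trans interior_subset
  have hzU : z ∉ U := fun h => h.2 rfl
  obtain ⟨F, hfin, hcont, hconst, -, hcov⟩ := hA U (isOpen_interior.sdiff isClosed_singleton)
    ⟨a, mem_interior_iff_mem_nhds.2 ha, fun h => hza (mem_singleton_iff.1 h).symm⟩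
  have hcompl : (connectedComponent a)ᶜ =
      ⋃ f ∈ {f ∈ F | ¬ (range f ∩ connectedComponent a).Nonempty}, range f := by
    ext x
    simp only [mem_compl_iff, mem_iUnion, mem_ofPred_eq, exists_prop]
    constructor
    · intro hx
      obtain ⟨f, hf, hxf⟩ := mem_iUnion₂.1 (hcov.symm ▸ mem_univ x)
      exact ⟨f, ⟨hf, fun h => hx
        (range_subset_connectedComponent (hcont f hf) (hconst f hf) hUC hz hzU h hxf)⟩, hxf⟩
    · rintro ⟨f, ⟨-, hf⟩, hxf⟩ hx
      exact hf ⟨x, hxf, hx⟩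
  rw [← isClosed_compl_iff, hcompl]
  exact (hfin.subset (sep_subset _ _)).isClosed_biUnion fun f hf =>
    (isCompact_range (hcont f hf.1)).isClosed

theorem SelfRegenFractal.connectedComponent {A : Type*} [MetricSpace A] [CompactSpace A]
    (hA : SelfRegenFractal A) {a b : A} (ha : connectedComponent a ∈ 𝓝 a)
    (hb : b ∈ connectedComponent a) (hba : b ≠ a) :
    SelfRegenFractal (connectedComponent a) := by
  have hopen := hA.isOpen_connectedComponent ha hb hba
  have : CompactSpace (_root_.connectedComponent a) :=
    isCompact_iff_compactSpace.1 isClosed_connectedComponent.isCompact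
  intro V hV ⟨v, hv⟩
  obtain ⟨z, hz, hzv⟩ : ∃ z ∈ _root_.connectedComponent a, z ≠ v := by
    by_cases h : a = v
    · exact ⟨b, hb, h ▸ hba⟩
    · exact ⟨a, mem_connectedComponent, h⟩
  set U : Set A := (Subtype.val '' V) \ {z} with hUdef
  have hUC : U ⊆ _root_.connectedComponent a := by
    rintro _ ⟨⟨x, -, rfl⟩, -⟩
    exact x.2
  have hzU : z ∉ U := fun h => h.2 rfl
  have hout : ∀ x : _root_.connectedComponent a, x ∉ V → (x : A) ∉ U := by
    rintro x hx ⟨⟨y, hy, hyx⟩, -⟩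
    exact hx (Subtype.ext hyx ▸ hy)
  obtain ⟨F, hfin, hcont, hconst, hcontr, hcov⟩ := hA U
    ((hopen.isOpenMap_subtype_val V hV).sdiff isClosed_singleton)
    ⟨v, ⟨v, hv, rfl⟩, fun h => hzv (mem_singleton_iff.1 h).symm⟩
  have hsub : ∀ f ∈ F, (range f ∩ _root_.connectedComponent a).Nonempty →
      range f ⊆ _root_.connectedComponent a := fun f hf =>
    range_subset_connectedComponent (hcont f hf) (hconst f hf) hUC hz hzU
  set G : Set (_root_.connectedComponent a → _root_.connectedComponent a) :=
    {g | ∃ f ∈ F, ∀ x, (g x : A) = f x} with hG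
  have hGfin : G.Finite := by
    have hex : ∀ g ∈ G, ∃ f ∈ F, ∀ x, (g x : A) = f x := fun g hg => hg
    have : Nonempty (A → A) := ⟨id⟩
    choose! φ hφF hφ using hex
    refine Finite.of_finite_image (f := φ) (hfin.subset ?_) ?_
    · rintro _ ⟨g, hg, rfl⟩
      exact hφF g hg
    · intro g hg g' hg' h
      funext x
      exact Subtype.ext ((hφ g hg x).trans ((congrFun h _).trans (hφ g' hg' x).symm))
  refine ⟨G, hGfin, ?_, ?_, ?_, ?_⟩
  · rintro g ⟨f, hf, hgf⟩
    rw [continuous_induced_rng]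
    exact ((hcont f hf).comp continuous_subtype_val).congr fun x => (hgf x).symm
  · rintro g ⟨f, hf, hgf⟩ x y hx hy
    refine Subtype.ext ?_
    rw [hgf, hgf]
    exact hconst f hf _ _ (hout x hx) (hout y hy)
  · intro ε hε
    obtain ⟨k, hk⟩ := hcontr ε hε
    refine ⟨k, fun l hl hlk => ?_⟩
    obtain ⟨m, hm, hlen, hml⟩ := exists_foldr_comp_rel
      (S := fun f g => Function.Semiconj Subtype.val g f) (fun _ => rfl)
      (fun _ _ _ _ h₁ h₂ => h₁.comp_right h₂) (fun _ hg => hg) l hl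
    refine lt_of_le_of_lt (Metric.diam_le_of_forall_dist_le Metric.diam_nonneg ?_)
      (hk m hm (hlen.trans hlk))
    rintro _ ⟨x, rfl⟩ _ ⟨y, rfl⟩
    rw [Subtype.dist_eq, hml.eq, hml.eq]
    exact Metric.dist_le_diam_of_mem Metric.isBounded_of_compactSpace (mem_range_self _)
      (mem_range_self _)
  · refine eq_univ_of_forall fun x => ?_
    obtain ⟨f, hf, hxf⟩ := mem_iUnion₂.1 (hcov.symm ▸ mem_univ (x : A))
    have hfC := hsub f hf ⟨x, hxf, x.2⟩
    rw [range_eq_image_of_const (hconst f hf) hUC hz hzU] at hxf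
    obtain ⟨y, hy, hyx⟩ := hxf
    refine mem_iUnion₂.2 ⟨fun w => ⟨f w, hfC (mem_range_self _)⟩, ⟨f, hf, fun _ => rfl⟩,
      ⟨y, hy⟩, Subtype.ext hyx⟩

/-- A self-regenerating fractal with nonempty interior in a nondegenerate Peano continuum has a
component which is a self-regenerating fractal with nonempty interior. -/
theorem SelfRegenFractal.exists_isConnected {Y : Type*} [MetricSpace Y] [CompactSpace Y]
    [ConnectedSpace Y] [LocallyConnectedSpace Y] [Nontrivial Y] {R : Set Y} (hR : IsCompact R)
    (hreg : SelfRegenFractal R) (hint : (interior R).Nonempty) :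
    ∃ C : Set Y, IsCompact C ∧ IsConnected C ∧ SelfRegenFractal C ∧ (interior C).Nonempty := by
  have : CompactSpace R := isCompact_iff_compactSpace.1 hR
  obtain ⟨y, hy⟩ := hint
  let a : R := ⟨y, interior_subset hy⟩
  set C : Set Y := Subtype.val '' (_root_.connectedComponent a) with hC
  set W : Set Y := connectedComponentIn (interior R) y with hW
  have hWo : IsOpen W := isOpen_interior.connectedComponentIn
  have hyW : y ∈ W := mem_connectedComponentIn hy
  have hWC : W ⊆ C := by
    have h := (isPreconnected_connectedComponentIn (F := interior R)
      (x := y)).subset_connectedComponentIn (F := R) hyW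
      ((connectedComponentIn_subset _ _).trans interior_subset)
    rwa [connectedComponentIn_eq_image (interior_subset hy)] at h
  have hnhds : _root_.connectedComponent a ∈ 𝓝 a := by
    refine mem_of_superset ((hWo.preimage continuous_subtype_val).mem_nhds (x := a) hyW) ?_
    intro x hx
    obtain ⟨x', hx', h⟩ := hWC hx
    exact Subtype.ext h ▸ hx'
  obtain ⟨z, hzW, hzy⟩ : ∃ z ∈ W, z ≠ y := by
    have hp := (isPreconnected_univ (α := Y)).preperfect_of_nontrivial nontrivial_univ
    obtain ⟨z, hz, hzy⟩ := preperfect_iff_nhds.1 hp y (mem_univ y) W (hWo.mem_nhds hyW)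
    exact ⟨z, hz.1, hzy⟩
  obtain ⟨b, hb, hbz⟩ := hWC hzW
  have hba : b ≠ a := by
    rintro rfl
    exact hzy hbz.symm
  have : CompactSpace (_root_.connectedComponent a) :=
    isCompact_iff_compactSpace.1 isClosed_connectedComponent.isCompact
  refine ⟨C, isClosed_connectedComponent.isCompact.image continuous_subtype_val,
    isConnected_connectedComponent.image _ continuous_subtype_val.continuousOn, ?_,
    ⟨y, mem_interior.2 ⟨W, hWC, hWo, hyW⟩⟩⟩
  exact (hreg.connectedComponent hnhds hb hba).of_homeomorph
    (IsEmbedding.subtypeVal.homeomorphImage _)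

end Fractals

section HahnMazurkiewicz

variable {X : Type*} [MetricSpace X]

/-- `c` is a walk from `x` to `y` inside `S` with steps shorter than `η`, which rests at `y` from
time `n` on. -/
structure IsWalk (S : Set X) (η : ℝ) (x y : X) (c : ℕ → X) (n : ℕ) : Prop where
  start : c 0 = x
  rest : ∀ j, n ≤ j → c j = y
  mem : ∀ j, c j ∈ S
  step : ∀ j, dist (c j) (c (j + 1)) < η

theorem IsWalk.trans {S : Set X} {η : ℝ} {x y z : X} {c d : ℕ → X} {m n : ℕ}
    (hc : IsWalk S η x y c m) (hd : IsWalk S η y z d n) :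
    IsWalk S η x z (fun j => if j < m then c j else d (j - m)) (m + n) := by
  refine ⟨?_, fun j hj => ?_, fun j => ?_, fun j => ?_⟩
  · rcases Nat.eq_zero_or_pos m with rfl | hm
    · simp [hd.start, ← hc.start, hc.rest 0 le_rfl]
    · simp [hm, hc.start]
  · have : ¬ j < m := by omega
    simp only [this, if_false]
    exact hd.rest _ (by omega)
  · split_ifs
    exacts [hc.mem _, hd.mem _]
  · rcases lt_trichotomy (j + 1) m with h | h | h
    · simp only [h, (by omega : j < m), if_true]
      exact hc.step j
    · have h1 : j < m := by omega
      have h2 : ¬ j + 1 < m := by omega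
      simp only [h1, h2, if_true, if_false]
      have : d (j + 1 - m) = c (j + 1) := by
        rw [hc.rest (j + 1) (by omega), (by omega : j + 1 - m = 0), hd.start]
      rw [this]
      exact hc.step j
    · have h1 : ¬ j < m := by omega
      have h2 : ¬ j + 1 < m := by omega
      simp only [h1, h2, if_false]
      rw [(by omega : j + 1 - m = j - m + 1)]
      exact hd.step _

theorem IsPreconnected.exists_isWalk {S : Set X} (hS : IsPreconnected S) {η : ℝ} (hη : 0 < η)
    {x y : X} (hx : x ∈ S) (hy : y ∈ S) : ∃ c n, IsWalk S η x y c n := by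
  have single : ∀ u ∈ S, ∀ v ∈ S, dist u v < η → ∃ c n, IsWalk S η u v c n := by
    intro u hu v hv huv
    refine ⟨fun j => if j = 0 then u else v, 1, by simp, fun j hj => ?_, fun j => ?_, fun j => ?_⟩
    · rw [if_neg (by omega)]
    · split_ifs <;> assumption
    · rcases Nat.eq_zero_or_pos j with rfl | hj
      · simpa using huv
      · rwa [if_neg (by omega), if_neg (by omega), dist_self]
  refine hS.induction₂' (fun u v => ∃ c n, IsWalk S η u v c n) (fun u hu => ?_) ?_ hx hy
  · filter_upwards [self_mem_nhdsWithin, mem_nhdsWithin_of_mem_nhds (Metric.ball_mem_nhds u hη)]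
      with v hv huv
    exact ⟨single u hu v hv (by rwa [dist_comm]), single v hv u hu huv⟩
  · rintro u v w hu hv hw ⟨c, m, hc⟩ ⟨d, n, hd⟩
    exact ⟨_, _, hc.trans hd⟩

theorem IsPreconnected.exists_isWalk_visiting {S : Set X} (hS : IsPreconnected S) {η : ℝ}
    (hη : 0 < η) {T : Set X} (hT : T.Finite) (hTS : T ⊆ S) {y : X} (hy : y ∈ S) :
    ∀ x ∈ S, ∃ c n, IsWalk S η x y c n ∧ ∀ z ∈ T, ∃ j, c j = z := by
  induction T, hT using Set.Finite.induction_on with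
  | empty =>
    intro x hx
    obtain ⟨c, n, hc⟩ := hS.exists_isWalk hη hx hy
    exact ⟨c, n, hc, by simp⟩
  | @insert z T hz hT ih =>
    intro x hx
    have hzS : z ∈ S := hTS (mem_insert _ _)
    obtain ⟨c, m, hc⟩ := hS.exists_isWalk hη hx hzS
    obtain ⟨d, n, hd, hdT⟩ := ih (fun w hw => hTS (mem_insert_of_mem _ hw)) z hzS
    refine ⟨_, _, hc.trans hd, fun w hw => ?_⟩
    obtain ⟨j, rfl⟩ : ∃ j, d j = w := by
      rcases hw with rfl | hw
      exacts [⟨0, hd.start⟩, hdT w hw]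
    exact ⟨m + j, by simp⟩

theorem IsPreconnected.exists_dense_isWalk [CompactSpace X] {S : Set X} (hS : IsPreconnected S)
    {η : ℝ} (hη : 0 < η) {x y : X} (hx : x ∈ S) (hy : y ∈ S) :
    ∃ c n, IsWalk S η x y c n ∧ ∀ z ∈ S, ∃ j ≤ n, dist z (c j) < η := by
  have hb : TotallyBounded S := isCompact_univ.totallyBounded.subset (subset_univ _)
  obtain ⟨T, hTS, hT, hcov⟩ := totallyBounded_iff_subset.1 hb _ (Metric.dist_mem_uniformity hη)
  obtain ⟨c, n, hc, hv⟩ := hS.exists_isWalk_visiting hη hT hTS hy x hx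
  refine ⟨c, n, hc, fun z hz => ?_⟩
  obtain ⟨w, hw, hzw⟩ := mem_iUnion₂.1 (hcov hz)
  obtain ⟨j, rfl⟩ := hv w hw
  rcases le_total j n with h | h
  · exact ⟨j, h, hzw⟩
  · refine ⟨n, le_rfl, ?_⟩
    rw [hc.rest n le_rfl, ← hc.rest j h]
    exact hzw

theorem exists_ball_subset_connectedComponentIn [CompactSpace X] [LocallyConnectedSpace X]
    {ε : ℝ} (hε : 0 < ε) :
    ∃ δ > 0, δ ≤ ε ∧ ∀ x : X, Metric.ball x δ ⊆ connectedComponentIn (Metric.ball x ε) x := by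
  obtain ⟨δ, hδ, h⟩ := lebesgue_number_lemma_of_metric (s := (univ : Set X)) isCompact_univ
    (c := fun x : X => connectedComponentIn (Metric.ball x (ε / 2)) x)
    (fun x => Metric.isOpen_ball.connectedComponentIn)
    (fun x _ => mem_iUnion.2 ⟨x, mem_connectedComponentIn (Metric.mem_ball_self (half_pos hε))⟩)
  refine ⟨min δ ε, lt_min hδ hε, min_le_right _ _, fun x => ?_⟩
  obtain ⟨i, hi⟩ := h x (mem_univ x)
  have hxi : x ∈ connectedComponentIn (Metric.ball i (ε / 2)) i := hi (Metric.mem_ball_self hδ)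
  refine (Metric.ball_subset_ball (min_le_left _ _)).trans (hi.trans ?_)
  refine isPreconnected_connectedComponentIn.subset_connectedComponentIn hxi ?_
  refine (connectedComponentIn_subset _ _).trans fun y hy => ?_
  have h1 := Metric.mem_ball.1 (connectedComponentIn_subset _ _ hxi)
  have h2 := Metric.mem_ball.1 hy
  rw [Metric.mem_ball]
  linarith [dist_triangle_right y x i]

/-- A walk from `a` to `b` with `N` steps, all shorter than `δ`, that is `δ`-dense. -/
structure IsDenseWalk (a b : X) (δ : ℝ) (p : ℕ × (ℕ → X)) : Prop where
  start : p.2 0 = a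
  rest : ∀ j, p.1 ≤ j → p.2 j = b
  step : ∀ j, dist (p.2 j) (p.2 (j + 1)) < δ
  dense : ∀ z, ∃ j < p.1, dist z (p.2 j) < δ

theorem IsDenseWalk.exists_refinement [CompactSpace X] {a b : X} {δ ε η : ℝ}
    {p : ℕ × (ℕ → X)} (hp : IsDenseWalk a b δ p) (hε : 0 < ε) (hη : 0 < η)
    (hδ : ∀ x : X, Metric.ball x δ ⊆ connectedComponentIn (Metric.ball x ε) x) :
    ∃ q, IsDenseWalk a b η q ∧
      ∃ K > 0, q.1 = p.1 * K ∧ ∀ m, dist (p.2 (m / K)) (q.2 m) < ε := by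
  have key : ∀ i, ∃ c n, IsWalk (connectedComponentIn (Metric.ball (p.2 i) ε) (p.2 i)) η
      (p.2 i) (p.2 (i + 1)) c n ∧
      (i < p.1 → ∀ z ∈ Metric.ball (p.2 i) δ, ∃ j ≤ n, dist z (c j) < η) ∧
      (p.1 ≤ i → (∀ j, c j = b) ∧ n = 0) := by
    intro i
    have hi : p.2 i ∈ connectedComponentIn (Metric.ball (p.2 i) ε) (p.2 i) :=
      mem_connectedComponentIn (Metric.mem_ball_self hε)
    rcases lt_or_ge i p.1 with h | h
    · obtain ⟨c, n, hc, hd⟩ := isPreconnected_connectedComponentIn.exists_dense_isWalk hη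
        hi (hδ _ (Metric.mem_ball'.2 (hp.step i)))
      exact ⟨c, n, hc, fun _ z hz => hd z (hδ _ hz), fun h' => absurd h (not_lt.2 h')⟩
    · rw [hp.rest i h] at hi ⊢
      rw [hp.rest (i + 1) (by omega)]
      exact ⟨fun _ => b, 0, ⟨rfl, fun _ _ => rfl, fun _ => hi, by simpa using hη⟩,
        fun h' => absurd h' (not_lt.2 h), fun _ => ⟨fun _ => rfl, rfl⟩⟩
  choose c n hc hd hr using key
  obtain ⟨K, hK⟩ : ∃ K, ∀ i, n i < K := by
    refine ⟨(Finset.range p.1).sup n + 1, fun i => ?_⟩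
    rcases lt_or_ge i p.1 with h | h
    · exact Nat.lt_succ_of_le (Finset.le_sup (f := n) (Finset.mem_range.2 h))
    · rw [(hr i h).2]
      omega
  have hK0 : 0 < K := (Nat.zero_le _).trans_lt (hK 0)
  refine ⟨(p.1 * K, fun m => c (m / K) (m % K)), ⟨?_, fun j hj => ?_, fun j => ?_, fun z => ?_⟩,
    K, hK0, rfl, fun m => ?_⟩
  · simp [(hc 0).start, hp.start]
  · exact (hr _ ((Nat.le_div_iff_mul_le hK0).2 hj)).1 _
  · dsimp only
    have hlt := Nat.mod_lt j hK0
    rcases lt_or_eq_of_le (Nat.succ_le_of_lt hlt) with h | h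
    · have h1 : (j + 1) / K = j / K := by
        rw [Nat.div_eq_iff hK0]
        have := Nat.div_add_mod' j K
        constructor <;> grind
      have h2 : (j + 1) % K = j % K + 1 := by
        have := Nat.div_add_mod' j K
        have := Nat.div_add_mod' (j + 1) K
        grind
      rw [h1, h2]
      exact (hc _).step _
    · have hd : j + 1 = (j / K + 1) * K := by
        have := Nat.div_add_mod' j K
        grind
      have h1 : (j + 1) / K = j / K + 1 := by rw [hd, Nat.mul_div_cancel _ hK0]
      have h2 : (j + 1) % K = 0 := by rw [hd, Nat.mul_mod_left]
      rw [h1, h2, (hc _).start, ← (hc (j / K)).rest K (hK _).le]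
      have hs := (hc (j / K)).step (j % K)
      rwa [← Nat.succ_eq_add_one, h] at hs
  · obtain ⟨i, hi, hz⟩ := hp.dense z
    obtain ⟨j, hj, hzj⟩ := hd i hi z hz
    have hjK : j < K := hj.trans_lt (hK i)
    refine ⟨i * K + j, ?_, ?_⟩
    · dsimp only
      nlinarith
    · have h1 : (i * K + j) / K = i := by
        rw [mul_comm, Nat.mul_add_div hK0, Nat.div_eq_of_lt hjK, add_zero]
      have h2 : (i * K + j) % K = j := by
        rw [mul_comm, Nat.mul_add_mod, Nat.mod_eq_of_lt hjK]
      simpa only [h1, h2] using hzj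
  · exact Metric.mem_ball'.1 (connectedComponentIn_subset _ _ ((hc (m / K)).mem (m % K)))

theorem exists_seq_of_step {α : Type*} {Q : ℕ → α → Prop} {R : ℕ → α → α → Prop}
    (h0 : ∃ p, Q 0 p) (h : ∀ n p, Q n p → ∃ q, Q (n + 1) q ∧ R n p q) :
    ∃ s : ℕ → α, ∀ n, Q n (s n) ∧ R n (s n) (s (n + 1)) := by
  choose! g hg using h
  obtain ⟨p, hp⟩ := h0
  let s : ℕ → α := fun n => Nat.rec p (fun n q => g n q) n
  have hs : ∀ n, Q n (s n) := by
    intro n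
    induction n with
    | zero => exact hp
    | succ n ih => exact (hg n _ ih).1
  exact ⟨s, fun n => ⟨hs n, (hg n _ (hs n)).2⟩⟩

/-- **Hahn–Mazurkiewicz**: a Peano continuum is the image of an interval, with prescribed
endpoints. -/
theorem exists_continuous_path_onto [CompactSpace X] [ConnectedSpace X]
    [LocallyConnectedSpace X] (a b : X) :
    ∃ φ : ℝ → X, Continuous φ ∧ φ 0 = a ∧ φ 1 = b ∧ φ '' Icc 0 1 = univ := by
  have hpow : ∀ n : ℕ, (0 : ℝ) < 2 / 2 / 2 ^ n := fun n => by positivity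
  choose δ hδ0 hδle hδ using fun n : ℕ =>
    exists_ball_subset_connectedComponentIn (X := X) (hpow n)
  obtain ⟨s, hs⟩ := exists_seq_of_step (Q := fun n p => IsDenseWalk a b (δ n) p)
    (R := fun n p q => ∃ K > 0, q.1 = p.1 * K ∧ ∀ m, dist (p.2 (m / K)) (q.2 m) < 2 / 2 / 2 ^ n)
    (by
      obtain ⟨c, n, hc, hd⟩ := (isPreconnected_univ (α := X)).exists_dense_isWalk (hδ0 0)
        (mem_univ a) (mem_univ b)
      refine ⟨(n + 1, c), hc.start, fun j hj => hc.rest j (by dsimp only at hj; omega), hc.step,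
        fun z => ?_⟩
      obtain ⟨j, hj, hz⟩ := hd z (mem_univ z)
      exact ⟨j, Nat.lt_succ_of_le hj, hz⟩)
    (fun n p hp => hp.exists_refinement (hpow n) (hδ0 _) (hδ n))
  have hN : ∀ n, 0 < (s n).1 := fun n => by
    obtain ⟨j, hj, -⟩ := (hs n).1.dense a
    omega
  let x : ℝ → ℕ → X := fun t n => (s n).2 ⌊t * (s n).1⌋₊
  have hx : ∀ t n, dist (x t n) (x t (n + 1)) ≤ 2 / 2 / 2 ^ n := by
    intro t n
    obtain ⟨K, hK, hq, hd⟩ := (hs n).2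
    have hfl : ⌊t * (s (n + 1)).1⌋₊ / K = ⌊t * (s n).1⌋₊ := by
      rw [← Nat.floor_div_natCast, hq]
      congr 1
      push_cast
      field_simp
    have := hd ⌊t * (s (n + 1)).1⌋₊
    rw [hfl] at this
    exact this.le
  choose φ hφ using fun t => cauchySeq_tendsto_of_complete (cauchySeq_of_le_geometric_two (hx t))
  have hdist : ∀ t n, dist (x t n) (φ t) ≤ 2 / 2 ^ n := fun t n =>
    dist_le_of_le_geometric_two_of_tendsto (hx t) (hφ t) n
  have hsmall : ∀ ε > (0 : ℝ), ∃ n : ℕ, 5 / 2 ^ n < ε := by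
    intro ε hε
    obtain ⟨n, hn⟩ := exists_pow_lt_of_lt_one (show (0 : ℝ) < ε / 5 by positivity)
      (show (1 / 2 : ℝ) < 1 by norm_num)
    refine ⟨n, ?_⟩
    rw [one_div, inv_pow, lt_div_iff₀ (by norm_num)] at hn
    rw [div_eq_inv_mul]
    exact hn
  have hcont : Continuous φ := by
    have step : ∀ n i j, i ≤ j → j ≤ i + 1 → dist ((s n).2 i) ((s n).2 j) ≤ δ n := by
      intro n i j h1 h2
      rcases Nat.eq_or_lt_of_le h1 with rfl | h
      · simpa using (hδ0 n).le
      · obtain rfl : j = i + 1 := by omega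
        exact ((hs n).1.step i).le
    have close : ∀ n (t u : ℝ), t ≤ u → u - t < 1 / (s n).1 → dist (x t n) (x u n) ≤ δ n := by
      intro n t u h1 h2
      have hNr : (0 : ℝ) < (s n).1 := by exact_mod_cast hN n
      refine step n _ _ (Nat.floor_le_floor (by gcongr)) ?_
      rcases le_or_gt (u * (s n).1) 0 with h0 | h0
      · simp [Nat.floor_of_nonpos h0]
      · rw [lt_div_iff₀ hNr] at h2
        have h3 := Nat.lt_floor_add_one (t * (s n).1)
        have h4 := Nat.floor_le h0.le
        have h5 : ((⌊u * (s n).1⌋₊ : ℕ) : ℝ) < ((⌊t * (s n).1⌋₊ + 2 : ℕ) : ℝ) := by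
          push_cast
          nlinarith
        have := Nat.cast_lt.1 h5
        omega
    rw [Metric.continuous_iff]
    intro u ε hε
    obtain ⟨n, hn⟩ := hsmall ε hε
    have hNr : (0 : ℝ) < (s n).1 := by exact_mod_cast hN n
    refine ⟨1 / (s n).1, by positivity, fun t ht => lt_of_le_of_lt ?_ hn⟩
    have h1 : dist (x t n) (x u n) ≤ δ n := by
      rw [Real.dist_eq, abs_lt] at ht
      rcases le_total t u with h | h
      · exact close n t u h (by linarith)
      · rw [dist_comm]
        exact close n u t h (by linarith)
    have h2 := hdist t n
    have h3 := hdist u n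
    have h4 := hδle n
    rw [dist_comm] at h2
    calc dist (φ t) (φ u) ≤ dist (φ t) (x t n) + dist (x t n) (x u n) + dist (x u n) (φ u) :=
          dist_triangle4 _ _ _ _
      _ ≤ 2 / 2 ^ n + 2 / 2 / 2 ^ n + 2 / 2 ^ n := by gcongr; exact h1.trans h4
      _ = 5 / 2 ^ n := by ring
  refine ⟨φ, hcont, ?_, ?_, ?_⟩
  · refine tendsto_nhds_unique (hφ 0) (tendsto_const_nhds.congr fun n => ?_)
    simp [x, (hs n).1.start]
  · refine tendsto_nhds_unique (hφ 1) (tendsto_const_nhds.congr fun n => ?_)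
    simp [x, (hs n).1.rest]
  · have hcl : IsClosed (φ '' Icc 0 1) := (isCompact_Icc.image hcont).isClosed
    refine eq_univ_of_forall fun z => hcl.closure_eq ▸ Metric.mem_closure_iff.2 fun ε hε => ?_
    obtain ⟨n, hn⟩ := hsmall ε hε
    obtain ⟨j, hj, hz⟩ := (hs n).1.dense z
    have hNr : (0 : ℝ) < (s n).1 := by exact_mod_cast hN n
    have hxj : x (j / (s n).1) n = (s n).2 j := by
      change (s n).2 _ = _
      rw [div_mul_cancel₀ _ hNr.ne', Nat.floor_natCast]
    refine ⟨_, mem_image_of_mem φ (x := (j : ℝ) / (s n).1) ⟨by positivity, ?_⟩, ?_⟩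
    · rw [div_le_one hNr]
      exact_mod_cast hj.le
    · have h2 := hdist (j / (s n).1) n
      rw [hxj] at h2
      have h4 := hδle n
      have h6 : (0 : ℝ) < 1 / 2 ^ n := by positivity
      have h7 : (5 : ℝ) / 2 ^ n = 5 * (1 / 2 ^ n) := by ring
      have h8 : (2 : ℝ) / 2 ^ n = 2 * (1 / 2 ^ n) := by ring
      have h9 : (2 : ℝ) / 2 / 2 ^ n = 1 / 2 ^ n := by ring
      linarith [dist_triangle z ((s n).2 j) (φ (j / (s n).1))]

end HahnMazurkiewicz
section Chains

/-- The chain of copies of `X` indexed by `ℕ`, where `b` in each copy is glued to `a` in the next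
one, compactified by one point: a point `x` of the `n`-th copy is encoded as the sequence
`b, …, b, x, a, a, …`, the added point as `b, b, …`. -/
def chainSet {X : Type*} (a b : X) : Set (ℕ → X) :=
  {y | ∀ i j, i < j → y i = b ∨ y j = a}

/-- The first point of the chain. -/
def chainBot {X : Type*} (a b : X) : chainSet a b := ⟨fun _ => a, fun _ _ _ => Or.inr rfl⟩

/-- The point at infinity of the chain. -/
def chainTop {X : Type*} (a b : X) : chainSet a b := ⟨fun _ => b, fun _ _ _ => Or.inl rfl⟩

/-- The inclusion of the `n`-th copy into the chain. -/
def chainLink {X : Type*} (a b : X) (n : ℕ) (x : X) : chainSet a b :=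
  ⟨fun i => if i < n then b else if i = n then x else a, fun i j h => by
    by_cases hi : i < n
    · exact Or.inl (if_pos hi)
    · refine Or.inr ((if_neg ?_).trans (if_neg ?_)) <;> omega⟩

/-- Prepending `b`, which moves the `n`-th copy to the next one. -/
def chainShift {X : Type*} (a b : X) (y : chainSet a b) : chainSet a b :=
  ⟨fun n => Nat.casesOn n b y.1, fun i j h => by
    rcases i with _ | i
    · exact Or.inl rfl
    · rcases j with _ | j
      · omega
      · exact y.2 i j (by omega)⟩

variable {X : Type*} {a b : X}

theorem chainLink_apply_lt {n i : ℕ} (x : X) (h : i < n) : (chainLink a b n x).1 i = b := by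
  simp [chainLink, h]

@[simp]
theorem chainLink_apply_self (n : ℕ) (x : X) : (chainLink a b n x).1 n = x := by
  simp [chainLink]

theorem chainLink_apply_gt {n i : ℕ} (x : X) (h : n < i) : (chainLink a b n x).1 i = a := by
  simp [chainLink, h.ne', h.le]

theorem chainLink_right (n : ℕ) : chainLink a b n b = chainLink a b (n + 1) a := by
  refine Subtype.ext (funext fun i => ?_)
  rcases lt_trichotomy i n with h | rfl | h
  · rw [chainLink_apply_lt _ h, chainLink_apply_lt _ (by omega)]
  · rw [chainLink_apply_self, chainLink_apply_lt _ (by omega)]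
  · rw [chainLink_apply_gt _ h]
    rcases eq_or_ne i (n + 1) with rfl | h'
    · rw [chainLink_apply_self]
    · rw [chainLink_apply_gt _ (by omega)]

theorem eq_chainLink {y : chainSet a b} {n : ℕ} (hlt : ∀ i < n, y.1 i = b) (hb : y.1 n ≠ b) :
    y = chainLink a b n (y.1 n) := by
  refine Subtype.ext (funext fun i => ?_)
  rcases lt_trichotomy i n with h | rfl | h
  · rw [chainLink_apply_lt _ h, hlt i h]
  · rw [chainLink_apply_self]
  · rw [chainLink_apply_gt _ h, (y.2 n i h).resolve_left hb]

theorem chainLink_apply_eq {y : chainSet a b} {n : ℕ} (ha : y.1 n ≠ a) (hb : y.1 n ≠ b) :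
    chainLink a b n (y.1 n) = y :=
  (eq_chainLink (fun i hi => (y.2 i n hi).resolve_right ha) hb).symm

theorem eq_chainTop_or_exists_chainLink (y : chainSet a b) :
    y = chainTop a b ∨ ∃ n x, y = chainLink a b n x := by
  classical
  by_cases h : ∃ n, y.1 n ≠ b
  · exact Or.inr ⟨Nat.find h, _, eq_chainLink
      (fun i hi => not_not.1 (Nat.find_min h hi)) (Nat.find_spec h)⟩
  · push Not at h
    exact Or.inl (Subtype.ext (funext h))

theorem chainShift_iterate_apply_lt {k n : ℕ} (h : n < k) (y : chainSet a b) :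
    ((chainShift a b)^[k] y).1 n = b := by
  induction k generalizing n with
  | zero => omega
  | succ k ih =>
    rw [Function.iterate_succ_apply']
    rcases n with _ | n
    · rfl
    · exact ih (by omega)

theorem chainShift_iterate_apply_add (k n : ℕ) (y : chainSet a b) :
    ((chainShift a b)^[k] y).1 (k + n) = y.1 n := by
  induction k with
  | zero => simp
  | succ k ih =>
    rw [Function.iterate_succ_apply', Nat.add_right_comm]
    exact ih

variable [TopologicalSpace X]

theorem isClosed_chainSet [T1Space X] : IsClosed (chainSet a b) := by
  have : chainSet a b =
      ⋂ (i : ℕ) (j : ℕ) (_ : i < j), {y : ℕ → X | y i ∈ ({b} : Set X)} ∪ {y | y j ∈ ({a} : Set X)} := by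
    ext y
    simp [chainSet]
  rw [this]
  exact isClosed_iInter fun i => isClosed_iInter fun j => isClosed_iInter fun _ =>
    (isClosed_singleton.preimage (continuous_apply i)).union
      (isClosed_singleton.preimage (continuous_apply j))

instance [T1Space X] [CompactSpace X] : CompactSpace (chainSet a b) :=
  isCompact_iff_compactSpace.1 isClosed_chainSet.isCompact

theorem continuous_chain_apply (n : ℕ) : Continuous fun y : chainSet a b => y.1 n :=
  (continuous_apply n).comp continuous_subtype_val

theorem continuous_chainLink (n : ℕ) : Continuous (chainLink a b n) := by
  refine Continuous.subtype_mk (continuous_pi fun i => ?_) _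
  split_ifs
  exacts [continuous_const, continuous_id, continuous_const]

theorem continuous_chainShift : Continuous (chainShift a b) := by
  refine Continuous.subtype_mk (continuous_pi fun i => ?_) _
  rcases i with _ | i
  exacts [continuous_const, continuous_chain_apply i]

instance [ConnectedSpace X] : ConnectedSpace (chainSet a b) := by
  have hpre : IsPreconnected (⋃ n, range (chainLink a b n)) :=
    IsPreconnected.iUnion_of_chain (fun n => isPreconnected_range (continuous_chainLink n))
      fun n => ⟨chainLink a b n b, mem_range_self _, ⟨a, (chainLink_right n).symm⟩⟩
  have hdense : closure (⋃ n, range (chainLink a b n)) = univ := by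
    refine eq_univ_of_forall fun y => ?_
    rcases eq_chainTop_or_exists_chainLink y with rfl | ⟨n, x, rfl⟩
    · refine mem_closure_of_tendsto (f := fun n => chainLink a b n b) (b := atTop) ?_
        (Eventually.of_forall fun n => mem_iUnion.2 ⟨n, mem_range_self _⟩)
      rw [tendsto_subtype_rng, tendsto_pi_nhds]
      intro i
      refine tendsto_const_nhds.congr' ?_
      filter_upwards [eventually_gt_atTop i] with n hn
      exact (chainLink_apply_lt b hn).symm
    · exact subset_closure (mem_iUnion.2 ⟨n, mem_range_self _⟩)
  exact { isPreconnected_univ := hdense ▸ hpre.closure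
          toNonempty := ⟨chainTop a b⟩ }

end Chains

section Shrinking

/-- Long compositions of the maps `s` and `f`, followed by `u`, have images of order `V`. -/
def Shrinks {Y Z : Type*} (s f : Y → Y) (V : Set (Z × Z)) (u : Y → Z) : Prop :=
  ∃ k, ∀ l : List (Y → Y), (∀ g ∈ l, g ∈ ({s, f} : Set (Y → Y))) → k ≤ l.length →
    ∀ y y', (u (l.foldr (· ∘ ·) id y), u (l.foldr (· ∘ ·) id y')) ∈ V

variable {Y Z : Type*} {s f : Y → Y} {V : Set (Z × Z)} {u : Y → Z}

theorem Shrinks.of_forall_mem (h : ∀ y y', (u y, u y') ∈ V) : Shrinks s f V u :=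
  ⟨0, fun _ _ _ _ _ => h _ _⟩

theorem Shrinks.of_comp (hs : Shrinks s f V (u ∘ s)) (hf : Shrinks s f V (u ∘ f)) :
    Shrinks s f V u := by
  obtain ⟨k, hk⟩ := hs
  obtain ⟨m, hm⟩ := hf
  refine ⟨max k m + 1, fun l hl hlen y y' => ?_⟩
  rcases l with _ | ⟨g, l⟩
  · simp at hlen
  · rw [List.forall_mem_cons] at hl
    rw [List.length_cons, Nat.add_le_add_iff_right, max_le_iff] at hlen
    rcases hl.1 with rfl | rfl
    · exact hk l hl.2 hlen.1 y y'
    · exact hm l hl.2 hlen.2 y y'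

theorem Shrinks.of_iterate (n : ℕ) (hn : Shrinks s f V (u ∘ s^[n]))
    (h : ∀ j < n, Shrinks s f V (u ∘ s^[j] ∘ f)) : Shrinks s f V u := by
  induction n generalizing u with
  | zero => exact hn
  | succ n ih =>
    refine .of_comp (ih ?_ fun j hj => ?_) (h 0 (by omega))
    · rwa [Function.comp_assoc, ← Function.iterate_succ']
    · have := h (j + 1) (by omega)
      rwa [Function.iterate_succ'] at this

theorem shrinks_id_of_shrinks_apply {X : Type*} [UniformSpace X] {a b : X}
    {s f : chainSet (chainBot a b) (chainTop a b) → chainSet (chainBot a b) (chainTop a b)}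
    (h : ∀ p q, ∀ V ∈ uniformity X, Shrinks s f V fun y => (y.1 p).1 q) :
    ∀ V ∈ uniformity (chainSet (chainBot a b) (chainTop a b)), Shrinks s f V id := by
  let Y := chainSet (chainBot a b) (chainTop a b)
  let E : ℕ → Set (Y × Y) := fun k => {P | ∃ l : List (Y → Y),
    (∀ g ∈ l, g ∈ ({s, f} : Set (Y → Y))) ∧ k ≤ l.length ∧
      P.1 ∈ range (l.foldr (· ∘ ·) id) ∧ P.2 ∈ range (l.foldr (· ∘ ·) id)}
  have hE : Antitone E := by
    rintro k m hkm P ⟨l, h1, h2, h3⟩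
    exact ⟨l, h1, hkm.trans h2, h3⟩
  have hmem : ∀ V : Set (Y × Y), V ∈ (⨅ k, 𝓟 (E k)) ↔ ∃ k, E k ⊆ V := fun V => by
    rw [mem_iInf_of_directed (f := fun k => 𝓟 (E k))
      (Antitone.directed_ge fun k m h => principal_mono.2 (hE h))]
    simp only [mem_principal]
  have hle : (⨅ k, 𝓟 (E k)) ≤ uniformity Y := by
    rw [uniformity_subtype, ← tendsto_iff_comap, Pi.uniformity, tendsto_iInf]
    intro p
    rw [tendsto_comap_iff, uniformity_subtype, tendsto_comap_iff, Pi.uniformity, tendsto_iInf]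
    intro q
    rw [tendsto_comap_iff]
    intro V hV
    obtain ⟨k, hk⟩ := h p q V hV
    refine (hmem _).2 ⟨k, ?_⟩
    rintro ⟨_, _⟩ ⟨l, h1, h2, ⟨y, rfl⟩, ⟨y', rfl⟩⟩
    exact hk l h1 h2 y y'
  intro V hV
  obtain ⟨k, hk⟩ := (hmem V).1 (hle hV)
  exact ⟨k, fun l hl hlen y y' => hk ⟨l, hl, hlen, mem_range_self _, mem_range_self _⟩⟩

end Shrinking

section ChainMaps

variable {X : Type*} {a b : X} {t : X → ℝ}

/-- The average of `t` over the `N` coordinates following the `m`-th one. -/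
noncomputable def chainMean (t : X → ℝ) (m N : ℕ) (z : chainSet a b) : ℝ :=
  (∑ j ∈ Finset.range N, t (z.1 (m + 1 + j))) / N

theorem continuous_chainMean [TopologicalSpace X] (ht : Continuous t) (m N : ℕ) :
    Continuous (chainMean (a := a) (b := b) t m N) :=
  (continuous_finsetSum _ fun _ _ => ht.comp (continuous_chain_apply _)).div_const _

theorem chainMean_mem_Icc (ht : ∀ x, t x ∈ Icc (0 : ℝ) 1) (m N : ℕ) (z : chainSet a b) :
    chainMean t m N z ∈ Icc (0 : ℝ) 1 := by
  refine ⟨div_nonneg (Finset.sum_nonneg fun _ _ => (ht _).1) N.cast_nonneg,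
    div_le_one_of_le₀ ?_ N.cast_nonneg⟩
  simpa using Finset.sum_le_sum fun j (_ : j ∈ Finset.range N) => (ht (z.1 (m + 1 + j))).2

theorem chainMean_eq_zero (ha : t a = 0) {m N : ℕ} {z : chainSet a b}
    (h : ∀ i, m < i → z.1 i = a) : chainMean t m N z = 0 := by
  have : ∀ j, z.1 (m + 1 + j) = a := fun j => h _ (by omega)
  simp [chainMean, this, ha]

theorem chainMean_eq_one (hb : t b = 1) {m N : ℕ} (hN : N ≠ 0) {z : chainSet a b}
    (h : ∀ i ≤ m + N, z.1 i = b) : chainMean t m N z = 1 := by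
  have : ∑ j ∈ Finset.range N, t (z.1 (m + 1 + j)) = N := by
    rw [Finset.sum_congr rfl fun j hj => by
      rw [h _ (by have := Finset.mem_range.1 hj; omega), hb]]
    simp
  rw [chainMean, this, div_self (by exact_mod_cast hN)]

theorem abs_chainMean_chainLink_sub_le (m N n : ℕ) (x y : X) :
    |chainMean t m N (chainLink a b n x) - chainMean t m N (chainLink a b n y)| ≤
      |t x - t y| / N := by
  rw [chainMean, chainMean, ← sub_div, abs_div, Nat.abs_cast, ← Finset.sum_sub_distrib]
  refine div_le_div_of_nonneg_right ?_ N.cast_nonneg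
  by_cases hmn : m < n
  · obtain ⟨k, rfl⟩ := Nat.exists_eq_add_of_lt hmn
    have : ∀ j, t ((chainLink a b (m + k + 1) x).1 (m + 1 + j)) -
        t ((chainLink a b (m + k + 1) y).1 (m + 1 + j)) = if k = j then t x - t y else 0 := by
      intro j
      rcases lt_trichotomy j k with h | rfl | h
      · rw [chainLink_apply_lt _ (by omega), chainLink_apply_lt _ (by omega), if_neg h.ne',
          sub_self]
      · rw [add_right_comm m j 1, chainLink_apply_self, chainLink_apply_self, if_pos rfl]
      · rw [chainLink_apply_gt _ (by omega), chainLink_apply_gt _ (by omega), if_neg h.ne,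
          sub_self]
    simp only [this, Finset.sum_ite_eq]
    split_ifs
    · rfl
    · simp
  · have : ∀ j, t ((chainLink a b n x).1 (m + 1 + j)) -
        t ((chainLink a b n y).1 (m + 1 + j)) = 0 := fun j => by
      rw [chainLink_apply_gt _ (by omega), chainLink_apply_gt _ (by omega), sub_self]
    simp [this]

/-- Compositions of at most `r` maps from `M`. -/
def compositions (M : Set (X → X)) : ℕ → Set (X → X)
  | 0 => {id}
  | r + 1 => compositions M r ∪ image2 (· ∘ ·) (compositions M r) M

theorem monotone_compositions (M : Set (X → X)) : Monotone (compositions M) :=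
  monotone_nat_of_le_succ fun _ => subset_union_left

theorem exists_dist_lt_of_mem_compositions [MetricSpace X] {M : Set (X → X)}
    (hM : ∀ ε > 0, ∃ δ > 0, ∀ β ∈ M, ∀ x y, dist x y < δ → dist (β x) (β y) < ε) (r : ℕ) :
    ∀ ε > 0, ∃ δ > 0, ∀ β ∈ compositions M r, ∀ x y, dist x y < δ → dist (β x) (β y) < ε := by
  induction r with
  | zero =>
    rintro ε hε
    refine ⟨ε, hε, ?_⟩
    rintro _ rfl x y h
    exact h
  | succ r ih =>
    intro ε hε
    obtain ⟨δ, hδ, h⟩ := ih ε hε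
    obtain ⟨η, hη, h'⟩ := hM δ hδ
    refine ⟨min δ η, lt_min hδ hη, ?_⟩
    rintro _ (hβ | ⟨β, hβ, γ, hγ, rfl⟩) x y hxy
    · exact h _ hβ x y (hxy.trans_le (min_le_left _ _))
    · exact h β hβ _ _ (h' γ hγ x y (hxy.trans_le (min_le_right _ _)))

/-- The images of the chain over `X` under suitable maps to `X` shrink the links more and more,
even after composing with boundedly many of these maps. -/
theorem exists_chain_maps [MetricSpace X] [CompactSpace X] [ConnectedSpace X]
    [LocallyConnectedSpace X] (hab : a ≠ b) :
    ∃ (h : ℕ → chainSet a b → X) (L : ℕ → ℕ) (C : ℕ → Set (X → X)),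
      (∀ m, Continuous (h m)) ∧ (∀ m, Function.Surjective (h m)) ∧
      (∀ m z, (∀ i, m < i → z.1 i = a) → h m z = a) ∧
      (∀ m z, (∀ i ≤ L m, z.1 i = b) → h m z = b) ∧
      Monotone C ∧ (∀ m, id ∈ C m) ∧
      (∀ m, ∀ β ∈ C m, ∀ n, (fun x => β (h m (chainLink a b n x))) ∈ C (m + 1)) ∧
      (∀ m : ℕ, ∀ β ∈ C m, ∀ n x y,
        dist (β (h m (chainLink a b n x))) (β (h m (chainLink a b n y))) < 1 / ((m : ℝ) + 1)) := by
  obtain ⟨φ, hφ, hφa, hφb, hφs⟩ := exists_continuous_path_onto a b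
  obtain ⟨t, hta, htb, htI⟩ := exists_continuous_zero_one_of_isClosed
    (isClosed_singleton (x := a)) (isClosed_singleton (x := b)) (by simpa using hab)
  replace hta : t a = 0 := hta rfl
  replace htb : t b = 1 := htb rfl
  let M : Set (X → X) := {β | ∃ u : X → ℝ, (∀ x, u x ∈ Icc (0 : ℝ) 1) ∧
    (∀ x y, |u x - u y| ≤ |t x - t y|) ∧ β = φ ∘ u}
  have hφu : ∀ ε > 0, ∃ δ > 0, ∀ u ∈ Icc (0 : ℝ) 1, ∀ v ∈ Icc (0 : ℝ) 1, |u - v| < δ →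
      dist (φ u) (φ v) < ε := by
    intro ε hε
    obtain ⟨δ, hδ, h⟩ := Metric.uniformContinuousOn_iff.1
      (isCompact_Icc.uniformContinuousOn_of_continuous (hφ.continuousOn (s := Icc (0 : ℝ) 1))) ε hε
    exact ⟨δ, hδ, fun u hu v hv huv => h u hu v hv huv⟩
  have hM : ∀ ε > 0, ∃ δ > 0, ∀ β ∈ M, ∀ x y, dist x y < δ → dist (β x) (β y) < ε := by
    intro ε hε
    obtain ⟨δ, hδ, h⟩ := hφu ε hε
    obtain ⟨η, hη, ht⟩ := Metric.uniformContinuous_iff.1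
      (CompactSpace.uniformContinuous_of_continuous t.continuous) δ hδ
    refine ⟨η, hη, ?_⟩
    rintro _ ⟨u, hu, hut, rfl⟩ x y hxy
    exact h _ (hu x) _ (hu y) ((hut x y).trans_lt (ht hxy))
  have hN : ∀ m : ℕ, ∃ N : ℕ, N ≠ 0 ∧ ∀ β ∈ compositions M m, ∀ u ∈ Icc (0 : ℝ) 1,
      ∀ v ∈ Icc (0 : ℝ) 1, |u - v| ≤ 1 / N → dist (β (φ u)) (β (φ v)) < 1 / ((m : ℝ) + 1) := by
    intro m
    obtain ⟨δ, hδ, h⟩ := exists_dist_lt_of_mem_compositions hM m _ (Nat.one_div_pos_of_nat (n := m))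
    obtain ⟨η, hη, h'⟩ := hφu δ hδ
    obtain ⟨N, hN⟩ := exists_nat_one_div_lt hη
    refine ⟨N + 1, N.succ_ne_zero, fun β hβ u hu v hv huv => h β hβ _ _ (h' u hu v hv ?_)⟩
    exact huv.trans_lt (by exact_mod_cast hN)
  choose N hN0 hN using hN
  have hmean : ∀ m (z : chainSet a b), chainMean t m (N m) z ∈ Icc (0 : ℝ) 1 := fun m z =>
    chainMean_mem_Icc htI m (N m) z
  have habs : ∀ x y, |t x - t y| ≤ 1 := fun x y => abs_sub_le_iff.2
    ⟨by linarith [(htI x).2, (htI y).1], by linarith [(htI y).2, (htI x).1]⟩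
  have hcont : ∀ m, Continuous (chainMean (a := a) (b := b) t m (N m)) := fun m =>
    continuous_chainMean t.continuous m (N m)
  refine ⟨fun m z => φ (chainMean t m (N m) z), fun m => m + N m, compositions M,
    fun m => hφ.comp (hcont m), fun m x => ?_, fun m z hz => ?_, fun m z hz => ?_,
    monotone_compositions M, fun m => monotone_compositions M m.zero_le rfl,
    fun m β hβ n => ?_, fun m β hβ n x y => ?_⟩
  · obtain ⟨u, hu, rfl⟩ := hφs.symm ▸ mem_univ x
    obtain ⟨z, hz⟩ := intermediate_value_univ (chainBot a b) (chainTop a b) (hcont m)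
      (show u ∈ _ by rwa [chainMean_eq_zero hta fun _ _ => rfl,
        chainMean_eq_one htb (hN0 m) fun _ _ => rfl])
    exact ⟨z, congrArg φ hz⟩
  · exact (congrArg φ (chainMean_eq_zero hta hz)).trans hφa
  · exact (congrArg φ (chainMean_eq_one htb (hN0 m) hz)).trans hφb
  · refine Or.inr ⟨β, hβ, _, ⟨fun x => chainMean t m (N m) (chainLink a b n x),
      fun x => hmean m _, fun x y => ?_, rfl⟩, rfl⟩
    refine (abs_chainMean_chainLink_sub_le m (N m) n x y).trans (div_le_self (abs_nonneg _) ?_)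
    exact_mod_cast Nat.one_le_iff_ne_zero.2 (hN0 m)
  · refine hN m β hβ _ (hmean m _) _ (hmean m _)
      ((abs_chainMean_chainLink_sub_le m (N m) n x y).trans ?_)
    gcongr
    exact habs x y

end ChainMaps

section ChainFractal

/-- The map between chains induced by maps between the links that preserve the two ends. -/
def chainMap {X Z : Type*} {a b : X} {c d : Z} (h : ℕ → Z → X) (ha : ∀ n, h n c = a)
    (hb : ∀ n, h n d = b) (y : chainSet c d) : chainSet a b :=
  ⟨fun n => h n (y.1 n), fun i j hij => (y.2 i j hij).imp
    (fun hi => (congrArg (h i) hi).trans (hb i)) fun hj => (congrArg (h j) hj).trans (ha j)⟩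

variable {X Z : Type*} {a b : X} {c d : Z} {h : ℕ → Z → X} {ha : ∀ n, h n c = a}
  {hb : ∀ n, h n d = b}

theorem chainMap_chainLink (n : ℕ) (z : Z) :
    chainMap h ha hb (chainLink c d n z) = chainLink a b n (h n z) := by
  refine Subtype.ext (funext fun i => ?_)
  change h i _ = _
  rcases lt_trichotomy i n with hi | rfl | hi
  · rw [chainLink_apply_lt _ hi, chainLink_apply_lt _ hi, hb]
  · rw [chainLink_apply_self, chainLink_apply_self]
  · rw [chainLink_apply_gt _ hi, chainLink_apply_gt _ hi, ha]

theorem continuous_chainMap [TopologicalSpace X] [TopologicalSpace Z]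
    (hh : ∀ n, Continuous (h n)) : Continuous (chainMap h ha hb) :=
  Continuous.subtype_mk (continuous_pi fun n => (hh n).comp (continuous_chain_apply n)) _

theorem surjective_chainMap (hh : ∀ n, Function.Surjective (h n)) :
    Function.Surjective (chainMap h ha hb) := by
  intro y
  rcases eq_chainTop_or_exists_chainLink y with rfl | ⟨n, x, rfl⟩
  · exact ⟨chainTop c d, Subtype.ext (funext hb)⟩
  · obtain ⟨z, rfl⟩ := hh n x
    exact ⟨chainLink c d n z, chainMap_chainLink n z⟩

theorem chainShift_iterate_chainLink (j n : ℕ) (x : X) :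
    (chainShift a b)^[j] (chainLink a b n x) = chainLink a b (j + n) x := by
  refine Subtype.ext (funext fun i => ?_)
  rcases lt_or_ge i j with hi | hi
  · rw [chainShift_iterate_apply_lt hi, chainLink_apply_lt _ (by omega)]
  · obtain ⟨i, rfl⟩ := Nat.exists_eq_add_of_le hi
    rw [chainShift_iterate_apply_add]
    rcases lt_trichotomy i n with h | rfl | h
    · rw [chainLink_apply_lt _ h, chainLink_apply_lt _ (by omega)]
    · rw [chainLink_apply_self, chainLink_apply_self]
    · rw [chainLink_apply_gt _ h, chainLink_apply_gt _ (by omega)]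

theorem range_chainShift_union_range_chainLink_zero :
    range (chainShift a b) ∪ range (chainLink a b 0) = univ := by
  refine eq_univ_of_forall fun y => ?_
  by_cases hy : y.1 0 = b
  · refine Or.inl ⟨⟨fun n => y.1 (n + 1), fun i j hij => y.2 _ _ (by omega)⟩, ?_⟩
    refine Subtype.ext (funext fun n => ?_)
    rcases n with _ | n
    exacts [hy.symm, rfl]
  · exact Or.inr ⟨_, (eq_chainLink (by simp) hy).symm⟩

/-- Iterating the chain construction twice turns a nondegenerate Peano continuum into a
topological fractal. -/
theorem exists_shrinks_chainSet_chainSet [MetricSpace X] [CompactSpace X] [ConnectedSpace X]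
    [LocallyConnectedSpace X] (hab : a ≠ b) :
    ∃ s f : chainSet (chainBot a b) (chainTop a b) → chainSet (chainBot a b) (chainTop a b),
      Continuous s ∧ Continuous f ∧ range s ∪ range f = univ ∧
      ∀ V ∈ uniformity (chainSet (chainBot a b) (chainTop a b)), Shrinks s f V id := by
  obtain ⟨h, L, C, hcont, hsurj, ha, hb, hmono, hid, hcomp, hdist⟩ := exists_chain_maps hab
  have hbot : ∀ n, h n (chainBot a b) = a := fun n => ha n _ fun _ _ => rfl
  have htop : ∀ n, h n (chainTop a b) = b := fun n => hb n _ fun _ _ => rfl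
  set G : chainSet (chainBot a b) (chainTop a b) → chainSet a b := chainMap h hbot htop with hG
  set s := chainShift (chainBot a b) (chainTop a b) with hs
  set f : chainSet (chainBot a b) (chainTop a b) → chainSet (chainBot a b) (chainTop a b) :=
    fun y => chainLink _ _ 0 (G y) with hf
  have hsf : ∀ j y, s^[j] (f y) = chainLink _ _ j (G y) := fun j y =>
    chainShift_iterate_chainLink j 0 _
  have hGsf : ∀ j y, G (s^[j] (f y)) = chainLink a b j (h j (G y)) := fun j y => by
    rw [hsf, hG, chainMap_chainLink]
  have hGs : ∀ n y, ∀ i < n, (G (s^[n] y)).1 i = b := fun n y i hi => by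
    change h i ((s^[n] y).1 i) = b
    rw [chainShift_iterate_apply_lt hi, htop]
  refine ⟨s, f, continuous_chainShift, (continuous_chainLink 0).comp (continuous_chainMap hcont),
    ?_, shrinks_id_of_shrinks_apply fun p q V hV => ?_⟩
  · rw [← range_chainShift_union_range_chainLink_zero, hf,
      ← (surjective_chainMap hsurj : Function.Surjective G).range_comp]
    rfl
  have hconst : ∀ {u : chainSet (chainBot a b) (chainTop a b) → X} (x : X), (∀ y, u y = x) →
      Shrinks s f V u := fun x hu => .of_forall_mem fun y y' => by
    rw [hu, hu]
    exact refl_mem_uniformity hV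
  obtain ⟨ε, hε, hεV⟩ := Metric.mem_uniformity_dist.1 hV
  obtain ⟨Q, hQ⟩ := exists_nat_one_div_lt hε
  have hGh : ∀ e m, Q ≤ m + e → ∀ β ∈ C m, Shrinks s f V fun y => β (h m (G y)) := by
    intro e
    induction e with
    | zero =>
      intro m hm β hβ
      refine .of_iterate (L m + 1) (hconst (β b) fun y => ?_) fun j _ =>
        .of_forall_mem fun y y' => hεV ?_
      · exact congrArg β (hb m _ fun i hi => hGs _ y i (by omega))
      · simp only [Function.comp_apply, hGsf]
        refine (hdist m β hβ j _ _).trans (lt_of_le_of_lt ?_ hQ)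
        have : (Q : ℝ) ≤ m := by exact_mod_cast hm
        gcongr
    | succ e ih =>
      intro m hm β hβ
      refine .of_iterate (L m + 1) (hconst (β b) fun y => ?_) fun j _ => ?_
      · exact congrArg β (hb m _ fun i hi => hGs _ y i (by omega))
      · rcases le_or_gt j m with hj | hj
        · refine hconst (β a) fun y => congrArg β (ha m _ fun i hi => ?_)
          rw [Function.comp_apply, hGsf, chainLink_apply_gt _ (by omega)]
        · have := ih j (by omega) _ (hmono hj (hcomp m β hβ j))
          simpa only [Function.comp_def, hGsf] using this
  have hGapply : ∀ m, Shrinks s f V fun y => (G y).1 m := fun m => by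
    refine .of_iterate (m + 1) (hconst b fun y => hGs _ y m (by omega)) fun j hj => ?_
    rcases (Nat.lt_succ_iff.1 hj).eq_or_lt with rfl | hj
    · simpa only [Function.comp_def, hGsf, chainLink_apply_self, id] using
        hGh Q j (by omega) id (hid j)
    · refine hconst a fun y => ?_
      rw [Function.comp_apply, Function.comp_apply, hGsf, chainLink_apply_gt _ hj]
  refine .of_iterate (p + 1) (hconst b fun y => ?_) fun j hj => ?_
  · rw [Function.comp_apply, chainShift_iterate_apply_lt (by omega)]
    rfl
  · rcases (Nat.lt_succ_iff.1 hj).eq_or_lt with rfl | hj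
    · simpa only [Function.comp_def, hsf, chainLink_apply_self] using hGapply q
    · refine hconst a fun y => ?_
      rw [Function.comp_apply, Function.comp_apply, hsf, chainLink_apply_gt _ hj]
      rfl

/-- A nondegenerate Peano continuum is covered by retractions of a topological fractal which are
injective outside the preimages of two points. -/
theorem exists_isTopFractal_retractions {X : Type} [MetricSpace X] [CompactSpace X]
    [ConnectedSpace X] [LocallyConnectedSpace X] {a b : X} (hab : a ≠ b) :
    ∃ (Y : Type) (_ : MetricSpace Y) (_ : CompactSpace Y) (_ : ConnectedSpace Y)
      (_ : Nontrivial Y) (r : ℕ × ℕ → Y → X) (e : ℕ × ℕ → X → Y), IsTopFractal Y ∧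
      (∀ i, Continuous (r i)) ∧ (∀ i, Continuous (e i)) ∧
      (∀ i, Function.LeftInverse (r i) (e i)) ∧
      (∀ i y, r i y ≠ a → r i y ≠ b → e i (r i y) = y) ∧
      ∀ y y', (∀ i, r i y = r i y') → y = y' := by
  obtain ⟨s, f, hs, hf, hcov, hshr⟩ := exists_shrinks_chainSet_chainSet hab
  let _ := UniformSpace.metricSpace (chainSet (chainBot a b) (chainTop a b))
  refine ⟨chainSet (chainBot a b) (chainTop a b), inferInstance, inferInstance, inferInstance,
    ⟨chainBot _ _, chainTop _ _, fun h => hab ?_⟩, fun i y => (y.1 i.1).1 i.2,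
    fun i x => chainLink _ _ i.1 (chainLink _ _ i.2 x),
    ⟨{s, f}, by simp, by simp [hs, hf], fun ε hε => ?_, by simpa using hcov⟩,
    fun i => (continuous_chain_apply _).comp (continuous_chain_apply _),
    fun i => (continuous_chainLink _).comp (continuous_chainLink _), fun i x => by simp,
    fun i y hya hyb => ?_, fun y y' h => ?_⟩
  · exact congrArg (fun y => (y.1 0).1 0) h
  · obtain ⟨k, hk⟩ := hshr _ (Metric.dist_mem_uniformity (half_pos hε))
    exact ⟨k, fun l hl hlen => diam_range_lt_of_dist_le hε fun y y' =>
      (hk l hl hlen.ge y y').le⟩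
  · change chainLink _ _ i.1 (chainLink a b i.2 ((y.1 i.1).1 i.2)) = y
    rw [chainLink_apply_eq hya hyb]
    refine chainLink_apply_eq (fun h => hya ?_) fun h => hyb ?_
    · change (y.1 i.1).1 i.2 = a
      rw [h]
      rfl
    · change (y.1 i.1).1 i.2 = b
      rw [h]
      rfl
  · exact Subtype.ext (funext fun p => Subtype.ext (funext fun q => h (p, q)))

end ChainFractal

section Transfer

theorem exists_apply_notMem_of_isOpen {Y X ι : Type*} [TopologicalSpace Y] [T1Space Y]
    [ConnectedSpace Y] [LocallyConnectedSpace Y] [Nontrivial Y] [MetricSpace X]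
    {r : ι → Y → X} (hr : ∀ i, Continuous (r i)) (hsep : ∀ y y', (∀ i, r i y = r i y') → y = y')
    {F : Set X} (hF : F.Finite) {U : Set Y} (hU : IsOpen U) (hne : U.Nonempty) :
    ∃ y ∈ U, ∃ i, r i y ∉ F := by
  by_contra! h
  obtain ⟨w, hw⟩ := hne
  have hsub : (connectedComponentIn U w).Subsingleton := fun y hy y' hy' =>
    hsep y y' fun i => hF.countable.isTotallyDisconnected _
      (image_subset_iff.2 fun z hz => h z (connectedComponentIn_subset _ _ hz) i)
      (isPreconnected_connectedComponentIn.image _ (hr i).continuousOn)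
      (mem_image_of_mem _ hy) (mem_image_of_mem _ hy')
  exact infinite_of_mem_nhds w (hU.connectedComponentIn.mem_nhds (mem_connectedComponentIn hw))
    hsub.finite

/-- The image of a self-regenerating continuum with nonempty interior under a retraction which is
injective over the complement of a finite set. -/
theorem SelfRegenFractal.image_retraction {Y X : Type*} [MetricSpace Y] [MetricSpace X]
    [ConnectedSpace X] [Nontrivial X] {C : Set Y} (hC : IsCompact C) (hconn : IsConnected C)
    (hreg : SelfRegenFractal C) {r : Y → X} {e : X → Y} (hr : Continuous r) (he : Continuous e)
    (hre : Function.LeftInverse r e) {F : Set X} (hF : F.Finite)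
    (her : ∀ y, r y ∉ F → e (r y) = y) {y : Y} (hy : y ∈ interior C) (hyF : r y ∉ F) :
    SelfRegenFractal (r '' C) ∧ (interior (r '' C)).Nonempty := by
  have hO : IsOpen (e ⁻¹' interior C) := isOpen_interior.preimage he
  have hyO : r y ∈ e ⁻¹' interior C := by rwa [mem_preimage, her y hyF]
  have hOB : e ⁻¹' interior C ⊆ r '' C := fun x hx => ⟨e x, interior_subset hx, hre x⟩
  refine ⟨?_, r y, mem_interior.2 ⟨_, hOB, hO, hyO⟩⟩
  have : CompactSpace C := isCompact_iff_compactSpace.1 hC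
  have : ConnectedSpace (r '' C) :=
    isConnected_iff_connectedSpace.1 (hconn.image r hr.continuousOn)
  have : Nontrivial (r '' C) :=
    ((infinite_of_mem_nhds _ (hO.mem_nhds hyO)).mono hOB).nontrivial.coe_sort
  set K : Set (r '' C) := Subtype.val ⁻¹' F with hK
  have hKfin : K.Finite := hF.preimage Subtype.val_injective.injOn
  have hdense : Dense Kᶜ := by
    rw [compl_eq_univ_sdiff]
    exact dense_univ.sdiff_finite hKfin
  have heC : ∀ x : r '' C, e x ∈ C := by
    have hcl : IsClosed {x : r '' C | e x ∈ C} :=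
      hC.isClosed.preimage (he.comp continuous_subtype_val)
    refine fun x => hcl.closure_subset_iff.2 ?_ (hdense x)
    rintro ⟨_, z, hz, rfl⟩ hx
    change e (r z) ∈ C
    rwa [her z hx]
  exact hreg.of_retraction (r := fun z => ⟨r z, mem_image_of_mem r z.2⟩)
    (e := fun x => ⟨e x, heC x⟩) (by fun_prop) (by fun_prop) (fun x => Subtype.ext (hre x))
    hKfin.isClosed (interior_eq_empty_iff_dense_compl.2 hdense)
    fun z hz => Subtype.ext (her z hz)

end Transfer

/-- The following are equivalent:
(1) every Peano continuum which is a topological fractal contains a (compact)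
self-regenerating fractal with nonempty interior;
(2) every Peano continuum contains a Peano self-regenerating fractal with nonempty
interior. -/
theorem selfRegenerating_in_fractals_iff_in_all_peano_continua :
    (∀ (X : Type) [MetricSpace X] [CompactSpace X] [ConnectedSpace X]
        [LocallyConnectedSpace X] [Nonempty X],
      IsTopFractal X →
        ∃ R : Set X, IsCompact R ∧ SelfRegenFractal R ∧ (interior R).Nonempty) ↔
    (∀ (X : Type) [MetricSpace X] [CompactSpace X] [ConnectedSpace X]
        [LocallyConnectedSpace X] [Nonempty X],
      ∃ R : Set X, IsCompact R ∧ SelfRegenFractal R ∧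
        IsConnected R ∧ LocallyConnectedSpace R ∧ (interior R).Nonempty) := by
  constructor
  · intro H X _ _ _ _ _
    rcases subsingleton_or_nontrivial X with hX | hX
    · exact ⟨univ, isCompact_univ, .of_subsingleton, isConnected_univ,
        SelfRegenFractal.of_subsingleton.isTopFractal.locallyConnectedSpace, by simp⟩
    obtain ⟨a, b, hab⟩ := exists_pair_ne X
    obtain ⟨Y, _, _, _, _, r, e, hY, hr, he, hre, her, hsep⟩ := exists_isTopFractal_retractions hab
    have := hY.locallyConnectedSpace
    obtain ⟨R, hR, hreg, hint⟩ := H Y hY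
    obtain ⟨C, hC, hconn, hreg, hint⟩ := hreg.exists_isConnected hR hint
    have hF : ({a, b} : Set X).Finite := toFinite _
    obtain ⟨y, hy, i, hi⟩ := exists_apply_notMem_of_isOpen hr hsep hF isOpen_interior hint
    have her : ∀ z, r i z ∉ ({a, b} : Set X) → e i (r i z) = z := fun z hz => by
      rw [mem_insert_iff, mem_singleton_iff, not_or] at hz
      exact her i z hz.1 hz.2
    obtain ⟨hB, hBint⟩ := hreg.image_retraction hC hconn (hr i) (he i) (hre i) hF her hy hi
    have hBc : IsConnected (r i '' C) := hconn.image _ (hr i).continuousOn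
    have hBk : IsCompact (r i '' C) := hC.image (hr i)
    have : ConnectedSpace (r i '' C) := isConnected_iff_connectedSpace.1 hBc
    have : CompactSpace (r i '' C) := isCompact_iff_compactSpace.1 hBk
    exact ⟨_, hBk, hB, hBc, hB.isTopFractal.locallyConnectedSpace, hBint⟩
  · intro H X _ _ _ _ _ _
    obtain ⟨R, hR, hreg, -, -, hint⟩ := H X
    exact ⟨R, hR, hreg, hint⟩
end

section
/- Assume that every connected topological fractal contains a self-regenerating fractal with nonempty interior, and assume that every Peano continuum containing a self-regenerating fractal with nonempty interior is a topological fractal. Then every Peano continuum is a topological fractal. -/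
open Set Filter Topology

/-- The composition of the maps `φ i` along a word. -/
def wordMap {ι X : Type*} (φ : ι → X → X) : List ι → X → X
  | [] => id
  | i :: L => φ i ∘ wordMap φ L

section WordMap

variable {ι X : Type*}

theorem foldr_comp_map_eq_wordMap (φ : ι → X → X) (L : List ι) :
    (L.map φ).foldr (· ∘ ·) id = wordMap φ L := by
  induction L with
  | nil => rfl
  | cons i L ih => rw [List.map_cons, List.foldr_cons, ih]; rfl

theorem wordMap_append (φ : ι → X → X) (L M : List ι) :
    wordMap φ (L ++ M) = wordMap φ L ∘ wordMap φ M := by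
  induction L with
  | nil => rfl
  | cons i L ih => simp [wordMap, ih, Function.comp_assoc]

theorem exists_wordMap_eq (φ : ι → X → X) (hφ : ∀ x, ∃ i y, φ i y = x) (n : ℕ) (x : X) :
    ∃ L : List ι, L.length = n ∧ ∃ y, wordMap φ L y = x := by
  induction n generalizing x with
  | zero => exact ⟨[], rfl, x, rfl⟩
  | succ n ih =>
    obtain ⟨i, y, rfl⟩ := hφ x
    obtain ⟨L, hL, z, rfl⟩ := ih y
    exact ⟨i :: L, by simp [hL], z, rfl⟩

theorem topContractive_range_iff [MetricSpace X] [CompactSpace X] (φ : ι → X → X) :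
    TopContractive (range φ) ↔ ∀ ε > (0 : ℝ), ∃ k : ℕ, ∀ L : List ι, k ≤ L.length →
      ∀ x y, dist (wordMap φ L x) (wordMap φ L y) < ε := by
  constructor
  · intro h ε hε
    obtain ⟨k, hk⟩ := h ε hε
    refine ⟨k, fun L hL x y => ?_⟩
    have hd := hk ((L.take k).map φ) (List.forall_mem_map.2 fun i _ => mem_range_self i)
      (by simpa using hL)
    rw [foldr_comp_map_eq_wordMap] at hd
    rw [← List.take_append_drop k L, wordMap_append]
    exact (Metric.dist_le_diam_of_mem Metric.isBounded_of_compactSpace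
      (mem_range_self (wordMap φ (L.drop k) x))
      (mem_range_self (wordMap φ (L.drop k) y))).trans_lt hd
  · intro h ε hε
    obtain ⟨k, hk⟩ := h (ε / 2) (half_pos hε)
    refine ⟨k, fun l hl hlk => ?_⟩
    obtain ⟨L, rfl⟩ : l ∈ range (List.map φ) := by rw [range_list_map]; exact hl
    rw [foldr_comp_map_eq_wordMap]
    refine lt_of_le_of_lt (Metric.diam_le_of_forall_dist_le (half_pos hε).le ?_) (half_lt_self hε)
    rintro _ ⟨x, rfl⟩ _ ⟨y, rfl⟩
    exact (hk L (by simpa using hlk.ge) x y).le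

theorem topContractive_range_of_lipschitz [MetricSpace X] [CompactSpace X] (φ : ι → X → X)
    (K : NNReal) (hK : K < 1) (hφ : ∀ i, LipschitzWith K (φ i)) : TopContractive (range φ) := by
  rw [topContractive_range_iff]
  have hL : ∀ L : List ι, LipschitzWith (K ^ L.length) (wordMap φ L) := by
    intro L
    induction L with
    | nil => simpa only [List.length_nil, pow_zero, wordMap] using LipschitzWith.id
    | cons i L ih =>
      simpa [wordMap, pow_succ, mul_comm] using (hφ i).comp ih
  intro ε hε
  have hlim : Tendsto (fun n => (K : ℝ) ^ n * Metric.diam (univ : Set X)) atTop (𝓝 0) := by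
    simpa using (tendsto_pow_atTop_nhds_zero_of_lt_one K.coe_nonneg (by exact_mod_cast hK)).mul_const
      (Metric.diam (univ : Set X))
  obtain ⟨k, hk⟩ := eventually_atTop.1 (hlim.eventually_lt_const hε)
  refine ⟨k, fun L hkL x y => lt_of_le_of_lt ?_ (hk _ hkL)⟩
  refine ((hL L).dist_le_mul x y).trans ?_
  push_cast
  gcongr
  exact Metric.dist_le_diam_of_mem Metric.isBounded_of_compactSpace (mem_univ _) (mem_univ _)

end WordMap

/-- A continuous map that is injective except possibly over one
non-isolated point of its range transports self-regeneration to its range. -/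
theorem SelfRegenFractal.range_of_injective_off_point {A X : Type*} [MetricSpace A]
    [CompactSpace A] [MetricSpace X] (hA : SelfRegenFractal A) {r : A → X} (hr : Continuous r)
    (b : X) (hinj : ∀ x y, r x = r y → r x ≠ b → x = y) (hb : b ∈ closure (range r \ {b})) :
    SelfRegenFractal (range r) := by
  intro U hU hUne
  have : CompactSpace (range r) := isCompact_iff_compactSpace.1 (isCompact_range hr)
  let ρ : A → range r := rangeFactorization r
  have hρ : Continuous ρ := hr.subtype_mk _
  have hsurj : Function.Surjective ρ := rangeFactorization_surjective
  have hquot : IsQuotientMap ρ := hρ.isClosedMap.isQuotientMap hρ hsurj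
  let s : range r → A := Function.surjInv hsurj
  have hs : ∀ x, ρ (s x) = x := Function.surjInv_eq hsurj
  let V : Set A := ρ ⁻¹' U ∩ r ⁻¹' {b}ᶜ
  have hV : IsOpen V := (hU.preimage hρ).inter (isOpen_compl_singleton.preimage hr)
  have hVne : V.Nonempty := by
    obtain ⟨O, hO, rfl⟩ := isOpen_induced_iff.1 hU
    obtain ⟨⟨_, a, rfl⟩, ha⟩ := hUne
    by_cases hab : r a = b
    · obtain ⟨_, hcO, ⟨c, rfl⟩, hcb⟩ := mem_closure_iff.1 hb O hO (hab ▸ ha)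
      exact ⟨c, hcO, hcb⟩
    · exact ⟨a, ha, hab⟩
  obtain ⟨F, hfin, hcont, hconst, hcontr, hcov⟩ := hA V hV hVne
  have hfiber : ∀ f ∈ F, ∀ x, f (s (ρ x)) = f x := by
    intro f hf x
    have hx : r (s (ρ x)) = r x := congrArg Subtype.val (hs (ρ x))
    by_cases hxb : r x = b
    · exact hconst f hf _ _ (fun h => h.2 (hx.trans hxb)) (fun h => h.2 hxb)
    · rw [hinj _ _ hx (hx ▸ hxb)]
  let φ : F → range r → range r := fun f => ρ ∘ f.1 ∘ s
  have : Finite F := hfin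
  refine ⟨range φ, finite_range φ, ?_, ?_, ?_, ?_⟩
  · rintro _ ⟨f, rfl⟩
    refine hρ.comp (hquot.continuous_iff.2 ?_)
    exact (hcont f f.2).congr fun x => (hfiber f f.2 x).symm
  · rintro _ ⟨f, rfl⟩ x y hx hy
    refine congrArg ρ (hconst f f.2 _ _ (fun h => hx ?_) (fun h => hy ?_))
    · simpa only [mem_preimage, hs] using h.1
    · simpa only [mem_preimage, hs] using h.1
  · have hword : ∀ L x, wordMap φ L (ρ x) = ρ (wordMap Subtype.val L x) := by
      intro L x
      induction L with
      | nil => rfl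
      | cons f L ih =>
        change ρ (f.1 (s (wordMap φ L (ρ x)))) = _
        rw [ih, hfiber f f.2]
        rfl
    rw [← Subtype.range_coe (s := F), topContractive_range_iff] at hcontr
    rw [topContractive_range_iff]
    intro ε hε
    obtain ⟨δ, hδ, h⟩ := Metric.uniformContinuous_iff.1
      (CompactSpace.uniformContinuous_of_continuous hρ) ε hε
    obtain ⟨k, hk⟩ := hcontr δ hδ
    refine ⟨k, fun L hL x y => ?_⟩
    obtain ⟨x, rfl⟩ := hsurj x
    obtain ⟨y, rfl⟩ := hsurj y
    rw [hword, hword]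
    exact h (hk L hL x y)
  · refine eq_univ_of_forall fun y => ?_
    obtain ⟨a, rfl⟩ := hsurj y
    have ha : a ∈ ⋃ f ∈ F, range f := hcov ▸ mem_univ a
    simp only [mem_iUnion] at ha
    obtain ⟨f, hf, c, rfl⟩ := ha
    exact mem_biUnion (mem_range_self (⟨f, hf⟩ : F)) ⟨ρ c, congrArg ρ (hfiber f hf c)⟩

/-- The tent function with apex `1` at `m` that vanishes outside the ball of radius `δ`. -/
noncomputable def tent (m δ t : ℝ) : ℝ := max 0 (1 - |t - m| / δ)

theorem tent_mem_Icc (m t : ℝ) {δ : ℝ} (hδ : 0 < δ) : tent m δ t ∈ Icc (0 : ℝ) 1 :=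
  ⟨le_max_left _ _, max_le zero_le_one (by have : 0 ≤ |t - m| / δ := by positivity
                                           linarith)⟩

theorem abs_tent_sub_tent_le (m t u : ℝ) {δ : ℝ} (hδ : 0 < δ) :
    |tent m δ t - tent m δ u| ≤ |t - u| / δ := by
  refine (abs_max_sub_max_le_max (0 : ℝ) (1 - |t - m| / δ) 0 (1 - |u - m| / δ)).trans
    (max_le (by simp; positivity) ?_)
  have : (1 - |t - m| / δ) - (1 - |u - m| / δ) = (|u - m| - |t - m|) / δ := by ring
  rw [this, abs_div, abs_of_pos hδ]
  refine div_le_div_of_nonneg_right ?_ hδ.le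
  refine (abs_abs_sub_abs_le (u - m) (t - m)).trans ?_
  rw [sub_sub_sub_cancel_right, abs_sub_comm]

theorem exists_tent_eq (m : ℝ) {δ : ℝ} (hδ : 0 < δ) (hm : m + δ ∈ Icc (0 : ℝ) 1)
    (hm0 : m ∈ Icc (0 : ℝ) 1) {s : ℝ} (hs : s ∈ Icc (0 : ℝ) 1) :
    ∃ t ∈ Icc (0 : ℝ) 1, tent m δ t = s := by
  obtain ⟨hs0, hs1⟩ := hs
  refine ⟨m + δ * (1 - s), ⟨?_, ?_⟩, ?_⟩
  · have := hm0.1; nlinarith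
  · have := hm.2; nlinarith
  · have h : |m + δ * (1 - s) - m| / δ = 1 - s := by
      rw [add_sub_cancel_left, abs_of_nonneg (by nlinarith)]
      field_simp
    rw [tent, h]
    simpa using hs0

theorem exists_ball_Icc_subset {U : Set (Icc (0 : ℝ) 1)} (hU : IsOpen U) (hne : U.Nonempty) :
    ∃ m ∈ Icc (0 : ℝ) 1, ∃ δ > 0, m + δ ∈ Icc (0 : ℝ) 1 ∧
      ∀ t : Icc (0 : ℝ) 1, |t - m| < δ → t ∈ U := by
  obtain ⟨x, hx⟩ := hne
  obtain ⟨ε, hε, hball⟩ := Metric.isOpen_iff.1 hU x hx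
  have hball' : ∀ t : Icc (0 : ℝ) 1, |(t : ℝ) - x| < ε → t ∈ U := fun t ht => hball ht
  obtain ⟨h0, h1⟩ := x.2
  set η := min ε 1 / 4 with hη
  have hη0 : 0 < η := by positivity
  have hηε : 4 * η ≤ ε := by rw [hη]; linarith [min_le_left ε 1]
  have hη1 : 4 * η ≤ 1 := by rw [hη]; linarith [min_le_right ε 1]
  rcases le_total (x : ℝ) (1 / 2) with h | h
  · refine ⟨x, x.2, η, hη0, ⟨by linarith, by linarith⟩, fun t ht => hball' t (by linarith)⟩
  · refine ⟨x - η, ⟨by linarith, by linarith⟩, η, hη0, ⟨by linarith, by linarith⟩, fun t ht => ?_⟩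
    refine hball' t ?_
    rw [abs_lt] at ht ⊢
    constructor <;> linarith

theorem selfRegenFractal_Icc : SelfRegenFractal (Icc (0 : ℝ) 1) := by
  intro U hU hne
  obtain ⟨m, hm, δ, hδ, hmδ, hball⟩ := exists_ball_Icc_subset hU hne
  obtain ⟨n, hn⟩ := exists_nat_gt (2 / δ)
  have hn0 : (0 : ℝ) < n := lt_trans (by positivity) hn
  let φ : Fin n → Icc (0 : ℝ) 1 → Icc (0 : ℝ) 1 := fun i t =>
    ⟨(i + tent m δ t) / n, by
      have ht := tent_mem_Icc m t hδ
      have hi : (i : ℝ) + 1 ≤ n := by exact_mod_cast i.2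
      refine ⟨div_nonneg (add_nonneg (Nat.cast_nonneg _) ht.1) hn0.le, ?_⟩
      rw [div_le_one hn0]
      linarith [ht.2]⟩
  have hlip : ∀ i, LipschitzWith (1 / 2) (φ i) := by
    intro i
    refine LipschitzWith.of_dist_le_mul fun t u => ?_
    have h1 : dist (φ i t) (φ i u) = |tent m δ t - tent m δ u| / n := by
      rw [Subtype.dist_eq, Real.dist_eq]
      change |((i : ℝ) + tent m δ t) / n - (i + tent m δ u) / n| = _
      rw [← sub_div, add_sub_add_left_eq_sub, abs_div, abs_of_pos hn0]
    have h2 : dist t u = |(t : ℝ) - u| := rfl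
    rw [h1, h2]
    calc |tent m δ t - tent m δ u| / n ≤ |(t : ℝ) - u| / δ / n := by
          gcongr; exact abs_tent_sub_tent_le m t u hδ
      _ = (1 / (δ * n)) * |(t : ℝ) - u| := by field_simp
      _ ≤ _ := by
          push_cast
          gcongr
          rw [div_lt_iff₀ hδ] at hn
          linarith
  refine ⟨range φ, finite_range φ, ?_, ?_, ?_, ?_⟩
  · rintro _ ⟨i, rfl⟩
    exact (hlip i).continuous
  · have hzero : ∀ t : Icc (0 : ℝ) 1, t ∉ U → tent m δ t = 0 := by
      intro t ht
      have : δ ≤ |t - m| := not_lt.1 fun h => ht (hball t h)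
      refine max_eq_left ?_
      linarith [(one_le_div hδ).2 this]
    rintro _ ⟨i, rfl⟩ t u ht hu
    simp only [φ, hzero t ht, hzero u hu]
  · exact topContractive_range_of_lipschitz φ _ (by norm_num [← NNReal.coe_lt_coe]) hlip
  · refine eq_univ_of_forall fun t => ?_
    obtain ⟨h0, h1⟩ := t.2
    obtain ⟨i, hi0, hi1⟩ : ∃ i : Fin n, (i : ℝ) ≤ n * t ∧ (n : ℝ) * t ≤ i + 1 := by
      rcases eq_or_lt_of_le h1 with h | h
      · have hnpos : 0 < n := by exact_mod_cast hn0
        refine ⟨⟨n - 1, by omega⟩, ?_, ?_⟩ <;> simp [h, Nat.cast_sub hnpos]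
      · have hpos : 0 ≤ (n : ℝ) * t := by positivity
        refine ⟨⟨⌊(n : ℝ) * t⌋₊, (Nat.floor_lt hpos).2 (by nlinarith)⟩, Nat.floor_le hpos,
          (Nat.lt_floor_add_one _).le⟩
    obtain ⟨u, hu, hut⟩ := exists_tent_eq m hδ hmδ hm (s := n * t - i)
      ⟨by linarith, by linarith⟩
    refine mem_biUnion (mem_range_self i) ⟨⟨u, hu⟩, Subtype.ext ?_⟩
    change ((i : ℝ) + tent m δ u) / n = t
    rw [hut]
    field_simp
    ring

theorem locallyConnectedSpace_sum {A B : Type*} [TopologicalSpace A] [TopologicalSpace B]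
    [LocallyConnectedSpace A] [LocallyConnectedSpace B] : LocallyConnectedSpace (A ⊕ B) := by
  refine locallyConnectedSpace_iff_connected_subsets.2 ?_
  rintro (a | b) U hU
  · refine ⟨Sum.inl '' connectedComponentIn (Sum.inl ⁻¹' U) a,
      IsOpenEmbedding.inl.isOpenMap.image_mem_nhds
        (connectedComponentIn_mem_nhds (continuous_inl.continuousAt hU)),
      isPreconnected_connectedComponentIn.image _ continuous_inl.continuousOn,
      image_subset_iff.2 (connectedComponentIn_subset _ _)⟩
  · refine ⟨Sum.inr '' connectedComponentIn (Sum.inr ⁻¹' U) b,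
      IsOpenEmbedding.inr.isOpenMap.image_mem_nhds
        (connectedComponentIn_mem_nhds (continuous_inr.continuousAt hU)),
      isPreconnected_connectedComponentIn.image _ continuous_inr.continuousOn,
      image_subset_iff.2 (connectedComponentIn_subset _ _)⟩

/-- The wedge of `X` and the unit interval, realised inside their product. -/
def intervalWedge {X : Type*} (x₀ : X) : Set (X × Icc (0 : ℝ) 1) :=
  {p | p.1 = x₀ ∨ p.2 = 0}

section Wedge

variable {X : Type*} (x₀ : X)

/-- The gluing map from the disjoint union onto the wedge. -/
def intervalWedgeMk : X ⊕ Icc (0 : ℝ) 1 → intervalWedge x₀ :=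
  Sum.elim (fun x => ⟨(x, 0), Or.inr rfl⟩) (fun t => ⟨(x₀, t), Or.inl rfl⟩)

theorem intervalWedgeMk_surjective : Function.Surjective (intervalWedgeMk x₀) := by
  rintro ⟨⟨x, t⟩, h | h⟩
  · exact ⟨.inr t, Subtype.ext (Prod.ext h.symm rfl)⟩
  · exact ⟨.inl x, Subtype.ext (Prod.ext rfl h.symm)⟩

variable [MetricSpace X]

theorem continuous_intervalWedgeMk : Continuous (intervalWedgeMk x₀) :=
  continuous_sum_dom.2 ⟨by
    change Continuous fun x : X => (⟨(x, 0), Or.inr rfl⟩ : intervalWedge x₀)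
    fun_prop, by
    change Continuous fun t => (⟨(x₀, t), Or.inl rfl⟩ : intervalWedge x₀)
    fun_prop⟩

theorem compactSpace_intervalWedge [CompactSpace X] : CompactSpace (intervalWedge x₀) :=
  (intervalWedgeMk_surjective x₀).compactSpace (continuous_intervalWedgeMk x₀)

theorem locallyConnectedSpace_intervalWedge [CompactSpace X] [LocallyConnectedSpace X] :
    LocallyConnectedSpace (intervalWedge x₀) := by
  have : LocallyConnectedSpace (Icc (0 : ℝ) 1) :=
    have := (convex_Icc (0 : ℝ) 1).locallyPathConnectedSpace
    inferInstance
  have : LocallyConnectedSpace (X ⊕ Icc (0 : ℝ) 1) := locallyConnectedSpace_sum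
  have hc := continuous_intervalWedgeMk x₀
  exact (hc.isClosedMap.isQuotientMap hc
    (intervalWedgeMk_surjective x₀)).isCoinducing.locallyConnectedSpace

theorem connectedSpace_intervalWedge [ConnectedSpace X] : ConnectedSpace (intervalWedge x₀) := by
  have hc := continuous_intervalWedgeMk x₀
  have hI : PreconnectedSpace (Icc (0 : ℝ) 1) := Subtype.preconnectedSpace isPreconnected_Icc
  have h1 := isPreconnected_range (hc.comp continuous_inl)
  have h2 := isPreconnected_range (hc.comp continuous_inr)
  have h := IsPreconnected.union (intervalWedgeMk x₀ (.inl x₀)) (mem_range_self x₀)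
    (mem_range.2 ⟨0, rfl⟩) h1 h2
  refine @ConnectedSpace.mk _ _ ⟨?_⟩ ⟨intervalWedgeMk x₀ (.inl x₀)⟩
  convert h
  refine (eq_univ_of_forall fun p => ?_).symm
  obtain ⟨x | t, rfl⟩ := intervalWedgeMk_surjective x₀ p
  · exact Or.inl (mem_range_self x)
  · exact Or.inr (mem_range_self t)

theorem exists_selfRegenFractal_intervalWedge : ∃ R : Set (intervalWedge x₀),
    IsCompact R ∧ SelfRegenFractal R ∧ (interior R).Nonempty := by
  let r : Icc (0 : ℝ) 1 → intervalWedge x₀ := fun t => intervalWedgeMk x₀ (.inr t)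
  have hr : Continuous r := (continuous_intervalWedgeMk x₀).comp continuous_inr
  have hinj : Function.Injective r := fun t u h => congrArg (fun p => p.1.2) h
  have hIc : ConnectedSpace (Icc (0 : ℝ) 1) := Subtype.connectedSpace (isConnected_Icc zero_le_one)
  refine ⟨range r, isCompact_range hr, selfRegenFractal_Icc.range_of_injective_off_point hr (r 0)
    (fun t u h _ => hinj h) ?_, r 1, ?_⟩
  · have h0 : (0 : Icc (0 : ℝ) 1) ∈ closure {0}ᶜ := by
      rw [mem_closure_iff_nhdsWithin_neBot]; infer_instance
    refine closure_mono ?_ (image_closure_subset_closure_image hr (mem_image_of_mem r h0))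
    rintro _ ⟨t, ht, rfl⟩
    exact ⟨mem_range_self t, fun h => ht (hinj h)⟩
  · have hopen : IsOpen {p : intervalWedge x₀ | p.1.2 ≠ 0} :=
      isOpen_ne_fun (by fun_prop) continuous_const
    refine mem_interior.2 ⟨_, ?_, hopen, show (1 : Icc (0 : ℝ) 1) ≠ 0 from one_ne_zero⟩
    rintro ⟨⟨x, t⟩, h⟩ ht
    exact ⟨t, Subtype.ext (Prod.ext (h.resolve_right ht).symm rfl)⟩

end Wedge

theorem topContractive_range_of_separated {κ Y : Type*} [MetricSpace Y] [CompactSpace Y]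
    (ψ : κ → Y → Y) (h : ∀ a b : Y, a ≠ b → ∃ N ∈ 𝓝 (a, b), ∃ k : ℕ, ∀ L : List κ,
      k ≤ L.length → ∀ x y, (wordMap ψ L x, wordMap ψ L y) ∉ N) :
    TopContractive (range ψ) := by
  rw [topContractive_range_iff]
  intro ε hε
  have hK : IsCompact {p : Y × Y | ε ≤ dist p.1 p.2} :=
    (isClosed_le continuous_const continuous_dist).isCompact
  obtain ⟨k, hk⟩ := hK.induction_on
    (p := fun s => ∃ k : ℕ, ∀ L : List κ, k ≤ L.length →
      ∀ x y, (wordMap ψ L x, wordMap ψ L y) ∉ s)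
    ⟨0, fun _ _ _ _ => id⟩ (fun s t hst ⟨k, hk⟩ => ⟨k, fun L hL x y hs => hk L hL x y (hst hs)⟩)
    (fun s t ⟨k, hk⟩ ⟨l, hl⟩ => ⟨max k l, fun L hL x y hs => hs.elim
      (hk L (le_of_max_le_left hL) x y) (hl L (le_of_max_le_right hL) x y)⟩) (by
      rintro ⟨a, b⟩ hab
      have hne : a ≠ b := by
        rintro rfl
        exact hε.not_ge (by simpa using hab)
      obtain ⟨N, hN, hk⟩ := h a b hne
      exact ⟨N, mem_nhdsWithin_of_mem_nhds hN, hk⟩)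
  exact ⟨k, fun L hL x y => not_le.1 (hk L hL x y)⟩

theorem exists_nhds_notMem_of_coordinate {κ Y M : Type*} [TopologicalSpace Y] [MetricSpace M]
    (ψ : κ → Y → Y) {p : Y → M} (hp : Continuous p)
    (h : ∀ ε > (0 : ℝ), ∃ k : ℕ, ∀ L : List κ, k ≤ L.length →
      ∀ x y, dist (p (wordMap ψ L x)) (p (wordMap ψ L y)) < ε) {a b : Y} (hab : p a ≠ p b) :
    ∃ N ∈ 𝓝 (a, b), ∃ k : ℕ, ∀ L : List κ,
      k ≤ L.length → ∀ x y, (wordMap ψ L x, wordMap ψ L y) ∉ N := by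
  obtain ⟨k, hk⟩ := h (dist (p a) (p b) / 2) (half_pos (dist_pos.2 hab))
  refine ⟨{q | dist (p a) (p b) / 2 < dist (p q.1) (p q.2)}, ?_, k,
    fun L hL x y => (hk L hL x y).not_gt⟩
  exact (isOpen_lt continuous_const (by fun_prop)).mem_nhds (half_lt_self (dist_pos.2 hab))

/-- The space `Z` with a copy of the pointed space `(X, x₀)` attached at `wordMap φ w d` for
every word `w`, realised inside `Z × (List ι → X)`. -/
def fringe {ι Z X : Type*} (φ : ι → Z → Z) (d : Z) (x₀ : X) : Set (Z × (List ι → X)) :=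
  {p | (∀ v w, v ≠ w → p.2 v = x₀ ∨ p.2 w = x₀) ∧ ∀ w, p.2 w = x₀ ∨ p.1 = wordMap φ w d}

section Fringe

variable {ι Z X : Type*} (φ : ι → Z → Z) (d : Z) (x₀ : X)

/-- The points of `Z` inside the fringe. -/
def fringeBase (z : Z) : fringe φ d x₀ :=
  ⟨(z, fun _ => x₀), fun _ _ _ => .inl rfl, fun _ => .inl rfl⟩

open scoped Classical in
/-- The copy of `X` indexed by the word `w`. -/
noncomputable def fringeCopy (w : List ι) (x : X) : fringe φ d x₀ :=
  ⟨(wordMap φ w d, fun v => if v = w then x else x₀), fun u v huv => by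
    by_cases hu : u = w
    · exact .inr (if_neg fun h => huv (hu.trans h.symm))
    · exact .inl (if_neg hu), fun v => by
    by_cases hv : v = w
    · exact .inr (hv ▸ rfl)
    · exact .inl (if_neg hv)⟩

variable {φ d x₀}

theorem fringeCopy_snd_self (w : List ι) (x : X) : (fringeCopy φ d x₀ w x).1.2 w = x :=
  if_pos rfl

theorem fringeCopy_snd_of_ne {v w : List ι} (h : v ≠ w) (x : X) :
    (fringeCopy φ d x₀ w x).1.2 v = x₀ :=
  if_neg h

theorem fringeCopy_base (w : List ι) :
    fringeCopy φ d x₀ w x₀ = fringeBase φ d x₀ (wordMap φ w d) := by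
  refine Subtype.ext (Prod.ext rfl ?_)
  exact funext fun v => ite_self _

theorem eq_fringeCopy_of_snd_ne (p : fringe φ d x₀) {w : List ι} (h : p.1.2 w ≠ x₀) :
    p = fringeCopy φ d x₀ w (p.1.2 w) := by
  refine Subtype.ext (Prod.ext ((p.2.2 w).resolve_left h) (funext fun v => ?_))
  by_cases hv : v = w
  · rw [hv, fringeCopy_snd_self]
  · rw [fringeCopy_snd_of_ne hv]
    exact (p.2.1 v w hv).resolve_right h

theorem eq_fringeBase_or_fringeCopy (p : fringe φ d x₀) :
    p = fringeBase φ d x₀ p.1.1 ∨ ∃ w, p.1.2 w ≠ x₀ ∧ p = fringeCopy φ d x₀ w (p.1.2 w) := by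
  by_cases h : ∃ w, p.1.2 w ≠ x₀
  · obtain ⟨w, hw⟩ := h
    exact .inr ⟨w, hw, eq_fringeCopy_of_snd_ne p hw⟩
  · push Not at h
    exact .inl (Subtype.ext (Prod.ext rfl (funext h)))

variable (φ d x₀)

open scoped Classical in
/-- The self-map of the fringe extending `φ i` that moves the copy `w` to the copy `i :: w`. -/
noncomputable def fringePush (i : ι) (p : fringe φ d x₀) : fringe φ d x₀ :=
  ⟨(φ i p.1.1, fun w => match w with
      | [] => x₀
      | j :: v => if j = i then p.1.2 v else x₀), by
    rintro (_ | ⟨j, v⟩) (_ | ⟨k, w⟩) hvw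
    · exact .inl rfl
    · exact .inl rfl
    · exact .inr rfl
    · by_cases hj : j = i
      · by_cases hk : k = i
        · have := p.2.1 v w (fun h => hvw (by rw [hj, hk, h]))
          simpa [hj, hk] using this
        · exact .inr (if_neg hk)
      · exact .inl (if_neg hj), by
    rintro (_ | ⟨j, v⟩)
    · exact .inl rfl
    · by_cases hj : j = i
      · subst hj
        refine (p.2.2 v).imp (fun h => by simpa using h) fun h => ?_
        exact congrArg (φ j) h
      · exact .inl (if_neg hj)⟩

/-- The self-maps of the fringe: the extensions of the maps `φ i` and the map that sends the
fringe onto the copy of `X` at the empty word. -/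
noncomputable def fringeMap (q : Z → X) : Option ι → fringe φ d x₀ → fringe φ d x₀
  | none => fun p => fringeCopy φ d x₀ [] (q p.1.1)
  | some i => fringePush φ d x₀ i

variable {φ d x₀}

theorem fringePush_base (i : ι) (z : Z) :
    fringePush φ d x₀ i (fringeBase φ d x₀ z) = fringeBase φ d x₀ (φ i z) := by
  refine Subtype.ext (Prod.ext rfl (funext ?_))
  rintro (_ | ⟨j, v⟩)
  · rfl
  · exact ite_self _

theorem fringePush_snd_nil (i : ι) (p : fringe φ d x₀) : (fringePush φ d x₀ i p).1.2 [] = x₀ :=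
  rfl

theorem fringePush_snd_cons_self (i : ι) (v : List ι) (p : fringe φ d x₀) :
    (fringePush φ d x₀ i p).1.2 (i :: v) = p.1.2 v :=
  if_pos rfl

theorem fringePush_snd_cons_of_ne {i j : ι} (h : j ≠ i) (v : List ι) (p : fringe φ d x₀) :
    (fringePush φ d x₀ i p).1.2 (j :: v) = x₀ :=
  if_neg h

theorem fringePush_copy (i : ι) (w : List ι) (x : X) :
    fringePush φ d x₀ i (fringeCopy φ d x₀ w x) = fringeCopy φ d x₀ (i :: w) x := by
  by_cases hx : x = x₀
  · rw [hx, fringeCopy_base, fringePush_base, fringeCopy_base]; rfl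
  · have h : (fringePush φ d x₀ i (fringeCopy φ d x₀ w x)).1.2 (i :: w) = x := by
      rw [fringePush_snd_cons_self, fringeCopy_snd_self]
    have := eq_fringeCopy_of_snd_ne _ (h.trans_ne hx)
    rwa [h] at this

theorem fringeMap_cover {q : Z → X} (hq : Function.Surjective q) (hφ : ∀ z, ∃ i y, φ i y = z)
    (p : fringe φ d x₀) : ∃ a y, fringeMap φ d x₀ q a y = p := by
  obtain h | ⟨w, -, h⟩ := eq_fringeBase_or_fringeCopy p
  · obtain ⟨i, z, hz⟩ := hφ p.1.1
    refine ⟨some i, fringeBase φ d x₀ z, ?_⟩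
    rw [h, ← hz]
    exact fringePush_base i z
  · rw [h]
    cases w with
    | nil =>
      obtain ⟨z, hz⟩ := hq (p.1.2 [])
      exact ⟨none, fringeBase φ d x₀ z, congrArg (fringeCopy φ d x₀ []) hz⟩
    | cons i w => exact ⟨some i, fringeCopy φ d x₀ w (p.1.2 (i :: w)), fringePush_copy i w _⟩

theorem wordMap_fringeMap_fst (q : Z → X) (L : List (Option ι)) :
    (∃ z, ∀ p, (wordMap (fringeMap φ d x₀ q) L p).1.1 = z) ∨
      ∃ M : List ι, M.length = L.length ∧
        ∀ p, (wordMap (fringeMap φ d x₀ q) L p).1.1 = wordMap φ M p.1.1 := by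
  induction L with
  | nil => exact .inr ⟨[], rfl, fun _ => rfl⟩
  | cons a L ih =>
    cases a with
    | none => exact .inl ⟨d, fun _ => rfl⟩
    | some i =>
      obtain ⟨z, hz⟩ | ⟨M, hM, h⟩ := ih
      · exact .inl ⟨φ i z, fun p => congrArg (φ i) (hz p)⟩
      · exact .inr ⟨i :: M, by simp [hM], fun p => congrArg (φ i) (h p)⟩

section Metric

variable [MetricSpace Z] [CompactSpace Z]

theorem fringeMap_contractive_fst (q : Z → X) (hφ : TopContractive (range φ)) (ε : ℝ)
    (hε : 0 < ε) : ∃ k : ℕ, ∀ L : List (Option ι), k ≤ L.length → ∀ x y,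
      dist (wordMap (fringeMap φ d x₀ q) L x).1.1 (wordMap (fringeMap φ d x₀ q) L y).1.1 < ε := by
  obtain ⟨k, hk⟩ := (topContractive_range_iff φ).1 hφ ε hε
  refine ⟨k, fun L hL x y => ?_⟩
  obtain ⟨z, hz⟩ | ⟨M, hM, h⟩ := wordMap_fringeMap_fst (φ := φ) (d := d) (x₀ := x₀) q L
  · simpa [hz] using hε
  · rw [h, h]
    exact hk M (hM ▸ hL) _ _

theorem fringeMap_contractive_snd [MetricSpace X] {q : Z → X} (hq : Continuous q)
    (hφ : TopContractive (range φ)) (w : List ι) (ε : ℝ) (hε : 0 < ε) :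
    ∃ k : ℕ, ∀ L : List (Option ι), k ≤ L.length → ∀ x y,
      dist ((wordMap (fringeMap φ d x₀ q) L x).1.2 w)
        ((wordMap (fringeMap φ d x₀ q) L y).1.2 w) < ε := by
  induction w with
  | nil =>
    obtain ⟨δ, hδ, h⟩ := Metric.uniformContinuous_iff.1
      (CompactSpace.uniformContinuous_of_continuous hq) ε hε
    obtain ⟨k, hk⟩ := fringeMap_contractive_fst (d := d) (x₀ := x₀) q hφ δ hδ
    refine ⟨k + 1, fun L hL x y => ?_⟩
    match L, hL with
    | none :: L, hL =>
      simp only [wordMap, fringeMap, Function.comp_apply, fringeCopy_snd_self]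
      exact h (hk L (by simpa using hL) x y)
    | some i :: L, hL =>
      simpa only [wordMap, fringeMap, Function.comp_apply, fringePush_snd_nil, dist_self]
        using hε
  | cons i v ih =>
    obtain ⟨k, hk⟩ := ih
    refine ⟨k + 1, fun L hL x y => ?_⟩
    match L, hL with
    | none :: L, hL =>
      simpa only [wordMap, fringeMap, Function.comp_apply,
        fringeCopy_snd_of_ne (List.cons_ne_nil i v), dist_self] using hε
    | some j :: L, hL =>
      simp only [wordMap, fringeMap, Function.comp_apply]
      by_cases hj : i = j
      · subst hj
        rw [fringePush_snd_cons_self, fringePush_snd_cons_self]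
        exact hk L (by simpa using hL) x y
      · rwa [fringePush_snd_cons_of_ne hj, fringePush_snd_cons_of_ne hj, dist_self]

end Metric

section Topology

variable [TopologicalSpace Z] [TopologicalSpace X]

theorem isClosed_fringe [T2Space Z] [T1Space X] : IsClosed (fringe φ d x₀) := by
  simp only [fringe, ofPred_and, ofPred_forall, ofPred_or]
  refine IsClosed.inter ?_ ?_
  · refine isClosed_iInter fun v => isClosed_iInter fun w => isClosed_iInter fun _ => ?_
    exact (isClosed_singleton.preimage (f := fun p : Z × (List ι → X) => p.2 v) (by fun_prop)).union
      (isClosed_singleton.preimage (f := fun p : Z × (List ι → X) => p.2 w) (by fun_prop))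
  · refine isClosed_iInter fun w => ?_
    exact (isClosed_singleton.preimage (f := fun p : Z × (List ι → X) => p.2 w) (by fun_prop)).union
      (isClosed_singleton.preimage (f := fun p : Z × (List ι → X) => p.1) (by fun_prop))

theorem continuous_fringeBase : Continuous (fringeBase φ d x₀) := by
  unfold fringeBase; fun_prop

theorem continuous_fringeCopy (w : List ι) : Continuous (fringeCopy φ d x₀ w) := by
  refine Continuous.subtype_mk (continuous_const.prodMk (continuous_pi fun v => ?_)) _
  by_cases hv : v = w
  · simp only [hv, if_true]
    exact continuous_id
  · simpa only [hv, if_false] using continuous_const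

theorem continuous_fringeMap {q : Z → X} (hq : Continuous q) (hφ : ∀ i, Continuous (φ i))
    (a : Option ι) : Continuous (fringeMap φ d x₀ q a) := by
  cases a with
  | none => exact (continuous_fringeCopy []).comp (by fun_prop)
  | some i =>
    refine Continuous.subtype_mk (Continuous.prodMk ?_ (continuous_pi ?_)) _
    · exact (hφ i).comp (by fun_prop)
    · rintro (_ | ⟨j, v⟩)
      · exact continuous_const
      · by_cases hj : j = i
        · simp only [hj, if_true]
          fun_prop
        · simp only [hj, if_false]
          exact continuous_const

theorem connectedSpace_fringe [ConnectedSpace Z] [ConnectedSpace X] :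
    ConnectedSpace (fringe φ d x₀) := by
  refine @ConnectedSpace.mk _ _ ⟨?_⟩ ⟨fringeBase φ d x₀ d⟩
  have hbase := isPreconnected_range (continuous_fringeBase (φ := φ) (d := d) (x₀ := x₀))
  refine isPreconnected_of_forall (fringeBase φ d x₀ d) fun p _ => ?_
  obtain h | ⟨w, -, h⟩ := eq_fringeBase_or_fringeCopy p
  · exact ⟨_, subset_univ _, mem_range_self d, h ▸ mem_range_self _, hbase⟩
  · refine ⟨_, subset_univ _, .inl (mem_range_self d), .inr (h ▸ mem_range_self _),
      IsPreconnected.union (fringeBase φ d x₀ (wordMap φ w d)) (mem_range_self _)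
        (mem_range.2 ⟨x₀, fringeCopy_base w⟩) hbase (isPreconnected_range (continuous_fringeCopy w))⟩

end Topology

/-- Every nonempty open subset of the fringe meets some attached copy off its base point. -/
theorem exists_fringeCopy_mem [MetricSpace Z] [CompactSpace Z] [MetricSpace X] [Nontrivial X]
    (hφ : TopContractive (range φ)) (hcov : ∀ z, ∃ i y, φ i y = z)
    {O : Set (fringe φ d x₀)} (hO : IsOpen O) (hne : O.Nonempty) :
    ∃ w, ∃ x ≠ x₀, fringeCopy φ d x₀ w x ∈ O := by
  obtain ⟨p, hp⟩ := hne
  obtain h | ⟨w, hw, h⟩ := eq_fringeBase_or_fringeCopy p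
  swap
  · exact ⟨w, _, hw, h ▸ hp⟩
  obtain ⟨x, hx⟩ := exists_ne x₀
  choose W hW y hy using fun n => exists_wordMap_eq φ hcov n p.1.1
  have hlim : Tendsto (fun n => fringeCopy φ d x₀ (W n) x) atTop (𝓝 p) := by
    rw [tendsto_subtype_rng, Prod.tendsto_iff, tendsto_pi_nhds]
    constructor
    · refine Metric.tendsto_atTop.2 fun ε hε => ?_
      obtain ⟨k, hk⟩ := (topContractive_range_iff φ).1 hφ ε hε
      refine ⟨k, fun n hn => ?_⟩
      have := hk (W n) (by rwa [hW]) d (y n)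
      rwa [hy] at this
    · intro v
      refine tendsto_const_nhds.congr' ?_
      filter_upwards [eventually_gt_atTop v.length] with n hn
      have hv : v ≠ W n := fun h => hn.ne (by rw [h, hW])
      rw [fringeCopy_snd_of_ne hv, h]
      rfl
  obtain ⟨n, hn⟩ := (hlim.eventually (hO.mem_nhds hp)).exists
  exact ⟨W n, x, hx, hn⟩

end Fringe

theorem exists_topFractal_of_surjective {Z X : Type} [MetricSpace Z] [CompactSpace Z]
    [ConnectedSpace Z] [MetricSpace X] [CompactSpace X] [ConnectedSpace X] [Nontrivial X]
    (hZ : IsTopFractal Z) {q : Z → X} (hq : Continuous q) (hsurj : Function.Surjective q)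
    (x₀ : X) :
    ∃ (Y : Type) (_ : MetricSpace Y), CompactSpace Y ∧ ConnectedSpace Y ∧ IsTopFractal Y ∧
      ∀ O : Set Y, IsOpen O → O.Nonempty → ∃ r : Y → X, Continuous r ∧
        (∀ x y, r x = r y → r x ≠ x₀ → x = y) ∧
        ∃ W : Set X, IsOpen W ∧ W.Nonempty ∧ x₀ ∉ W ∧ W ⊆ r '' O := by
  obtain ⟨F, hfin, hcont, hcontr, hcov⟩ := hZ
  have : Finite F := hfin
  let φ : F → Z → Z := Subtype.val
  replace hcontr : TopContractive (range φ) := by rwa [Subtype.range_coe]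
  replace hcov : ∀ z, ∃ i y, φ i y = z := by
    intro z
    have hz : z ∈ ⋃ f ∈ F, range f := hcov ▸ mem_univ z
    simp only [mem_iUnion] at hz
    obtain ⟨f, hf, y, hy⟩ := hz
    exact ⟨⟨f, hf⟩, y, hy⟩
  let d : Z := Classical.arbitrary Z
  let m : MetricSpace (fringe φ d x₀) := TopologicalSpace.metrizableSpaceMetric _
  have hcompact : CompactSpace (fringe φ d x₀) :=
    isCompact_iff_compactSpace.1 isClosed_fringe.isCompact
  refine ⟨fringe φ d x₀, m, hcompact, connectedSpace_fringe,
    ⟨range (fringeMap φ d x₀ q), finite_range _, ?_, ?_, ?_⟩, ?_⟩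
  · rintro _ ⟨a, rfl⟩
    exact continuous_fringeMap hq (fun i : F => hcont i i.2) a
  · refine topContractive_range_of_separated _ fun a b hab => ?_
    by_cases h1 : a.1.1 = b.1.1
    · obtain ⟨w, hw⟩ : ∃ w, a.1.2 w ≠ b.1.2 w := by
        by_contra! h
        exact hab (Subtype.ext (Prod.ext h1 (funext h)))
      exact exists_nhds_notMem_of_coordinate _ (p := fun p : fringe φ d x₀ => p.1.2 w)
        (by fun_prop) (fringeMap_contractive_snd hq hcontr w) hw
    · exact exists_nhds_notMem_of_coordinate _ (p := fun p : fringe φ d x₀ => p.1.1)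
        (by fun_prop) (fringeMap_contractive_fst q hcontr) h1
  · refine eq_univ_of_forall fun p => ?_
    obtain ⟨a, y, h⟩ := fringeMap_cover hsurj hcov p
    exact mem_biUnion (mem_range_self a) ⟨y, h⟩
  · intro O hO hne
    obtain ⟨w, x, hx, hxO⟩ := exists_fringeCopy_mem hcontr hcov hO hne
    refine ⟨fun p => p.1.2 w, by fun_prop, fun a b hab ha => ?_,
      fringeCopy φ d x₀ w ⁻¹' O ∩ {x₀}ᶜ, (hO.preimage (continuous_fringeCopy w)).inter
        isOpen_compl_singleton, ⟨x, hxO, hx⟩, fun h => h.2 rfl, fun u hu =>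
        ⟨_, hu.1, fringeCopy_snd_self w u⟩⟩
    rw [eq_fringeCopy_of_snd_ne a ha, eq_fringeCopy_of_snd_ne b (hab ▸ ha)]
    exact congrArg _ hab

/-- A compact self-regenerating fractal that maps into `X` injectively off one point, with image having nonempty
interior away from that point, yields a self-regenerating fractal with nonempty interior. -/
theorem SelfRegenFractal.exists_of_injective_off_point {A X : Type*} [MetricSpace A]
    [CompactSpace A] [MetricSpace X] [ConnectedSpace X] [Nontrivial X]
    (hA : SelfRegenFractal A) {r : A → X} (hr : Continuous r) (x₀ : X)
    (hinj : ∀ x y, r x = r y → r x ≠ x₀ → x = y) {W : Set X} (hW : IsOpen W)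
    (hne : W.Nonempty) (hx₀ : x₀ ∉ W) (hWr : W ⊆ range r) :
    ∃ R : Set X, IsCompact R ∧ SelfRegenFractal R ∧ (interior R).Nonempty := by
  classical
  by_cases hcl : x₀ ∈ closure (range r \ {x₀})
  · exact ⟨range r, isCompact_range hr, hA.range_of_injective_off_point hr x₀ hinj hcl,
      hne.mono (interior_maximal hWr hW)⟩
  obtain ⟨x₁, hx₁⟩ := hne
  have hclopen : IsClopen {a | r a = x₀} := by
    refine ⟨isClosed_singleton.preimage hr, ?_⟩
    convert isClosed_closure.isOpen_compl.preimage hr (t := (closure (range r \ {x₀}))ᶜ)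
    ext a
    refine ⟨fun h => ?_, fun h => ?_⟩
    · rwa [mem_preimage, show r a = x₀ from h]
    · by_contra hne
      exact h (subset_closure ⟨mem_range_self a, hne⟩)
  let r' : A → X := fun a => if r a = x₀ then x₁ else r a
  have hr' : Continuous r' :=
    continuous_if (by simp [hclopen.frontier_eq]) continuous_const.continuousOn hr.continuousOn
  have hWr' : W ⊆ range r' := by
    intro x hx
    obtain ⟨a, rfl⟩ := hWr hx
    exact ⟨a, if_neg fun h : r a = x₀ => hx₀ (h ▸ hx)⟩
  refine ⟨range r', isCompact_range hr', hA.range_of_injective_off_point hr' x₁ ?_ ?_,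
    x₁, interior_maximal hWr' hW hx₁⟩
  · intro a b hab ha
    have h1 : ∀ c, r' c ≠ x₁ → r c ≠ x₀ := fun c hc h => hc (if_pos h)
    have ha0 := h1 a ha
    have hb0 := h1 b (hab ▸ ha)
    exact hinj a b (by simpa [r', ha0, hb0] using hab) ha0
  · rw [mem_closure_iff]
    intro O hO hxO
    have hmem : ∀ᶠ x in 𝓝[≠] x₁, x ∈ O ∩ W ∧ x ≠ x₁ :=
      ((eventually_mem_nhdsWithin).and
        (mem_nhdsWithin_of_mem_nhds ((hO.inter hW).mem_nhds ⟨hxO, hx₁⟩))).mono fun x h => ⟨h.2, h.1⟩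
    obtain ⟨x, hx, hxne⟩ := hmem.exists
    exact ⟨x, hx.1, hWr' hx.2, hxne⟩

theorem isTopFractal_of_subsingleton (X : Type*) [MetricSpace X] [Subsingleton X] :
    IsTopFractal X := by
  refine ⟨{id}, finite_singleton _, by simp [continuous_id], fun ε hε => ⟨0, fun l _ _ => ?_⟩,
    by simp⟩
  rwa [Metric.diam_subsingleton (subsingleton_of_subsingleton)]

/-- If every connected topological fractal contains a self-regenerating fractal with
nonempty interior, and every Peano continuum containing a self-regenerating fractal
with nonempty interior is a topological fractal, then every Peano continuum is a
topological fractal. -/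
theorem every_peano_continuum_is_topological_fractal_of_hypotheses
    (h1 : ∀ (X : Type) [MetricSpace X] [CompactSpace X] [ConnectedSpace X],
      IsTopFractal X →
        ∃ R : Set X, IsCompact R ∧ SelfRegenFractal R ∧ (interior R).Nonempty)
    (h2 : ∀ (X : Type) [MetricSpace X] [CompactSpace X] [ConnectedSpace X]
        [LocallyConnectedSpace X] [Nonempty X],
      (∃ R : Set X, IsCompact R ∧ SelfRegenFractal R ∧ (interior R).Nonempty) →
        IsTopFractal X)
    (X : Type) [MetricSpace X] [CompactSpace X] [ConnectedSpace X]
    [LocallyConnectedSpace X] [Nonempty X] :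
    IsTopFractal X := by
  rcases subsingleton_or_nontrivial X with _ | _
  · exact isTopFractal_of_subsingleton X
  let x₀ : X := Classical.arbitrary X
  have := compactSpace_intervalWedge x₀
  have := connectedSpace_intervalWedge x₀
  have := locallyConnectedSpace_intervalWedge x₀
  have hZ : IsTopFractal (intervalWedge x₀) :=
    h2 (intervalWedge x₀) (exists_selfRegenFractal_intervalWedge x₀)
  obtain ⟨Y, _, _, _, hY, hr⟩ := exists_topFractal_of_surjective hZ
    (q := fun p => p.1.1) (by fun_prop) (fun x => ⟨intervalWedgeMk x₀ (.inl x), rfl⟩) x₀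
  obtain ⟨R, hR, hreg, hne⟩ := h1 Y hY
  obtain ⟨r, hrc, hinj, W, hW, hWne, hx₀, hWr⟩ := hr _ isOpen_interior hne
  have : CompactSpace R := isCompact_iff_compactSpace.1 hR
  refine h2 X (hreg.exists_of_injective_off_point (r := fun a => r a)
    (hrc.comp continuous_subtype_val) x₀ (fun a b hab ha => Subtype.ext (hinj a b hab ha))
    hW hWne hx₀ fun x hx => ?_)
  obtain ⟨y, hy, rfl⟩ := hWr hx
  exact ⟨⟨y, interior_subset hy⟩, rfl⟩
end
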